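/- arXiv:0906.2302 — 2 statements merged into one kernel-verified Lean document; each statement's English description precedes it below -/
import Mathlib

section
/- Let k ∈ ℕ, 0 < r < 2k, U ⊂ ℝ bounded and measurable, g locally square integrable on ℝ, and φ ∈ C^k(ℝ). If ∫_{−1}^{1} ∫_U |τ_h^k g(t)|² / |h|^{1+r} dt dh < ∞, then ∫_{−1}^{1} ∫_U |τ_h^k (φ·g)(t)|² / |h|^{1+r} dt dh < ∞. -/
open MeasureTheory Set
open scoped ENNReal

/-- The difference operator `τ_h g (t) = g (t + h) - g t`. -/
noncomputable def tau (h : ℝ) (g : ℝ → ℂ) : ℝ → ℂ := fun t => g (t + h) - g t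

/-- The iterated difference operator `τ_h^k`, with `τ_h^0 g = g`. -/
noncomputable def tauIter (h : ℝ) : ℕ → (ℝ → ℂ) → (ℝ → ℂ)
  | 0 => id
  | k + 1 => fun g => tau h (tauIter h k g)

/-! By the Leibniz rule for differences and `|τ_h^j φ| ≤ C |h|^j`, it suffices that for
`i + j = k` the `i`-th differences of `g` have finite energy on `U` against the weight of exponent
`r - 2 j`. The two-grid identity
`∑ j, c_{k,j} τ_{j h}^m g (t) = ∑ i, c_{m,i} τ_{i h}^k g (t)`
says that, for fixed `t`, a dilation sum of `h ↦ τ_h^m g (t)` is controlled by `k`-th differences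
at `t`. The Mellin transform turns a dilation sum into the product with a Dirichlet polynomial;
integrating over small circles that avoid its zeros inverts this product, by the mean value property
and Plancherel's theorem, at the cost of an arbitrarily small loss in the exponent.

That inversion needs some finiteness of the `m`-th differences near `h = 0` to begin with. It comes
from the points of density of `U`: near such points, at scale `h`, the `k`-th differences on a whole
neighbourhood are controlled by those on `U`, and on neighbourhoods Marchaud's inequality descends
from the order `k` to `m`. -/

/-! ### Finite differences -/

/-- The signed binomial coefficients of the `k`-th difference:
`τ_h^k g (t) = ∑ j ≤ k, diffCoeff k j * g (t + j * h)`. -/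
noncomputable def diffCoeff (k j : ℕ) : ℂ := (-1) ^ (k - j) * k.choose j

lemma diffCoeff_one_right_ne_zero {k : ℕ} (hk : k ≠ 0) : diffCoeff k 1 ≠ 0 := by
  simp [diffCoeff, hk]

lemma tauIter_succ_apply (h : ℝ) (k : ℕ) (g : ℝ → ℂ) (t : ℝ) :
    tauIter h (k + 1) g t = tauIter h k g (t + h) - tauIter h k g t := rfl

lemma tauIter_eq_fwdDiff_iterate (h : ℝ) (k : ℕ) (g : ℝ → ℂ) :
    tauIter h k g = (fwdDiff h)^[k] g := by
  induction k with
  | zero => rfl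
  | succ k ih => rw [Function.iterate_succ_apply', ← ih]; rfl

lemma tauIter_succ_eq_tauIter_tau (h : ℝ) (k : ℕ) (g : ℝ → ℂ) :
    tauIter h (k + 1) g = tauIter h k (tau h g) := by
  rw [tauIter_eq_fwdDiff_iterate, tauIter_eq_fwdDiff_iterate, Function.iterate_succ_apply]
  rfl

lemma tauIter_eq_sum (h : ℝ) (k : ℕ) (g : ℝ → ℂ) (t : ℝ) :
    tauIter h k g t = ∑ j ∈ Finset.range (k + 1), diffCoeff k j * g (t + j * h) := by
  rw [tauIter_eq_fwdDiff_iterate, fwdDiff_iter_eq_sum_shift]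
  refine Finset.sum_congr rfl fun j _ => ?_
  simp [diffCoeff, nsmul_eq_mul]

lemma tauIter_zero_step {k : ℕ} (hk : k ≠ 0) (g : ℝ → ℂ) (t : ℝ) : tauIter 0 k g t = 0 := by
  obtain ⟨n, rfl⟩ := Nat.exists_eq_succ_of_ne_zero hk
  simp [tauIter_succ_apply]

lemma tauIter_add (h : ℝ) (k : ℕ) (f g : ℝ → ℂ) (t : ℝ) :
    tauIter h k (fun x => f x + g x) t = tauIter h k f t + tauIter h k g t := by
  simp only [tauIter_eq_sum, mul_add, Finset.sum_add_distrib]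

lemma tauIter_comp_add_right (h a : ℝ) (k : ℕ) (g : ℝ → ℂ) (t : ℝ) :
    tauIter h k (fun x => g (x + a)) t = tauIter h k g (t + a) := by
  simp only [tauIter_eq_sum, add_right_comm]

lemma tauIter_comp_neg (h : ℝ) (k : ℕ) (g : ℝ → ℂ) (t : ℝ) :
    tauIter h k (fun x => g (-x)) t = tauIter (-h) k g (-t) := by
  simp only [tauIter_eq_sum, neg_add, mul_neg]

lemma measurable_tauIter (k : ℕ) {g : ℝ → ℂ} (hg : Measurable g) {α : Type*} [MeasurableSpace α]
    {a b : α → ℝ} (ha : Measurable a) (hb : Measurable b) :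
    Measurable fun p => tauIter (a p) k g (b p) := by
  simp only [tauIter_eq_sum]
  fun_prop

lemma measurable_enorm_tauIter_sq (m : ℕ) {g : ℝ → ℂ} (hg : Measurable g) :
    Measurable fun p : ℝ × ℝ => ‖tauIter p.2 m g p.1‖ₑ ^ 2 :=
  (measurable_tauIter m hg measurable_snd measurable_fst).enorm.pow_const 2

/-- Both sides expand to the double sum of `g` over the points `x + j * (y + i * b)`. -/
lemma sum_diffCoeff_mul_tauIter (k m : ℕ) (b x y : ℝ) (g : ℝ → ℂ) :
    ∑ j ∈ Finset.range (k + 1), diffCoeff k j * tauIter (j * b) m g (x + j * y) =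
      ∑ i ∈ Finset.range (m + 1), diffCoeff m i * tauIter (y + i * b) k g x := by
  simp only [tauIter_eq_sum, Finset.mul_sum]
  rw [Finset.sum_comm]
  refine Finset.sum_congr rfl fun i _ => Finset.sum_congr rfl fun j _ => ?_
  rw [show x + j * y + i * (j * b) = x + j * (y + i * b) by ring]
  ring

lemma tauIter_mul (h : ℝ) (k : ℕ) (f g : ℝ → ℂ) (t : ℝ) :
    tauIter h k (fun x => f x * g x) t = ∑ ij ∈ Finset.HasAntidiagonal.antidiagonal k,
      (k.choose ij.1 : ℂ) * (tauIter h ij.2 f (t + ij.1 * h) * tauIter h ij.1 g t) := by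
  induction k generalizing f g with
  | zero => simp [tauIter]
  | succ k ih =>
    have tau_mul : tau h (fun x => f x * g x) =
        fun x => f (x + h) * tau h g x + tau h f x * g x := by
      funext x; simp only [tau]; ring
    rw [tauIter_succ_eq_tauIter_tau, tau_mul, tauIter_add, ih, ih,
      Finset.sum_antidiagonal_choose_succ_mul
        (fun i j => tauIter h j f (t + i * h) * tauIter h i g t), add_comm]
    congr 1
    · simp only [← tauIter_succ_eq_tauIter_tau]
    · refine Finset.sum_congr rfl fun ij hij => ?_
      rw [tauIter_comp_add_right, ← tauIter_succ_eq_tauIter_tau,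
        ← Nat.choose_symm_of_eq_add (Finset.HasAntidiagonal.mem_antidiagonal.1 hij).symm]
      push_cast
      ring_nf

lemma tauIter_two_mul_step (h : ℝ) (m : ℕ) (g : ℝ → ℂ) (t : ℝ) :
    tauIter (2 * h) m g t =
      ∑ l ∈ Finset.range (m + 1), (m.choose l : ℂ) * tauIter h m g (t + l * h) := by
  have tau_two_mul (f : ℝ → ℂ) : tau (2 * h) f = fun x => tau h f (x + h) + tau h f x := by
    funext x; simp only [tau]; ring_nf
  rw [← Finset.Nat.sum_antidiagonal_eq_sum_range_succ
    (fun l _ => (m.choose l : ℂ) * tauIter h m g (t + l * h))]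
  induction m generalizing g t with
  | zero => simp [tauIter]
  | succ m ih =>
    rw [Finset.sum_antidiagonal_choose_succ_mul (fun l _ => tauIter h (m + 1) g (t + l * h)),
      tauIter_succ_eq_tauIter_tau, tau_two_mul, tauIter_add, tauIter_comp_add_right, ih, ih,
      add_comm, ← tauIter_succ_eq_tauIter_tau]
    congr 1
    refine Finset.sum_congr rfl fun ij hij => ?_
    rw [← Nat.choose_symm_of_eq_add (Finset.HasAntidiagonal.mem_antidiagonal.1 hij).symm]
    push_cast
    ring_nf

lemma tauIter_add_mul_sub (h : ℝ) (m l : ℕ) (g : ℝ → ℂ) (t : ℝ) :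
    tauIter h m g (t + l * h) - tauIter h m g t =
      ∑ i ∈ Finset.range l, tauIter h (m + 1) g (t + i * h) := by
  have step (i : ℕ) : tauIter h (m + 1) g (t + i * h) =
      tauIter h m g (t + (i + 1 : ℕ) * h) - tauIter h m g (t + i * h) := by
    rw [tauIter_succ_apply]; push_cast; ring_nf
  simp only [step, Finset.sum_range_sub (fun i : ℕ => tauIter h m g (t + i * h)),
    Nat.cast_zero, zero_mul, add_zero]

lemma norm_tauIter_two_mul_sub_le (h : ℝ) (m : ℕ) (g : ℝ → ℂ) (t : ℝ) :
    ‖tauIter (2 * h) m g t - 2 ^ m * tauIter h m g t‖ ≤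
      2 ^ m * ∑ i ∈ Finset.range m, ‖tauIter h (m + 1) g (t + i * h)‖ := by
  have sum_choose (z : ℝ) : ∑ l ∈ Finset.range (m + 1), (m.choose l : ℝ) * z = 2 ^ m * z := by
    rw [← Finset.sum_mul]
    exact_mod_cast congrArg (fun n : ℕ => (n : ℝ) * z) (Nat.sum_range_choose m)
  have expand : tauIter (2 * h) m g t - 2 ^ m * tauIter h m g t =
      ∑ l ∈ Finset.range (m + 1), (m.choose l : ℂ) *
        ∑ i ∈ Finset.range l, tauIter h (m + 1) g (t + i * h) := by
    simp only [← tauIter_add_mul_sub, mul_sub, Finset.sum_sub_distrib, ← Finset.sum_mul,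
      ← tauIter_two_mul_step]
    congr 2
    exact_mod_cast (Nat.sum_range_choose m).symm
  rw [expand, ← sum_choose]
  refine norm_sum_le_of_le _ fun l hl => ?_
  rw [norm_mul, RCLike.norm_natCast]
  gcongr
  refine (norm_sum_le _ _).trans ?_
  gcongr
  exact Nat.lt_succ_iff.1 (Finset.mem_range.1 hl)

lemma hasDerivAt_tauIter (h : ℝ) (k : ℕ) {f : ℝ → ℂ} (hf : Differentiable ℝ f) (x : ℝ) :
    HasDerivAt (tauIter h k f) (tauIter h k (deriv f) x) x := by
  rw [funext (tauIter_eq_sum h k f), tauIter_eq_sum]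
  exact HasDerivAt.fun_sum fun i _ =>
    ((hf (x + i * h)).hasDerivAt.comp_add_const x (i * h)).const_mul _

lemma exists_norm_tauIter_le_pow {j : ℕ} {φ : ℝ → ℂ} (hφ : ContDiff ℝ j φ) (R : ℝ) :
    ∃ C : ℝ, ∀ t h : ℝ, |t| ≤ R → |h| ≤ 1 → ‖tauIter h j φ t‖ ≤ C * |h| ^ j := by
  induction j generalizing φ R with
  | zero =>
    obtain ⟨C, hC⟩ := (isCompact_Icc (a := -R) (b := R)).exists_bound_of_continuousOn
      hφ.continuous.continuousOn
    exact ⟨C, fun t h ht _ => by simpa [tauIter] using hC t (abs_le.1 ht)⟩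
  | succ j ih =>
    obtain ⟨hd, -, hd'⟩ := contDiff_succ_iff_deriv.1 (by exact_mod_cast hφ : ContDiff ℝ (j + 1) φ)
    obtain ⟨C, hC⟩ := ih hd' (R + 1)
    refine ⟨C, fun t h ht hh => ?_⟩
    have ht' := abs_le.1 ht
    have hh' := abs_le.1 hh
    have mean_value := (convex_Icc (-(R + 1)) (R + 1)).norm_image_sub_le_of_norm_hasDerivWithin_le
      (x := t) (y := t + h) (fun x _ => (hasDerivAt_tauIter h j hd x).hasDerivWithinAt)
      (fun x hx => hC x h (abs_le.2 hx) hh)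
      ⟨by linarith, by linarith⟩ ⟨by linarith, by linarith⟩
    rwa [add_sub_cancel_left, Real.norm_eq_abs, mul_assoc, ← pow_succ] at mean_value

/-! ### Sums of squares in `ℝ≥0∞` -/

lemma enorm_sq_eq_ofReal {E : Type*} [SeminormedAddCommGroup E] (z : E) :
    ‖z‖ₑ ^ 2 = ENNReal.ofReal (‖z‖ ^ 2) := by
  rw [ENNReal.ofReal_pow (norm_nonneg _), ofReal_norm]

lemma enorm_sum_sq_le {ι E : Type*} [NormedAddCommGroup E] (s : Finset ι) (f : ι → E) :
    ‖∑ i ∈ s, f i‖ₑ ^ 2 ≤ s.card * ∑ i ∈ s, ‖f i‖ₑ ^ 2 := by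
  have power_mean := ENNReal.rpow_sum_le_const_mul_sum_rpow s (fun i => ‖f i‖ₑ) one_le_two
  norm_num at power_mean
  exact (pow_le_pow_left' (enorm_sum_le s f) 2).trans power_mean

lemma enorm_add_sq_le {E : Type*} [NormedAddCommGroup E] (a b : E) :
    ‖a + b‖ₑ ^ 2 ≤ 2 * (‖a‖ₑ ^ 2 + ‖b‖ₑ ^ 2) := by
  simpa [Fin.sum_univ_two] using enorm_sum_sq_le Finset.univ ![a, b]

lemma exists_enorm_sum_mul_sq_le {ι : Type*} (s : Finset ι) (c : ι → ℂ) :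
    ∃ A : ℝ≥0∞, A ≠ ⊤ ∧ ∀ f : ι → ℂ, ‖∑ i ∈ s, c i * f i‖ₑ ^ 2 ≤ A * ∑ i ∈ s, ‖f i‖ₑ ^ 2 := by
  refine ⟨s.card * ∑ i ∈ s, ‖c i‖ₑ ^ 2,
    ENNReal.mul_ne_top (by finiteness) (ENNReal.sum_ne_top.2 fun i _ => by finiteness), fun f => ?_⟩
  refine (enorm_sum_sq_le s _).trans ?_
  rw [mul_assoc, Finset.sum_mul]
  gcongr with i hi
  rw [enorm_mul, mul_pow]
  gcongr
  exact Finset.single_le_sum (f := fun i => ‖f i‖ₑ ^ 2) (fun _ _ => zero_le) hi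

/-! ### Integrals against power weights -/

lemma lintegral_comp_const_mul (F : ℝ → ℝ≥0∞) {a : ℝ} (ha : a ≠ 0) :
    ∫⁻ x, F (a * x) = ENNReal.ofReal |a⁻¹| * ∫⁻ x, F x := by
  have map_eq : ∫⁻ x, F (a * x) = ∫⁻ y, F y ∂(Measure.map (a * ·) volume) :=
    (lintegral_map_equiv F (MeasurableEquiv.mulLeft₀ a ha)).symm
  rw [map_eq, Real.map_volume_mul_left ha, lintegral_smul_measure, smul_eq_mul]

lemma setLIntegral_comp_add_const_le (F : ℝ → ℝ≥0∞) {a : ℝ} {S T : Set ℝ} (hS : MeasurableSet S)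
    (hT : MeasurableSet T) (hST : MapsTo (· + a) S T) :
    ∫⁻ t in S, F (t + a) ≤ ∫⁻ t in T, F t := by
  rw [← lintegral_indicator hS, ← lintegral_indicator hT,
    ← lintegral_add_right_eq_self (fun t => T.indicator F t) a]
  refine lintegral_mono fun t => ?_
  by_cases ht : t ∈ S
  · simp [ht, show t + a ∈ T from hST ht]
  · simp [ht]

lemma setLIntegral_Ioc_zero_le_of_forall_pos {F : ℝ → ℝ≥0∞} {b : ℝ} {B : ℝ≥0∞}
    (h : ∀ ε > 0, ∫⁻ x in Ioc ε b, F x ≤ B) : ∫⁻ x in Ioc 0 b, F x ≤ B := by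
  have exhaustion : Ioc 0 b = ⋃ n : ℕ, Ioc (1 / ((n : ℝ) + 1)) b := by
    ext x
    simp only [mem_iUnion, mem_Ioc]
    exact ⟨fun hx => (exists_nat_one_div_lt hx.1).imp fun n hn => ⟨hn, hx.2⟩,
      fun ⟨n, hn⟩ => ⟨lt_trans (by positivity) hn.1, hn.2⟩⟩
  rw [exhaustion, setLIntegral_iUnion_of_directed]
  · exact iSup_le fun n => h _ (by positivity)
  · exact directed_of_isDirected_le fun m n hmn =>
      Ioc_subset_Ioc_left (Nat.one_div_le_one_div hmn)

/-- The weight `h ^ (-1 - s)` of the seminorm of smoothness `s / 2`; it is only used for `0 < h`. -/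
noncomputable def scaleWeight (s h : ℝ) : ℝ≥0∞ := ENNReal.ofReal (h ^ (-1 - s))

@[fun_prop]
lemma measurable_scaleWeight (s : ℝ) : Measurable (scaleWeight s) := by
  unfold scaleWeight; fun_prop

lemma scaleWeight_ne_top (s h : ℝ) : scaleWeight s h ≠ ⊤ := ENNReal.ofReal_ne_top

lemma scaleWeight_le_scaleWeight {s s' h : ℝ} (hs : s' ≤ s) (h0 : 0 < h) (h1 : h ≤ 1) :
    scaleWeight s' h ≤ scaleWeight s h :=
  ENNReal.ofReal_le_ofReal (Real.rpow_le_rpow_of_exponent_ge h0 h1 (by linarith))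

lemma exists_scaleWeight_le (s : ℝ) {a : ℝ} (ha : 0 < a) (b : ℝ) :
    ∃ C : ℝ≥0∞, C ≠ ⊤ ∧ ∀ h ∈ Icc a b, scaleWeight s h ≤ C := by
  have cont : ContinuousOn (fun h : ℝ => h ^ (-1 - s)) (Icc a b) :=
    continuousOn_id.rpow_const fun h hh => Or.inl (ha.trans_le hh.1).ne'
  obtain ⟨C, hC⟩ := isCompact_Icc.bddAbove_image cont
  exact ⟨ENNReal.ofReal C, ENNReal.ofReal_ne_top,
    fun h hh => ENNReal.ofReal_le_ofReal (hC ⟨h, hh, rfl⟩)⟩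

lemma setLIntegral_scaleWeight_ne_top {s : ℝ} (hs : s < 0) (b : ℝ) :
    ∫⁻ h in Ioc 0 b, scaleWeight s h ≠ ⊤ := by
  rcases le_total b 0 with hb | hb
  · simp [Ioc_eq_empty_of_le hb]
  have integrable : IntegrableOn (fun h : ℝ => h ^ (-1 - s)) (Ioc 0 b) :=
    (intervalIntegrable_iff_integrableOn_Ioc_of_le hb).1
      (intervalIntegral.intervalIntegrable_rpow' (by linarith))
  exact integrable.lintegral_lt_top.ne

lemma setLIntegral_mul_scaleWeight_ne_top {F : ℝ → ℝ≥0∞} {M : ℝ≥0∞} (hM : M ≠ ⊤) (s : ℝ) {a : ℝ}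
    (ha : 0 < a) (b : ℝ) (hF : ∀ h ∈ Ioc a b, F h ≤ M) :
    ∫⁻ h in Ioc a b, F h * scaleWeight s h ≠ ⊤ := by
  obtain ⟨C, hC, hwC⟩ := exists_scaleWeight_le s ha b
  refine ne_top_of_le_ne_top ?_ (setLIntegral_mono' (g := fun _ => M * C) measurableSet_Ioc
    fun h hh => mul_le_mul' (hF h hh) (hwC h (Ioc_subset_Icc_self hh)))
  rw [setLIntegral_const, Real.volume_Ioc]
  finiteness

lemma exists_setLIntegral_Ioc_mul_scaleWeight_le (s : ℝ) {a : ℝ} (ha : 0 < a) (b : ℝ) :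
    ∃ C : ℝ≥0∞, C ≠ ⊤ ∧ ∀ F : ℝ → ℝ≥0∞,
      ∫⁻ h in Ioc a b, F h * scaleWeight s h ≤ C * ∫⁻ h in Ioc a b, F h := by
  obtain ⟨C, hC, weight_le⟩ := exists_scaleWeight_le s ha b
  refine ⟨C, hC, fun F => ?_⟩
  rw [← lintegral_const_mul' _ _ hC]
  refine setLIntegral_mono' measurableSet_Ioc fun h hh => ?_
  rw [mul_comm]
  gcongr
  exact weight_le h (Ioc_subset_Icc_self hh)

lemma setLIntegral_Ioc_zero_mul_scaleWeight_ne_top {F : ℝ → ℝ≥0∞} {s η b : ℝ} (hη : 0 < η)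
    (hF : ∫⁻ h in Ioc 0 b, F h ≠ ⊤) (hFη : ∫⁻ h in Ioc 0 η, F h * scaleWeight s h ≠ ⊤) :
    ∫⁻ h in Ioc 0 b, F h * scaleWeight s h ≠ ⊤ := by
  obtain ⟨C, hC, le_C⟩ := exists_setLIntegral_Ioc_mul_scaleWeight_le s hη b
  refine ne_top_of_le_ne_top (ENNReal.add_ne_top.2 ⟨hFη, ENNReal.mul_ne_top hC hF⟩) ?_
  calc ∫⁻ h in Ioc 0 b, F h * scaleWeight s h
      ≤ ∫⁻ h in Ioc 0 η ∪ Ioc η b, F h * scaleWeight s h :=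
        lintegral_mono_set Ioc_subset_Ioc_union_Ioc
    _ ≤ (∫⁻ h in Ioc 0 η, F h * scaleWeight s h) + ∫⁻ h in Ioc η b, F h * scaleWeight s h :=
        lintegral_union_le _ _ _
    _ ≤ _ := by
        gcongr
        exact (le_C F).trans (by gcongr)

lemma setLIntegral_comp_const_mul_scaleWeight_le (s : ℝ) {a : ℝ} (ha : 0 < a) {S T : Set ℝ}
    (hS : MeasurableSet S) (hT : MeasurableSet T) (hpos : S ⊆ Ioi 0) (hST : MapsTo (a * ·) S T)
    (F : ℝ → ℝ≥0∞) :
    ∫⁻ h in S, F (a * h) * scaleWeight s h ≤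
      ENNReal.ofReal (a ^ s) * ∫⁻ u in T, F u * scaleWeight s u := by
  have weight_eq {h : ℝ} (h0 : 0 < h) :
      scaleWeight s h = ENNReal.ofReal (a ^ (1 + s)) * scaleWeight s (a * h) := by
    rw [scaleWeight, scaleWeight, ← ENNReal.ofReal_mul (by positivity),
      Real.mul_rpow ha.le h0.le, ← mul_assoc, ← Real.rpow_add ha]
    norm_num
  have const_eq : ENNReal.ofReal (a ^ (1 + s)) * ENNReal.ofReal |a⁻¹| = ENNReal.ofReal (a ^ s) := by
    rw [← ENNReal.ofReal_mul (by positivity), abs_of_pos (inv_pos.2 ha), Real.rpow_add ha,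
      Real.rpow_one, mul_comm, inv_mul_cancel_left₀ ha.ne']
  let Φ : ℝ → ℝ≥0∞ := T.indicator fun u => F u * scaleWeight s u
  have Φ_eq {h : ℝ} (hh : h ∈ S) : Φ (a * h) = F (a * h) * scaleWeight s (a * h) :=
    indicator_of_mem (hST hh) _
  calc ∫⁻ h in S, F (a * h) * scaleWeight s h
      ≤ ∫⁻ h in S, ENNReal.ofReal (a ^ (1 + s)) * Φ (a * h) := by
        refine setLIntegral_mono' hS fun h hh => le_of_eq ?_
        rw [Φ_eq hh, weight_eq (hpos hh)]
        ring
    _ ≤ ∫⁻ h, ENNReal.ofReal (a ^ (1 + s)) * Φ (a * h) := setLIntegral_le_lintegral _ _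
    _ = ENNReal.ofReal (a ^ s) * ∫⁻ u in T, F u * scaleWeight s u := by
        rw [lintegral_const_mul' _ _ ENNReal.ofReal_ne_top, lintegral_comp_const_mul _ ha.ne',
          ← mul_assoc, const_eq, lintegral_indicator hT]

/-! ### The Mellin transform on square integrable functions -/

section Plancherel

open scoped FourierTransform SchwartzMap ContDiff

variable {V E : Type*} [NormedAddCommGroup V] [InnerProductSpace ℝ V] [FiniteDimensional ℝ V]
  [MeasurableSpace V] [BorelSpace V]
  [NormedAddCommGroup E] [InnerProductSpace ℂ E] [CompleteSpace E]

lemma fourier_ae_eq_fourier_toLp {f : V → E} (hf : Integrable f) (hf2 : MemLp f 2) :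
    𝓕 f =ᵐ[volume] (𝓕 (hf2.toLp f) : Lp E 2 (volume : Measure V)) := by
  refine ae_eq_of_integral_contDiff_smul_eq ?_ ((Lp.memLp _).locallyIntegrable (by norm_num)) ?_
  · exact (VectorFourier.fourierIntegral_continuous Real.continuous_fourierChar
      continuous_inner hf).locallyIntegrable
  intro φ hφ φ_supp
  let ψ : 𝓢(V, ℂ) := HasCompactSupport.toSchwartzMap (f := fun x => (φ x : ℂ))
    (φ_supp.comp_left (g := ((↑) : ℝ → ℂ)) Complex.ofReal_zero) (Complex.ofRealCLM.contDiff.comp hφ)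
  have distributional : ∫ x, 𝓕 ψ x • hf2.toLp f x =
      ∫ x, ψ x • (𝓕 (hf2.toLp f) : Lp E 2 (volume : Measure V)) x := by
    have fourier_eq := congrArg (· ψ) (Lp.fourier_toTemperedDistribution_eq (hf2.toLp f))
    simpa only [TemperedDistribution.fourier_apply, Lp.toTemperedDistribution_apply]
      using fourier_eq
  have self_adjoint : ∫ x, 𝓕 (ψ : V → ℂ) x • f x = ∫ x, ψ x • 𝓕 f x := by
    simpa using! VectorFourier.integral_fourierIntegral_smul_eq_flip (L := innerₗ V)
      Real.continuous_fourierChar continuous_inner ψ.integrable hf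
  have toLp_eq : ∫ x, 𝓕 ψ x • hf2.toLp f x = ∫ x, 𝓕 (ψ : V → ℂ) x • f x :=
    integral_congr_ae (hf2.coeFn_toLp.mono fun x hx => by
      simp only [hx, SchwartzMap.fourier_coe])
  have combined := self_adjoint.symm.trans (toLp_eq.symm.trans distributional)
  have ψ_apply (x : V) (e : E) : ψ x • e = φ x • e := Complex.coe_smul (φ x) e
  simpa only [ψ_apply] using combined

lemma eLpNorm_fourier_eq {f : V → E} (hf : Integrable f) (hf2 : MemLp f 2) :
    eLpNorm (𝓕 f) 2 volume = eLpNorm f 2 volume := by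
  rw [eLpNorm_congr_ae (fourier_ae_eq_fourier_toLp hf hf2), ← eLpNorm_congr_ae hf2.coeFn_toLp,
    ← Lp.enorm_def, ← Lp.enorm_def, ← ofReal_norm, ← ofReal_norm, Lp.norm_fourier_eq]

end Plancherel

lemma lintegral_Ioi_eq_lintegral_exp_neg (F : ℝ → ℝ≥0∞) :
    ∫⁻ h in Ioi 0, F h = ∫⁻ u, ENNReal.ofReal (Real.exp (-u)) * F (Real.exp (-u)) := by
  have image_eq : (fun u => Real.exp (-u)) '' univ = Ioi 0 := by
    ext h
    refine ⟨?_, fun hh => ⟨-Real.log h, mem_univ _, ?_⟩⟩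
    · rintro ⟨u, -, rfl⟩
      exact Real.exp_pos _
    · simp [Real.exp_log hh]
  have deriv_eq (u : ℝ) :
      HasDerivAt (fun u => Real.exp (-u)) (-Real.exp (-u)) u := by
    simpa using (hasDerivAt_id u).neg.exp
  rw [← image_eq, lintegral_image_eq_lintegral_abs_deriv_mul MeasurableSet.univ
    (fun u _ => (deriv_eq u).hasDerivWithinAt) fun u _ v _ huv => by simpa using huv]
  simp [abs_of_pos (Real.exp_pos _)]

lemma eLpNorm_two_sq {α E : Type*} [MeasurableSpace α] [NormedAddCommGroup E] (f : α → E)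
    (μ : Measure α) : eLpNorm f 2 μ ^ 2 = ∫⁻ x, ‖f x‖ₑ ^ 2 ∂μ := by
  simpa using eLpNorm_nnreal_pow_eq_lintegral (f := f) (μ := μ) (p := 2) two_ne_zero

lemma memLp_two_iff_lintegral_ne_top {α E : Type*} [MeasurableSpace α] [NormedAddCommGroup E]
    {f : α → E} {μ : Measure α} (hf : AEStronglyMeasurable f μ) :
    MemLp f 2 μ ↔ ∫⁻ x, ‖f x‖ₑ ^ 2 ∂μ ≠ ⊤ := by
  rw [← eLpNorm_two_sq, MemLp, and_iff_right hf, lt_top_iff_ne_top, Ne, Ne,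
    ENNReal.pow_eq_top_iff]
  simp

/-- `f` is a square integrable function that vanishes outside `[a, b]`. For `0 < a` its Mellin
transform is entire and square integrable on vertical lines. -/
structure SqIntegrableOnIcc (a b : ℝ) (f : ℝ → ℂ) : Prop where
  measurable : Measurable f
  memLp : MemLp f 2
  eq_zero : ∀ x ∉ Icc a b, f x = 0

namespace SqIntegrableOnIcc

variable {a b : ℝ} {f : ℝ → ℂ}

lemma integrable (hf : SqIntegrableOnIcc a b f) : Integrable f := by
  have support_subset : Function.support f ⊆ Icc a b := fun x hx => by
    by_contra hxab
    exact hx (hf.eq_zero x hxab)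
  rw [← integrableOn_iff_integrable_of_support_subset support_subset]
  exact memLp_one_iff_integrable.1 ((hf.memLp.restrict (Icc a b)).mono_exponent (by norm_num))

lemma eventuallyEq_atTop (hf : SqIntegrableOnIcc a b f) : f =ᶠ[Filter.atTop] 0 := by
  filter_upwards [Filter.eventually_gt_atTop b] with x hx
  exact hf.eq_zero x fun hxab => hxab.2.not_gt hx

lemma eventuallyEq_nhdsGT_zero (hf : SqIntegrableOnIcc a b f) (ha : 0 < a) :
    f =ᶠ[nhdsWithin 0 (Ioi 0)] 0 := by
  filter_upwards [nhdsWithin_le_nhds (eventually_lt_nhds ha)] with x hx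
  exact hf.eq_zero x fun hxab => hxab.1.not_gt hx

lemma mellinConvergent (hf : SqIntegrableOnIcc a b f) (ha : 0 < a) (z : ℂ) :
    MellinConvergent f z :=
  mellinConvergent_of_isBigO_rpow (a := z.re + 1) (b := z.re - 1)
    (hf.integrable.locallyIntegrable.locallyIntegrableOn _)
    (hf.eventuallyEq_atTop.trans_isBigO (Asymptotics.isBigO_zero _ _)) (by linarith)
    ((hf.eventuallyEq_nhdsGT_zero ha).trans_isBigO (Asymptotics.isBigO_zero _ _)) (by linarith)

lemma differentiable_mellin (hf : SqIntegrableOnIcc a b f) (ha : 0 < a) :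
    Differentiable ℂ (mellin f) := fun z =>
  mellin_differentiableAt_of_isBigO_rpow (a := z.re + 1) (b := z.re - 1)
    (hf.integrable.locallyIntegrable.locallyIntegrableOn _)
    (hf.eventuallyEq_atTop.trans_isBigO (Asymptotics.isBigO_zero _ _)) (by linarith)
    ((hf.eventuallyEq_nhdsGT_zero ha).trans_isBigO (Asymptotics.isBigO_zero _ _)) (by linarith)

lemma lintegral_mul_scaleWeight_ne_top (hf : SqIntegrableOnIcc a b f) (ha : 0 < a) (s : ℝ) :
    ∫⁻ h in Ioi 0, ‖f h‖ₑ ^ 2 * scaleWeight s h ≠ ⊤ := by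
  obtain ⟨C, hC, weight_le⟩ := exists_scaleWeight_le s ha b
  have pointwise (h : ℝ) : ‖f h‖ₑ ^ 2 * scaleWeight s h ≤ ‖f h‖ₑ ^ 2 * C := by
    by_cases hh : h ∈ Icc a b
    · gcongr
      exact weight_le h hh
    · simp [hf.eq_zero h hh]
  refine ne_top_of_le_ne_top ?_
    ((setLIntegral_le_lintegral _ _).trans (lintegral_mono pointwise))
  rw [lintegral_mul_const' _ _ hC]
  exact ENNReal.mul_ne_top
    ((memLp_two_iff_lintegral_ne_top hf.memLp.aestronglyMeasurable).1 hf.memLp) hC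

open scoped FourierTransform in
lemma lintegral_enorm_mellin_sq (hf : SqIntegrableOnIcc a b f) (ha : 0 < a) (σ : ℝ) :
    ∫⁻ τ : ℝ, ‖mellin f (σ + τ * Complex.I)‖ₑ ^ 2 =
      ENNReal.ofReal (2 * Real.pi) * ∫⁻ h in Ioi 0, ‖f h‖ₑ ^ 2 * scaleWeight (-2 * σ) h := by
  let q : ℝ → ℂ := fun u => Real.exp (-σ * u) • f (Real.exp (-u))
  have f_measurable := hf.measurable
  have q_measurable : Measurable q := by fun_prop
  have enorm_q_sq (u : ℝ) : ‖q u‖ₑ ^ 2 = ENNReal.ofReal (Real.exp (-u)) *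
      (‖f (Real.exp (-u))‖ₑ ^ 2 * scaleWeight (-2 * σ) (Real.exp (-u))) := by
    rw [scaleWeight, mul_left_comm, ← ENNReal.ofReal_mul (Real.exp_pos _).le, ← Real.exp_mul,
      ← Real.exp_add, enorm_smul, mul_pow, mul_comm, enorm_sq_eq_ofReal (Real.exp _),
      Real.norm_of_nonneg (Real.exp_pos _).le, ← Real.exp_nat_mul]
    congr 3
    push_cast
    ring
  have lintegral_q_sq : ∫⁻ u, ‖q u‖ₑ ^ 2 = ∫⁻ h in Ioi 0, ‖f h‖ₑ ^ 2 * scaleWeight (-2 * σ) h := by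
    rw [lintegral_Ioi_eq_lintegral_exp_neg, lintegral_congr enorm_q_sq]
  have q_sq : SqIntegrableOnIcc (-Real.log b) (-Real.log a) q := by
    refine ⟨q_measurable, ?_, fun u hu => ?_⟩
    · rw [memLp_two_iff_lintegral_ne_top q_measurable.aestronglyMeasurable, lintegral_q_sq]
      exact hf.lintegral_mul_scaleWeight_ne_top ha _
    · have outside : Real.exp (-u) ∉ Icc a b := fun h =>
        hu ⟨by linarith [(Real.le_log_iff_exp_le (ha.trans_le (h.1.trans h.2))).2 h.2],
          by linarith [(Real.log_le_iff_le_exp ha).2 h.1]⟩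
      simp [q, hf.eq_zero _ outside]
  have mellin_eq (τ : ℝ) : mellin f (σ + τ * Complex.I) = 𝓕 q ((2 * Real.pi)⁻¹ * τ) := by
    rw [mellin_eq_fourier]
    simp [q, div_eq_inv_mul]
  calc ∫⁻ τ : ℝ, ‖mellin f (σ + τ * Complex.I)‖ₑ ^ 2
      = ∫⁻ τ : ℝ, ‖𝓕 q ((2 * Real.pi)⁻¹ * τ)‖ₑ ^ 2 := by simp_rw [mellin_eq]
    _ = ENNReal.ofReal (2 * Real.pi) * ∫⁻ ξ, ‖𝓕 q ξ‖ₑ ^ 2 := by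
        rw [lintegral_comp_const_mul (fun ξ => ‖𝓕 q ξ‖ₑ ^ 2) (by positivity), inv_inv,
          abs_of_pos Real.two_pi_pos]
    _ = _ := by
        rw [← lintegral_q_sq, ← eLpNorm_two_sq, ← eLpNorm_two_sq,
          eLpNorm_fourier_eq q_sq.integrable q_sq.memLp]

end SqIntegrableOnIcc

/-! ### Lower bounds for Dirichlet polynomials on circles -/

lemma exists_sphere_forall_ne_zero {f : ℂ → ℂ} (hf : Differentiable ℂ f) (hf0 : ∃ w, f w ≠ 0)
    (z : ℂ) {ρ : ℝ} (hρ : 0 < ρ) :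
    ∃ r, 0 < r ∧ r < ρ ∧ ∀ ζ ∈ Metric.sphere z r, f ζ ≠ 0 := by
  have analytic : AnalyticOnNhd ℂ f univ := fun w _ => hf.analyticAt w
  rcases (hf.analyticAt z).eventually_eq_zero_or_eventually_ne_zero with zero_near | ne_zero_near
  · obtain ⟨w, hw⟩ := hf0
    exact absurd (congrFun (analytic.eq_of_eventuallyEq (g := 0) (fun _ _ => analyticAt_const)
      zero_near) w) hw
  · rw [eventually_nhdsWithin_iff, Metric.eventually_nhds_iff] at ne_zero_near
    obtain ⟨ε, hε, ne_zero_near⟩ := ne_zero_near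
    have r_pos : 0 < min ε ρ / 2 := by positivity
    have r_lt : min ε ρ / 2 < min ε ρ := half_lt_self (by positivity)
    refine ⟨min ε ρ / 2, r_pos, r_lt.trans_le (min_le_right _ _), fun ζ hζ => ne_zero_near ?_ ?_⟩
    · exact (Metric.mem_sphere.1 hζ).trans_lt (r_lt.trans_le (min_le_left _ _))
    · exact Metric.ne_of_mem_sphere hζ r_pos.ne'

lemma exists_eventually_forall_le_norm {X Y E : Type*} [TopologicalSpace X] [TopologicalSpace Y]
    [NormedAddCommGroup E] {f : X → Y → E} (hf : Continuous f.uncurry) {K : Set Y}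
    (hK : IsCompact K) {x : X} (hfx : ∀ y ∈ K, f x y ≠ 0) :
    ∃ m > 0, ∀ᶠ x' in nhds x, ∀ y ∈ K, m ≤ ‖f x' y‖ := by
  rcases K.eq_empty_or_nonempty with rfl | hne
  · exact ⟨1, one_pos, by simp⟩
  obtain ⟨y₀, hy₀, y₀_min⟩ := hK.exists_isMinOn hne
    (hf.uncurry_left x).norm.continuousOn
  have min_pos : 0 < ‖f x y₀‖ := norm_pos_iff.2 (hfx y₀ hy₀)
  refine ⟨‖f x y₀‖ / 2, by positivity, hK.eventually_forall_of_forall_eventually fun y hy => ?_⟩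
  refine (hf.norm.continuousAt (x := (x, y))).eventually_const_le ?_
  exact (half_lt_self min_pos).trans_le (y₀_min hy)

lemma exists_radii_forall_le_norm {X : Type*} [TopologicalSpace X] {f : X → ℂ → ℂ}
    (hf : Continuous f.uncurry) (hfd : ∀ x, Differentiable ℂ (f x)) {T : Set X} (hT : IsCompact T)
    (hf0 : ∀ x ∈ T, ∃ w, f x w ≠ 0) (z : ℂ) {ρ : ℝ} (hρ : 0 < ρ) :
    ∃ m > 0, ∃ S : Finset ℝ, (∀ r ∈ S, 0 < r ∧ r < ρ) ∧
      ∀ x ∈ T, ∃ r ∈ S, ∀ ζ ∈ Metric.sphere z r, m ≤ ‖f x ζ‖ := by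
  classical
  refine hT.induction_on (p := fun T' => ∃ m > 0, ∃ S : Finset ℝ, (∀ r ∈ S, 0 < r ∧ r < ρ) ∧
    ∀ x ∈ T', ∃ r ∈ S, ∀ ζ ∈ Metric.sphere z r, m ≤ ‖f x ζ‖) ?_ ?_ ?_ ?_
  · exact ⟨1, one_pos, ∅, by simp, by simp⟩
  · rintro T₁ T₂ hsub ⟨m, hm, S, hS, bound⟩
    exact ⟨m, hm, S, hS, fun x hx => bound x (hsub hx)⟩
  · rintro T₁ T₂ ⟨m₁, hm₁, S₁, hS₁, bound₁⟩ ⟨m₂, hm₂, S₂, hS₂, bound₂⟩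
    refine ⟨min m₁ m₂, lt_min hm₁ hm₂, S₁ ∪ S₂, ?_, ?_⟩
    · exact fun r hr => (Finset.mem_union.1 hr).elim (hS₁ r) (hS₂ r)
    · rintro x (hx | hx)
      · obtain ⟨r, hr, hle⟩ := bound₁ x hx
        exact ⟨r, Finset.mem_union_left _ hr, fun ζ hζ => (min_le_left _ _).trans (hle ζ hζ)⟩
      · obtain ⟨r, hr, hle⟩ := bound₂ x hx
        exact ⟨r, Finset.mem_union_right _ hr, fun ζ hζ => (min_le_right _ _).trans (hle ζ hζ)⟩
  · intro x hx
    obtain ⟨r, hr, hrρ, ne_zero⟩ := exists_sphere_forall_ne_zero (hfd x) (hf0 x hx) z hρ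
    obtain ⟨m, hm, near⟩ := exists_eventually_forall_le_norm hf (isCompact_sphere z r) ne_zero
    exact ⟨_, mem_nhdsWithin_of_mem_nhds near, m, hm, {r}, by simp [hr, hrρ],
      fun _ hle => ⟨r, Finset.mem_singleton_self r, hle⟩⟩

/-- The Dirichlet polynomial `∑_{1 ≤ n ≤ k} c_n n ^ (-z)`, the coefficient of `n ^ (-z)` being
`c (n - 1)` so that no power of `0` occurs. -/
noncomputable def dirichletPoly (k : ℕ) (c : ℕ → ℂ) (z : ℂ) : ℂ :=
  ∑ l ∈ Finset.range k, c l * (l + 1 : ℂ) ^ (-z)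

lemma continuous_dirichletPoly (k : ℕ) : Continuous (dirichletPoly k).uncurry := by
  change Continuous fun p : (ℕ → ℂ) × ℂ => ∑ l ∈ Finset.range k, p.1 l * (l + 1 : ℂ) ^ (-p.2)
  refine continuous_finsetSum _ fun l _ => ?_
  have power : Continuous fun p : (ℕ → ℂ) × ℂ => (l + 1 : ℂ) ^ (-p.2) :=
    Continuous.const_cpow (by fun_prop) (Or.inl (Nat.cast_add_one_ne_zero l))
  fun_prop

lemma differentiable_dirichletPoly (k : ℕ) (c : ℕ → ℂ) : Differentiable ℂ (dirichletPoly k c) :=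
  Differentiable.fun_sum fun l _ =>
    (differentiable_neg.const_cpow (Or.inl (Nat.cast_add_one_ne_zero l))).const_mul (c l)

lemma dirichletPoly_add (k : ℕ) (c : ℕ → ℂ) (z w : ℂ) :
    dirichletPoly k c (z + w) = dirichletPoly k (fun l => c l * (l + 1 : ℂ) ^ (-w)) z := by
  refine Finset.sum_congr rfl fun l _ => ?_
  rw [neg_add, Complex.cpow_add _ _ (Nat.cast_add_one_ne_zero l), mul_assoc, mul_comm (_ ^ (-z))]

lemma norm_natCast_add_one_cpow (l : ℕ) (z : ℂ) :
    ‖(l + 1 : ℂ) ^ z‖ = (l + 1 : ℝ) ^ z.re := by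
  exact_mod_cast Complex.norm_natCast_cpow_of_pos l.succ_pos z

lemma tendsto_dirichletPoly_atTop {k : ℕ} (hk : k ≠ 0) (c : ℕ → ℂ) :
    Filter.Tendsto (fun x : ℝ => dirichletPoly k c x) Filter.atTop (nhds (c 0)) := by
  obtain ⟨k, rfl⟩ := Nat.exists_eq_add_one_of_ne_zero hk
  have term_tendsto (l : ℕ) : Filter.Tendsto
      (fun x : ℝ => c (l + 1) * ((l + 1 : ℕ) + 1 : ℂ) ^ (-(x : ℂ))) Filter.atTop (nhds 0) := by
    rw [tendsto_zero_iff_norm_tendsto_zero]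
    simp_rw [norm_mul, norm_natCast_add_one_cpow]
    have base_gt_one : (1 : ℝ) < (l + 1 : ℕ) + 1 := by norm_cast; lia
    simpa using ((tendsto_rpow_atBot_of_base_gt_one _ base_gt_one).comp
      Filter.tendsto_neg_atTop_atBot).const_mul ‖c (l + 1)‖
  simp_rw [dirichletPoly, Finset.sum_range_succ']
  simpa using (tendsto_finsetSum _ fun l (_ : l ∈ Finset.range k) => term_tendsto l).add_const (c 0)

lemma exists_dirichletPoly_ne_zero {k : ℕ} (hk : k ≠ 0) {c : ℕ → ℂ} (hc : c 0 ≠ 0) :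
    ∃ w, dirichletPoly k c w ≠ 0 := by
  by_contra! vanishes
  refine hc (tendsto_nhds_unique (tendsto_dirichletPoly_atTop hk c) ?_)
  simp [vanishes]

-- A vertical shift only rotates the coefficients, so compactness of the torus makes the bound
-- uniform along the line.
lemma exists_radii_le_norm_dirichletPoly {k : ℕ} (hk : k ≠ 0) {c : ℕ → ℂ} (hc : c 0 ≠ 0) (x : ℝ)
    {ρ : ℝ} (hρ : 0 < ρ) :
    ∃ m > 0, ∃ S : Finset ℝ, (∀ r ∈ S, 0 < r ∧ r < ρ) ∧
      ∀ τ : ℝ, ∃ r ∈ S, ∀ ζ ∈ Metric.sphere (x + τ * Complex.I) r, m ≤ ‖dirichletPoly k c ζ‖ := by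
  let torus : Set (ℕ → ℂ) := univ.pi fun l => Metric.sphere 0 ‖c l‖
  have torus_compact : IsCompact torus := isCompact_univ_pi fun l => isCompact_sphere _ _
  have ne_zero_on_torus : ∀ d ∈ torus, ∃ w, dirichletPoly k d w ≠ 0 := fun d hd => by
    refine exists_dirichletPoly_ne_zero hk (norm_ne_zero_iff.1 ?_)
    rw [mem_sphere_zero_iff_norm.1 (hd 0 (mem_univ 0))]
    exact norm_ne_zero_iff.2 hc
  obtain ⟨m, hm, S, hS, bound⟩ := exists_radii_forall_le_norm (continuous_dirichletPoly k)
    (differentiable_dirichletPoly k) torus_compact ne_zero_on_torus x hρ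
  refine ⟨m, hm, S, hS, fun τ => ?_⟩
  obtain ⟨r, hr, hle⟩ := bound (fun l => c l * (l + 1 : ℂ) ^ (-(τ * Complex.I))) fun l _ => by
    simp [norm_natCast_add_one_cpow]
  refine ⟨r, hr, fun ζ hζ => ?_⟩
  have shifted := hle (ζ - τ * Complex.I) (by
    rwa [mem_sphere_iff_norm, sub_sub, add_comm (_ * _), ← mem_sphere_iff_norm])
  rwa [← dirichletPoly_add, sub_add_cancel] at shifted

/-! ### Comparing a function with its dilation sums -/

lemma enorm_sq_le_lintegral_circleMap {W : ℂ → ℂ} (hW : Differentiable ℂ W) (z : ℂ) (r : ℝ) :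
    ‖W z‖ₑ ^ 2 ≤ ENNReal.ofReal (2 * Real.pi)⁻¹ *
      ∫⁻ θ in Ioc 0 (2 * Real.pi), ‖W (circleMap z r θ)‖ₑ ^ 2 := by
  have mean_value : Real.circleAverage (fun z => W z ^ 2) z r = W z ^ 2 :=
    DiffContOnCl.circleAverage (hW.pow 2).diffContOnCl
  rw [← enorm_pow, ← mean_value, Real.circleAverage_def,
    intervalIntegral.integral_of_le Real.two_pi_pos.le, enorm_smul,
    Real.enorm_eq_ofReal (by positivity)]
  gcongr
  exact (enorm_integral_le_lintegral_enorm _).trans_eq (by simp only [enorm_pow])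

lemma enorm_sq_le_sum_lintegral_circleMap_mul {P W : ℂ → ℂ} (hW : Differentiable ℂ W) {z : ℂ}
    {m : ℝ} (hm : 0 < m) {S : Finset ℝ} {r : ℝ} (hr : r ∈ S) (hr0 : 0 ≤ r)
    (hP : ∀ ζ ∈ Metric.sphere z r, m ≤ ‖P ζ‖) :
    ‖W z‖ₑ ^ 2 ≤ ENNReal.ofReal (2 * Real.pi)⁻¹ * ENNReal.ofReal m⁻¹ ^ 2 *
      ∑ r ∈ S, ∫⁻ θ in Ioc 0 (2 * Real.pi),
        ‖P (circleMap z r θ) * W (circleMap z r θ)‖ₑ ^ 2 := by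
  have on_sphere (θ : ℝ) : ‖W (circleMap z r θ)‖ₑ ^ 2 ≤
      ENNReal.ofReal m⁻¹ ^ 2 * ‖P (circleMap z r θ) * W (circleMap z r θ)‖ₑ ^ 2 := by
    rw [← mul_pow, enorm_mul, ← mul_assoc]
    refine pow_le_pow_left' (le_mul_of_one_le_left zero_le ?_) 2
    rw [← ofReal_norm, ← ENNReal.ofReal_mul (by positivity), ENNReal.one_le_ofReal,
      inv_mul_eq_div, one_le_div₀ hm]
    exact hP _ (circleMap_mem_sphere z hr0 θ)
  refine (enorm_sq_le_lintegral_circleMap hW z r).trans ?_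
  rw [mul_assoc]
  gcongr
  refine (lintegral_mono on_sphere).trans ?_
  rw [lintegral_const_mul' _ _ (by finiteness)]
  gcongr
  exact Finset.single_le_sum (f := fun r => ∫⁻ θ in Ioc 0 (2 * Real.pi),
    ‖P (circleMap z r θ) * W (circleMap z r θ)‖ₑ ^ 2) (fun _ _ => zero_le) hr

namespace SqIntegrableOnIcc

lemma measurable_enorm_mellin_circleMap {a b : ℝ} {v : ℝ → ℂ} (hv : SqIntegrableOnIcc a b v)
    (ha : 0 < a) (x r : ℝ) :
    Measurable fun p : ℝ × ℝ => ‖mellin v (circleMap (x + p.1 * Complex.I) r p.2)‖ₑ ^ 2 := by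
  have mellin_measurable : Measurable (mellin v) :=
    (hv.differentiable_mellin ha).continuous.measurable
  unfold circleMap
  fun_prop

lemma lintegral_circleMap_mellin_le {a : ℝ} {v : ℝ → ℂ} (hv : SqIntegrableOnIcc a 1 v) (ha : 0 < a)
    {x r s : ℝ} (hr : 0 ≤ r) (hs : -s ≤ 2 * (x - r)) :
    ∫⁻ τ : ℝ, ∫⁻ θ in Ioc 0 (2 * Real.pi), ‖mellin v (circleMap (x + τ * Complex.I) r θ)‖ₑ ^ 2 ≤
      ENNReal.ofReal (2 * Real.pi) ^ 2 * ∫⁻ h in Ioi 0, ‖v h‖ₑ ^ 2 * scaleWeight s h := by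
  set B := ∫⁻ h in Ioi 0, ‖v h‖ₑ ^ 2 * scaleWeight s h
  have circle_eq (τ θ : ℝ) : circleMap (x + τ * Complex.I) r θ =
      ((x + r * Real.cos θ : ℝ) : ℂ) + ((τ + r * Real.sin θ : ℝ) : ℂ) * Complex.I := by
    rw [circleMap, Complex.exp_mul_I]
    push_cast
    ring
  have weight_le (θ h : ℝ) : ‖v h‖ₑ ^ 2 * scaleWeight (-2 * (x + r * Real.cos θ)) h ≤
      ‖v h‖ₑ ^ 2 * scaleWeight s h := by
    by_cases hh : h ∈ Icc a 1
    · gcongr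
      refine scaleWeight_le_scaleWeight ?_ (ha.trans_le hh.1) hh.2
      nlinarith [Real.neg_one_le_cos θ]
    · simp [hv.eq_zero h hh]
  have on_line (θ : ℝ) : ∫⁻ τ : ℝ, ‖mellin v (circleMap (x + τ * Complex.I) r θ)‖ₑ ^ 2 ≤
      ENNReal.ofReal (2 * Real.pi) * B := by
    simp_rw [circle_eq]
    rw [lintegral_add_right_eq_self fun τ : ℝ =>
        ‖mellin v (((x + r * Real.cos θ : ℝ) : ℂ) + (τ : ℂ) * Complex.I)‖ₑ ^ 2,
      hv.lintegral_enorm_mellin_sq ha]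
    exact mul_le_mul_right (lintegral_mono (weight_le θ)) _
  rw [lintegral_lintegral_swap (hv.measurable_enorm_mellin_circleMap ha x r).aemeasurable]
  calc _ ≤ ∫⁻ _ in Ioc 0 (2 * Real.pi), ENNReal.ofReal (2 * Real.pi) * B := lintegral_mono on_line
    _ = ENNReal.ofReal (2 * Real.pi) ^ 2 * B := by
        rw [setLIntegral_const, Real.volume_Ioc, sub_zero]
        ring

end SqIntegrableOnIcc

/-- The dilation sum `∑_{1 ≤ n ≤ k} c_n w(n h)`, indexed as in `dirichletPoly`, which is its
multiplier under the Mellin transform. -/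
noncomputable def dilationSum (k : ℕ) (c : ℕ → ℂ) (w : ℝ → ℂ) (h : ℝ) : ℂ :=
  ∑ l ∈ Finset.range k, c l * w ((l + 1) * h)

lemma mellin_dilationSum (k : ℕ) (c : ℕ → ℂ) {w : ℝ → ℂ} {z : ℂ} (hw : MellinConvergent w z) :
    mellin (dilationSum k c w) z = dirichletPoly k c z * mellin w z := by
  have dilation_pos (l : ℕ) : (0 : ℝ) < l + 1 := by positivity
  have dilation (l : ℕ) : HasMellin (fun h => c l • w ((l + 1) * h)) z
      (c l * ((l + 1 : ℂ) ^ (-z) * mellin w z)) := by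
    refine ⟨((MellinConvergent.comp_mul_left (dilation_pos l)).2 hw).const_smul (c l), ?_⟩
    rw [mellin_const_smul, mellin_comp_mul_left _ _ (dilation_pos l)]
    simp
  rw [dirichletPoly, Finset.sum_mul]
  simp only [mellin, dilationSum, Finset.smul_sum]
  refine (integral_finsetSum _ fun l _ => (dilation l).1).trans (Finset.sum_congr rfl fun l _ => ?_)
  exact (dilation l).2.trans (mul_assoc _ _ _).symm

lemma memLp_comp_const_mul {E : Type*} [NormedAddCommGroup E] {f : ℝ → E} {p : ℝ≥0∞}
    (hf : MemLp f p) {a : ℝ} (ha : a ≠ 0) : MemLp (fun x => f (a * x)) p := by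
  refine MemLp.comp_of_map ?_ (measurable_const_mul a).aemeasurable
  rw [Real.map_volume_mul_left ha]
  exact hf.smul_measure ENNReal.ofReal_ne_top

lemma SqIntegrableOnIcc.dilationSum {a b : ℝ} {w : ℝ → ℂ} (hw : SqIntegrableOnIcc a b w)
    (ha : 0 < a) (k : ℕ) (c : ℕ → ℂ) : SqIntegrableOnIcc (a / k) b (dilationSum k c w) where
  measurable := by
    have w_measurable := hw.measurable
    unfold _root_.dilationSum
    fun_prop
  memLp := memLp_finsetSum _ fun l _ =>
    (memLp_comp_const_mul hw.memLp (Nat.cast_add_one_ne_zero l)).const_mul (c l)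
  eq_zero := fun x hx => Finset.sum_eq_zero fun l hl => by
    have l_lt : (l + 1 : ℝ) ≤ k := by exact_mod_cast Finset.mem_range.1 hl
    have l_pos : (0 : ℝ) < l + 1 := by positivity
    rw [hw.eq_zero, mul_zero]
    intro dilated_mem
    have x_pos : 0 < x := pos_of_mul_pos_right (ha.trans_le dilated_mem.1) l_pos.le
    refine hx ⟨?_, ?_⟩
    · rw [div_le_iff₀ (l_pos.trans_le l_lt), mul_comm]
      exact dilated_mem.1.trans (by gcongr)
    · exact (le_mul_of_one_le_left x_pos.le (by simp)).trans dilated_mem.2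

-- On the line `re z = -β / 2` the Mellin transform of `w` is controlled, through the mean value
-- property, by circles avoiding the zeros of `dirichletPoly k c`; radii below `(s - β) / 2` keep
-- these circles in the region `-s / 2 < re z`.
lemma exists_lintegral_mul_scaleWeight_le_dilationSum {k : ℕ} (hk : k ≠ 0) {c : ℕ → ℂ}
    (hc : c 0 ≠ 0) {β s : ℝ} (hβs : β < s) :
    ∃ C : ℝ≥0∞, C ≠ ⊤ ∧ ∀ ε > 0, ∀ w, SqIntegrableOnIcc ε 1 w →
      ∫⁻ h in Ioi 0, ‖w h‖ₑ ^ 2 * scaleWeight β h ≤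
        C * ∫⁻ h in Ioi 0, ‖dilationSum k c w h‖ₑ ^ 2 * scaleWeight s h := by
  obtain ⟨m, hm, S, hS, lower_bound⟩ :=
    exists_radii_le_norm_dirichletPoly hk hc (-β / 2) (half_pos (sub_pos.2 hβs))
  set p := ENNReal.ofReal (2 * Real.pi) with hp
  have p_ne_zero : p ≠ 0 := by simp [hp, Real.pi_pos]
  set A := ENNReal.ofReal (2 * Real.pi)⁻¹ * ENNReal.ofReal m⁻¹ ^ 2
  refine ⟨A * (S.card * p), by finiteness, fun ε hε w hw => ?_⟩
  set v := dilationSum k c w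
  set B := ∫⁻ h in Ioi 0, ‖v h‖ₑ ^ 2 * scaleWeight s h
  have hv : SqIntegrableOnIcc (ε / k) 1 v := hw.dilationSum hε k c
  have hεk : 0 < ε / k := by positivity
  have multiplier (z : ℂ) : mellin v z = dirichletPoly k c z * mellin w z :=
    mellin_dilationSum k c (hw.mellinConvergent hε z)
  have circles (τ : ℝ) : ‖mellin w ((-β / 2 : ℝ) + τ * Complex.I)‖ₑ ^ 2 ≤
      A * ∑ r ∈ S, ∫⁻ θ in Ioc 0 (2 * Real.pi),
        ‖mellin v (circleMap ((-β / 2 : ℝ) + τ * Complex.I) r θ)‖ₑ ^ 2 := by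
    obtain ⟨r, hr, hP⟩ := lower_bound τ
    simp only [multiplier]
    exact enorm_sq_le_sum_lintegral_circleMap_mul (hw.differentiable_mellin hε) hm hr
      (hS r hr).1.le hP
  have plancherel := hw.lintegral_enorm_mellin_sq hε (-β / 2)
  rw [show -2 * (-β / 2) = β by ring] at plancherel
  calc ∫⁻ h in Ioi 0, ‖w h‖ₑ ^ 2 * scaleWeight β h
      = p⁻¹ * ∫⁻ τ : ℝ, ‖mellin w ((-β / 2 : ℝ) + τ * Complex.I)‖ₑ ^ 2 := by
        rw [plancherel, ENNReal.inv_mul_cancel_left p_ne_zero ENNReal.ofReal_ne_top]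
    _ ≤ p⁻¹ * (A * ∑ r ∈ S, ∫⁻ τ : ℝ, ∫⁻ θ in Ioc 0 (2 * Real.pi),
          ‖mellin v (circleMap ((-β / 2 : ℝ) + τ * Complex.I) r θ)‖ₑ ^ 2) := by
        gcongr
        refine (lintegral_mono circles).trans_eq ?_
        rw [lintegral_const_mul' _ _ (by finiteness), lintegral_finsetSum]
        exact fun r _ => (hv.measurable_enorm_mellin_circleMap hεk _ r).lintegral_prod_right'
    _ ≤ p⁻¹ * (A * ∑ _r ∈ S, p ^ 2 * B) := by
        gcongr with r hr
        exact hv.lintegral_circleMap_mellin_le hεk (hS r hr).1.le (by linarith [(hS r hr).2])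
    _ = A * (S.card * p) * B := by
        rw [Finset.sum_const, nsmul_eq_mul, ← ENNReal.inv_mul_cancel_left p_ne_zero
          ENNReal.ofReal_ne_top (b := A * (S.card * p) * B)]
        ring

lemma tendsto_setLIntegral_Ioc_nhdsGT_zero {F : ℝ → ℝ≥0∞} {b : ℝ} (hb : 0 < b)
    (hF : ∫⁻ h in Ioc 0 b, F h ≠ ⊤) :
    Filter.Tendsto (fun δ => ∫⁻ h in Ioc 0 δ, F h) (nhdsWithin 0 (Ioi 0)) (nhds 0) := by
  have volume_tendsto : Filter.Tendsto (fun δ : ℝ => volume.restrict (Ioc 0 b) (Ioc 0 δ))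
      (nhdsWithin 0 (Ioi 0)) (nhds 0) := by
    refine tendsto_of_tendsto_of_tendsto_of_le_of_le tendsto_const_nhds
      (h := fun δ : ℝ => ENNReal.ofReal δ) ?_ (fun _ => zero_le) fun δ => ?_
    · simpa using (ENNReal.continuous_ofReal.tendsto 0).mono_left nhdsWithin_le_nhds
    · exact (Measure.restrict_apply_le _ _).trans (by simp)
  refine (tendsto_setLIntegral_zero hF volume_tendsto).congr' ?_
  filter_upwards [Ioc_mem_nhdsGT hb] with δ hδ
  rw [Measure.restrict_restrict measurableSet_Ioc, inter_eq_left.2 (Ioc_subset_Ioc_right hδ.2)]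

lemma dilationSum_sub (k : ℕ) (c : ℕ → ℂ) (f g : ℝ → ℂ) (h : ℝ) :
    dilationSum k c (fun x => f x - g x) h = dilationSum k c f h - dilationSum k c g h := by
  simp only [dilationSum, mul_sub, Finset.sum_sub_distrib]

lemma exists_setLIntegral_dilationSum_le (k : ℕ) (c : ℕ → ℂ) (s : ℝ) :
    ∃ A : ℝ≥0∞, A ≠ ⊤ ∧ ∀ S T : Set ℝ, MeasurableSet S → MeasurableSet T → S ⊆ Ioi 0 →
      (∀ l < k, MapsTo (((l : ℝ) + 1) * ·) S T) → ∀ w : ℝ → ℂ, Measurable w →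
      ∫⁻ h in S, ‖dilationSum k c w h‖ₑ ^ 2 * scaleWeight s h ≤
        A * ∫⁻ h in T, ‖w h‖ₑ ^ 2 * scaleWeight s h := by
  obtain ⟨A, hA, sum_le⟩ := exists_enorm_sum_mul_sq_le (Finset.range k) c
  refine ⟨A * ∑ l ∈ Finset.range k, ENNReal.ofReal (((l : ℝ) + 1) ^ s),
    ENNReal.mul_ne_top hA (ENNReal.sum_ne_top.2 fun _ _ => ENNReal.ofReal_ne_top),
    fun S T hS hT hpos hST w hw => ?_⟩
  calc ∫⁻ h in S, ‖dilationSum k c w h‖ₑ ^ 2 * scaleWeight s h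
      ≤ ∫⁻ h in S, A * ∑ l ∈ Finset.range k, ‖w ((l + 1) * h)‖ₑ ^ 2 * scaleWeight s h := by
        refine lintegral_mono fun h => ?_
        rw [← Finset.sum_mul, ← mul_assoc]
        exact mul_le_mul_left (sum_le fun l => w ((l + 1) * h)) _
    _ = A * ∑ l ∈ Finset.range k, ∫⁻ h in S, ‖w ((l + 1) * h)‖ₑ ^ 2 * scaleWeight s h := by
        rw [lintegral_const_mul' _ _ hA, lintegral_finsetSum _ (by fun_prop)]
    _ ≤ A * ∑ l ∈ Finset.range k, ENNReal.ofReal (((l : ℝ) + 1) ^ s) *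
          ∫⁻ h in T, ‖w h‖ₑ ^ 2 * scaleWeight s h := by
        gcongr with l hl
        exact setLIntegral_comp_const_mul_scaleWeight_le s (by positivity) hS hT hpos
          (hST l (Finset.mem_range.1 hl)) fun h => ‖w h‖ₑ ^ 2
    _ = _ := by rw [← Finset.sum_mul, mul_assoc]

lemma exists_lintegral_dilationSum_indicator_Icc_le (k : ℕ) (c : ℕ → ℂ) (s b : ℝ) :
    ∃ A : ℝ≥0∞, A ≠ ⊤ ∧ ∀ w : ℝ → ℂ, Measurable w → (∀ x ∉ Ioc 0 b, w x = 0) → ∀ ε,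
      ∫⁻ h in Ioi 0, ‖dilationSum k c ((Icc ε b).indicator w) h‖ₑ ^ 2 * scaleWeight s h ≤
        A * ((∫⁻ h in Ioi 0, ‖dilationSum k c w h‖ₑ ^ 2 * scaleWeight s h) +
          ∫⁻ h in Ioc 0 ε, ‖w h‖ₑ ^ 2 * scaleWeight s h) := by
  obtain ⟨A, hA, dilation_le⟩ := exists_setLIntegral_dilationSum_le k c s
  refine ⟨2 * max 1 A, by finiteness, fun w hw hw0 ε => ?_⟩
  set v : ℝ → ℂ := (Iio ε).indicator w
  have truncation_eq : (Icc ε b).indicator w = fun x => w x - v x := by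
    funext x
    by_cases hε : x < ε <;> by_cases hb : x ≤ b <;> simp_all [v]
  have v_le : ∫⁻ h in Ioi 0, ‖v h‖ₑ ^ 2 * scaleWeight s h ≤
      ∫⁻ h in Ioc 0 ε, ‖w h‖ₑ ^ 2 * scaleWeight s h := by
    rw [← lintegral_indicator measurableSet_Ioi, ← lintegral_indicator measurableSet_Ioc]
    refine lintegral_mono fun h => ?_
    by_cases h0 : 0 < h <;> by_cases hε : h < ε <;> simp_all [v, Set.indicator, le_of_lt]
  have dilation_v_le : ∫⁻ h in Ioi 0, ‖dilationSum k c v h‖ₑ ^ 2 * scaleWeight s h ≤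
      A * ∫⁻ h in Ioc 0 ε, ‖w h‖ₑ ^ 2 * scaleWeight s h :=
    (dilation_le (Ioi 0) (Ioi 0) measurableSet_Ioi measurableSet_Ioi subset_rfl
      (fun l _ h (hh : 0 < h) => mem_Ioi.2 (by positivity)) v
      (hw.indicator measurableSet_Iio)).trans (by gcongr)
  have pointwise (h : ℝ) : ‖dilationSum k c ((Icc ε b).indicator w) h‖ₑ ^ 2 * scaleWeight s h ≤
      2 * (‖dilationSum k c w h‖ₑ ^ 2 * scaleWeight s h +
        ‖dilationSum k c v h‖ₑ ^ 2 * scaleWeight s h) := by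
    rw [truncation_eq, dilationSum_sub, sub_eq_add_neg, ← add_mul, ← mul_assoc]
    gcongr
    simpa using enorm_add_sq_le (dilationSum k c w h) (-dilationSum k c v h)
  refine (lintegral_mono pointwise).trans ?_
  rw [lintegral_const_mul' _ _ (by finiteness), lintegral_add_left
    (by unfold dilationSum; fun_prop), mul_assoc, mul_add (max 1 A)]
  gcongr
  · exact le_mul_of_one_le_left' (le_max_left 1 A)
  · exact dilation_v_le.trans (by gcongr; exact le_max_right 1 A)

lemma exists_setLIntegral_Ioc_le_dilationSum {k : ℕ} (hk : k ≠ 0) {c : ℕ → ℂ} (hc : c 0 ≠ 0)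
    {β s : ℝ} (hβs : β < s) :
    ∃ C : ℝ≥0∞, C ≠ ⊤ ∧ ∀ w : ℝ → ℂ, Measurable w → MemLp w 2 → (∀ x ∉ Ioc 0 1, w x = 0) →
      ∫⁻ h in Ioc 0 1, ‖w h‖ₑ ^ 2 * scaleWeight s h ≠ ⊤ →
      ∫⁻ h in Ioc 0 1, ‖w h‖ₑ ^ 2 * scaleWeight β h ≤
        C * ∫⁻ h in Ioi 0, ‖dilationSum k c w h‖ₑ ^ 2 * scaleWeight s h := by
  obtain ⟨C, hC, compare⟩ := exists_lintegral_mul_scaleWeight_le_dilationSum hk hc hβs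
  obtain ⟨A, hA, truncation_le⟩ := exists_lintegral_dilationSum_indicator_Icc_le k c s 1
  refine ⟨C * A, by finiteness, fun w hw hw2 hw0 hfin => ?_⟩
  set V := ∫⁻ h in Ioi 0, ‖dilationSum k c w h‖ₑ ^ 2 * scaleWeight s h
  set tail : ℝ → ℝ≥0∞ := fun δ => ∫⁻ h in Ioc 0 δ, ‖w h‖ₑ ^ 2 * scaleWeight s h
  have truncated {δ : ℝ} (hδ : 0 < δ) :
      ∫⁻ h in Ioc δ 1, ‖w h‖ₑ ^ 2 * scaleWeight β h ≤ C * A * (V + tail δ) := by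
    have on_Icc : SqIntegrableOnIcc δ 1 ((Icc δ 1).indicator w) :=
      ⟨hw.indicator measurableSet_Icc, hw2.indicator measurableSet_Icc,
        fun x hx => indicator_of_notMem hx w⟩
    calc ∫⁻ h in Ioc δ 1, ‖w h‖ₑ ^ 2 * scaleWeight β h
        ≤ ∫⁻ h in Ioc δ 1, ‖(Icc δ 1).indicator w h‖ₑ ^ 2 * scaleWeight β h :=
          setLIntegral_mono' measurableSet_Ioc fun h hh => by
            rw [indicator_of_mem (Ioc_subset_Icc_self hh)]
      _ ≤ ∫⁻ h in Ioi 0, ‖(Icc δ 1).indicator w h‖ₑ ^ 2 * scaleWeight β h :=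
          lintegral_mono_set fun h hh => hδ.trans hh.1
      _ ≤ C * A * (V + tail δ) :=
          (compare δ hδ _ on_Icc).trans (by rw [mul_assoc]; gcongr; exact truncation_le w hw hw0 δ)
  have bound_tendsto : Filter.Tendsto (fun δ => C * A * (V + tail δ)) (nhdsWithin 0 (Ioi 0))
      (nhds (C * A * V)) := by
    have tail_tendsto := tendsto_setLIntegral_Ioc_nhdsGT_zero one_pos hfin
    simpa using ENNReal.Tendsto.const_mul (tail_tendsto.const_add V) (Or.inr (by finiteness))
  refine setLIntegral_Ioc_zero_le_of_forall_pos fun ε hε => ge_of_tendsto bound_tendsto ?_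
  filter_upwards [Ioc_mem_nhdsGT hε] with δ hδ
  exact (lintegral_mono_set (Ioc_subset_Ioc_left hδ.2)).trans (truncated hδ.1)

lemma dilationSum_indicator_Ioc {k : ℕ} (c : ℕ → ℂ) (f : ℝ → ℂ) {b h : ℝ}
    (hh : h ∈ Ioc 0 (b / k)) :
    dilationSum k c ((Ioc 0 b).indicator f) h = dilationSum k c f h := by
  refine Finset.sum_congr rfl fun l hl => ?_
  have l_lt : (l + 1 : ℝ) ≤ k := by exact_mod_cast Finset.mem_range.1 hl
  have k_pos : (0 : ℝ) < k := by linarith [l.cast_nonneg (α := ℝ)]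
  rw [indicator_of_mem]
  refine ⟨mul_pos (by positivity) hh.1, ?_⟩
  calc (l + 1) * h ≤ k * (b / k) := mul_le_mul l_lt hh.2 hh.1.le k_pos.le
    _ = b := mul_div_cancel₀ b k_pos.ne'

lemma exists_lintegral_dilationSum_indicator_Ioc_le {k : ℕ} (hk : k ≠ 0) (c : ℕ → ℂ) (s : ℝ)
    {b : ℝ} (hb : 0 < b) :
    ∃ C : ℝ≥0∞, C ≠ ⊤ ∧ ∀ f : ℝ → ℂ, Measurable f →
      ∫⁻ h in Ioi 0, ‖dilationSum k c ((Ioc 0 b).indicator f) h‖ₑ ^ 2 * scaleWeight s h ≤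
        C * ((∫⁻ h in Ioc 0 (b / k), ‖dilationSum k c f h‖ₑ ^ 2 * scaleWeight s h) +
          ∫⁻ h in Ioc 0 b, ‖f h‖ₑ ^ 2) := by
  obtain ⟨A, hA, dilation_le⟩ := exists_setLIntegral_dilationSum_le k c s
  have hbk : 0 < b / k := by positivity
  obtain ⟨B, hB, weight_le⟩ := exists_setLIntegral_Ioc_mul_scaleWeight_le s hbk b
  refine ⟨max 1 (A * B), by finiteness, fun f hf => ?_⟩
  set w := (Ioc 0 b).indicator f
  have near : ∫⁻ h in Ioc 0 (b / k), ‖dilationSum k c w h‖ₑ ^ 2 * scaleWeight s h =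
      ∫⁻ h in Ioc 0 (b / k), ‖dilationSum k c f h‖ₑ ^ 2 * scaleWeight s h :=
    setLIntegral_congr_fun measurableSet_Ioc fun h hh => by
      simp only [w, dilationSum_indicator_Ioc c f hh]
  have far : ∫⁻ h in Ioi (b / k), ‖dilationSum k c w h‖ₑ ^ 2 * scaleWeight s h ≤
      A * B * ∫⁻ h in Ioc 0 b, ‖f h‖ₑ ^ 2 := by
    refine (dilation_le (Ioi (b / k)) (Ioi (b / k)) measurableSet_Ioi measurableSet_Ioi
      (Ioi_subset_Ioi hbk.le) (fun l _ h (hh : b / k < h) => mem_Ioi.2 ?_) w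
      (hf.indicator measurableSet_Ioc)).trans ?_
    · exact hh.trans_le (le_mul_of_one_le_left (hbk.trans hh).le (by simp))
    · rw [mul_assoc]
      gcongr
      calc ∫⁻ h in Ioi (b / k), ‖w h‖ₑ ^ 2 * scaleWeight s h
          ≤ ∫⁻ h in Ioc (b / k) b, ‖f h‖ₑ ^ 2 * scaleWeight s h := by
            rw [← lintegral_indicator measurableSet_Ioi, ← lintegral_indicator measurableSet_Ioc]
            refine lintegral_mono fun h => ?_
            by_cases h1 : b / k < h <;> by_cases h2 : h ≤ b <;> simp [w, Set.indicator, h1, h2]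
            simp [hbk.trans h1]
        _ ≤ B * ∫⁻ h in Ioc 0 b, ‖f h‖ₑ ^ 2 :=
            (weight_le _).trans (by gcongr)
  rw [← Ioc_union_Ioi_eq_Ioi hbk.le]
  refine (lintegral_union_le _ _ _).trans ?_
  rw [near, mul_add]
  gcongr
  · exact le_mul_of_one_le_left' (le_max_left _ _)
  · exact far.trans (by gcongr; exact le_max_right _ _)

lemma exists_setLIntegral_Ioc_le_dilationSum_add {k : ℕ} (hk : k ≠ 0) {c : ℕ → ℂ}
    (hc : c 0 ≠ 0) {β s : ℝ} (hβs : β < s) :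
    ∃ C : ℝ≥0∞, C ≠ ⊤ ∧ ∀ f : ℝ → ℂ, Measurable f → ∀ η > 0,
      ∫⁻ h in Ioc 0 η, ‖f h‖ₑ ^ 2 * scaleWeight s h ≠ ⊤ → ∫⁻ h in Ioc 0 1, ‖f h‖ₑ ^ 2 ≠ ⊤ →
      ∫⁻ h in Ioc 0 1, ‖f h‖ₑ ^ 2 * scaleWeight β h ≤
        C * ((∫⁻ h in Ioc 0 (1 / (k : ℝ)), ‖dilationSum k c f h‖ₑ ^ 2 * scaleWeight s h) +
          ∫⁻ h in Ioc 0 1, ‖f h‖ₑ ^ 2) := by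
  obtain ⟨C, hC, compare⟩ := exists_setLIntegral_Ioc_le_dilationSum hk hc hβs
  obtain ⟨D, hD, localize⟩ := exists_lintegral_dilationSum_indicator_Ioc_le hk c s one_pos
  refine ⟨C * D, by finiteness, fun f hf η hη hsmall hL2 => ?_⟩
  set w := (Ioc 0 1).indicator f
  have sq_eq (h : ℝ) : ‖w h‖ₑ ^ 2 = (Ioc 0 1).indicator (fun h => ‖f h‖ₑ ^ 2) h := by
    by_cases hh : h ∈ Ioc 0 1 <;> simp [w, hh]
  have weighted_eq (p : ℝ) : ∫⁻ h in Ioc 0 1, ‖w h‖ₑ ^ 2 * scaleWeight p h =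
      ∫⁻ h in Ioc 0 1, ‖f h‖ₑ ^ 2 * scaleWeight p h :=
    setLIntegral_congr_fun measurableSet_Ioc fun h hh => by simp only [w, indicator_of_mem hh]
  have hw : Measurable w := hf.indicator measurableSet_Ioc
  have hw2 : MemLp w 2 := by
    rw [memLp_two_iff_lintegral_ne_top hw.aestronglyMeasurable]
    simpa only [sq_eq, lintegral_indicator measurableSet_Ioc] using hL2
  have weighted_ne_top : ∫⁻ h in Ioc 0 1, ‖w h‖ₑ ^ 2 * scaleWeight s h ≠ ⊤ := by
    rw [weighted_eq s]
    exact setLIntegral_Ioc_zero_mul_scaleWeight_ne_top hη hL2 hsmall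
  rw [← weighted_eq β, mul_assoc C]
  refine (compare w hw hw2 (fun x hx => indicator_of_notMem hx f) weighted_ne_top).trans ?_
  gcongr
  exact localize f hf

lemma dilationSum_diffCoeff_tauIter {k m : ℕ} (hk : k ≠ 0) (hm : m ≠ 0) (g : ℝ → ℂ) (t h : ℝ) :
    dilationSum k (fun l => diffCoeff k (l + 1)) (fun h => tauIter h m g t) h =
      dilationSum m (fun l => diffCoeff m (l + 1)) (fun h => tauIter h k g t) h := by
  simpa [Finset.sum_range_succ', tauIter_zero_step hk, tauIter_zero_step hm, dilationSum]
    using sum_diffCoeff_mul_tauIter k m h t 0 g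

lemma exists_setLIntegral_tauIter_le {k m : ℕ} (hm : m ≠ 0) (hmk : m ≤ k) {β s : ℝ}
    (hβs : β < s) :
    ∃ C : ℝ≥0∞, C ≠ ⊤ ∧ ∀ g : ℝ → ℂ, Measurable g → ∀ t, ∀ η > 0,
      ∫⁻ h in Ioc 0 η, ‖tauIter h m g t‖ₑ ^ 2 * scaleWeight s h ≠ ⊤ →
      ∫⁻ h in Ioc 0 1, ‖tauIter h m g t‖ₑ ^ 2 ≠ ⊤ →
      ∫⁻ h in Ioc 0 1, ‖tauIter h m g t‖ₑ ^ 2 * scaleWeight β h ≤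
        C * ((∫⁻ h in Ioc 0 1, ‖tauIter h k g t‖ₑ ^ 2 * scaleWeight s h) +
          ∫⁻ h in Ioc 0 1, ‖tauIter h m g t‖ₑ ^ 2) := by
  have hk : k ≠ 0 := by lia
  obtain ⟨C, hC, compare⟩ := exists_setLIntegral_Ioc_le_dilationSum_add hk
    (c := fun l => diffCoeff k (l + 1)) (diffCoeff_one_right_ne_zero hk) hβs
  obtain ⟨A, hA, dilation_le⟩ := exists_setLIntegral_dilationSum_le m
    (fun l => diffCoeff m (l + 1)) s
  refine ⟨C * max A 1, by finiteness, fun g hg t η hη hsmall hL2 => ?_⟩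
  have measurable_step (n : ℕ) : Measurable fun h => tauIter h n g t :=
    measurable_tauIter n hg measurable_id measurable_const
  have two_grid : ∫⁻ h in Ioc 0 (1 / (k : ℝ)), ‖dilationSum k (fun l => diffCoeff k (l + 1))
        (fun h => tauIter h m g t) h‖ₑ ^ 2 * scaleWeight s h ≤
      A * ∫⁻ h in Ioc 0 1, ‖tauIter h k g t‖ₑ ^ 2 * scaleWeight s h := by
    simp only [dilationSum_diffCoeff_tauIter hk hm]
    refine dilation_le _ _ measurableSet_Ioc measurableSet_Ioc (fun h hh => hh.1)
      (fun l hl h hh => ⟨mul_pos (by positivity) hh.1, ?_⟩) _ (measurable_step k)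
    have l_lt : (l + 1 : ℝ) ≤ k := by exact_mod_cast hl.trans_le hmk
    calc (l + 1) * h ≤ k * (1 / k) := mul_le_mul l_lt hh.2 hh.1.le k.cast_nonneg
      _ = 1 := mul_one_div_cancel (by positivity)
  refine (compare _ (measurable_step m) η hη hsmall hL2).trans ?_
  rw [mul_assoc C, mul_add (max A 1)]
  gcongr
  · exact two_grid.trans (by gcongr; exact le_max_left _ _)
  · exact le_mul_of_one_le_left' (le_max_right _ _)

/-! ### A priori finiteness at density points -/

/-- The energy `∫_S |τ_h^m g|²` of the `m`-th differences of step `h` on the set `S`. -/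
noncomputable def diffEnergy (m : ℕ) (g : ℝ → ℂ) (S : Set ℝ) (h : ℝ) : ℝ≥0∞ :=
  ∫⁻ t in S, ‖tauIter h m g t‖ₑ ^ 2

/-- `U` misses at most the fraction `κ / 2` of each ball about `x` of radius at most `δ`;
this quantifies that `x` is a point of density of `U`. -/
def IsDenseAtScales (U : Set ℝ) (κ δ x : ℝ) : Prop :=
  ∀ ρ ∈ Ioc 0 δ, volume (Metric.closedBall x ρ \ U) ≤ ENNReal.ofReal (κ * ρ)

lemma ae_exists_isDenseAtScales {U : Set ℝ} (hU : MeasurableSet U) {κ : ℝ} (hκ : 0 < κ) :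
    ∀ᵐ x : ℝ, x ∈ U → ∃ n : ℕ, IsDenseAtScales U κ (1 / ((n : ℝ) + 1)) x := by
  filter_upwards [Besicovitch.ae_tendsto_measure_inter_div_of_measurableSet volume hU.compl]
    with x density hxU
  rw [indicator_of_notMem (by simpa using hxU)] at density
  have small := density.eventually_lt_const (u := ENNReal.ofReal (κ / 2)) (by simpa using hκ)
  rw [eventually_nhdsWithin_iff, Metric.eventually_nhds_iff] at small
  obtain ⟨ε, hε, small⟩ := small
  obtain ⟨n, hn⟩ := exists_nat_one_div_lt hε
  refine ⟨n, fun ρ ⟨h0, hρ⟩ => ?_⟩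
  have ratio := (small (y := ρ)
    (by rw [Real.dist_eq, sub_zero, abs_of_pos h0]; exact hρ.trans_lt hn) h0).le
  rw [Real.volume_closedBall, ENNReal.div_le_iff (by simpa using h0) ENNReal.ofReal_ne_top,
    ← ENNReal.ofReal_mul (by positivity), show κ / 2 * (2 * ρ) = κ * ρ by ring] at ratio
  rwa [sdiff_eq, inter_comm]

lemma volume_setOf_add_mul_mem (B : Set ℝ) {a : ℝ} (ha : a ≠ 0) (y : ℝ) :
    volume {q | y + a * q ∈ B} = ENNReal.ofReal |a⁻¹| * volume B := by
  rw [← measure_preimage_add volume y B, ← Real.volume_preimage_mul_left ha]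
  rfl

lemma inv_two_le_volume_forall_add_mul_mem {ι : Type*} {J : Finset ι} {a : ι → ℝ} {w y : ℝ}
    (hw : 0 < w) (ha : ∀ j ∈ J, w ≤ |a j|) {B U : Set ℝ}
    (hB : ∀ j ∈ J, ∀ q ∈ Ioc (0 : ℝ) 1, y + a j * q ∈ B)
    (hBU : J.card * volume (B \ U) ≤ ENNReal.ofReal (w / 2)) :
    2⁻¹ ≤ volume {q ∈ Ioc (0 : ℝ) 1 | ∀ j ∈ J, y + a j * q ∈ U} := by
  let bad (j : ι) : Set ℝ := {q | y + a j * q ∈ B \ U}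
  have volume_bad : ∀ j ∈ J, volume (bad j) ≤ ENNReal.ofReal w⁻¹ * volume (B \ U) := fun j hj => by
    have ha0 := hw.trans_le (ha j hj)
    rw [volume_setOf_add_mul_mem _ (abs_pos.1 ha0), abs_inv]
    gcongr
    exact ha j hj
  have volume_bad_le : volume (⋃ j ∈ J, bad j) ≤ 2⁻¹ := calc
    volume (⋃ j ∈ J, bad j) ≤ ∑ j ∈ J, volume (bad j) := measure_biUnion_finset_le _ _
    _ ≤ ∑ _j ∈ J, ENNReal.ofReal w⁻¹ * volume (B \ U) := Finset.sum_le_sum volume_bad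
    _ = ENNReal.ofReal w⁻¹ * (J.card * volume (B \ U)) := by
        rw [Finset.sum_const, nsmul_eq_mul]; ring
    _ ≤ ENNReal.ofReal w⁻¹ * ENNReal.ofReal (w / 2) := by gcongr
    _ = 2⁻¹ := by
        rw [← ENNReal.ofReal_mul (by positivity), show w⁻¹ * (w / 2) = 2⁻¹ by field_simp,
          ENNReal.ofReal_inv_of_pos two_pos, ENNReal.ofReal_ofNat]
  have cover : Ioc (0 : ℝ) 1 ⊆
      {q ∈ Ioc (0 : ℝ) 1 | ∀ j ∈ J, y + a j * q ∈ U} ∪ ⋃ j ∈ J, bad j := fun q hq => by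
    by_cases hgood : ∀ j ∈ J, y + a j * q ∈ U
    · exact Or.inl ⟨hq, hgood⟩
    · push Not at hgood
      obtain ⟨j, hj, hjU⟩ := hgood
      exact Or.inr (mem_biUnion hj ⟨hB j hj q hq, hjU⟩)
  have total := (measure_mono cover).trans ((measure_union_le _ _).trans
    (add_le_add_right volume_bad_le _))
  rw [Real.volume_Ioc, sub_zero, ENNReal.ofReal_one, ← ENNReal.inv_two_add_inv_two] at total
  exact (ENNReal.add_le_add_iff_right (by finiteness)).1 total

lemma le_two_mul_setLIntegral_of_inv_two_le {c : ℝ≥0∞} {f : ℝ → ℝ≥0∞} {S G : Set ℝ}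
    (hG : G ⊆ S) (hGS : MeasurableSet G) (hvol : 2⁻¹ ≤ volume G) (hc : ∀ q ∈ G, c ≤ f q) :
    c ≤ 2 * ∫⁻ q in S, f q := calc
  c = 2 * (c * 2⁻¹) := by
      rw [mul_left_comm, ENNReal.mul_inv_cancel two_ne_zero ENNReal.ofNat_ne_top, mul_one]
  _ ≤ 2 * (c * volume G) := by gcongr
  _ = 2 * ∫⁻ _ in G, c := by rw [setLIntegral_const]
  _ ≤ 2 * ∫⁻ q in G, f q := by gcongr 2 * ?_; exact setLIntegral_mono' hGS hc
  _ ≤ 2 * ∫⁻ q in S, f q := by gcongr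

/-- In the two-grid identity, `j = 1` singles out `tauIter b k g (x + y)`. -/
lemma exists_enorm_tauIter_add_sq_le {k : ℕ} (hk : k ≠ 0) : ∃ A : ℝ≥0∞, A ≠ ⊤ ∧
    ∀ (g : ℝ → ℂ) (b x y : ℝ), ‖tauIter b k g (x + y)‖ₑ ^ 2 ≤
      A * (∑ i ∈ Finset.range (k + 1), ‖tauIter (y + i * b) k g x‖ₑ ^ 2 +
        ∑ j ∈ (Finset.range (k + 1)).erase 1, ‖tauIter (j * b) k g (x + j * y)‖ₑ ^ 2) := by
  have hc := diffCoeff_one_right_ne_zero hk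
  obtain ⟨A, hA, sum_sq_le⟩ := exists_enorm_sum_mul_sq_le (Finset.range (k + 1))
    fun i => (diffCoeff k 1)⁻¹ * diffCoeff k i
  obtain ⟨A', hA', sum_sq_le'⟩ := exists_enorm_sum_mul_sq_le ((Finset.range (k + 1)).erase 1)
    fun j => -((diffCoeff k 1)⁻¹ * diffCoeff k j)
  refine ⟨2 * (A + A'), by finiteness, fun g b x y => ?_⟩
  have isolate : tauIter b k g (x + y) =
      (∑ i ∈ Finset.range (k + 1),
        (diffCoeff k 1)⁻¹ * diffCoeff k i * tauIter (y + i * b) k g x) +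
      ∑ j ∈ (Finset.range (k + 1)).erase 1,
        -((diffCoeff k 1)⁻¹ * diffCoeff k j) * tauIter (j * b) k g (x + j * y) := by
    have identity := sum_diffCoeff_mul_tauIter k k b x y g
    rw [← Finset.add_sum_erase _ _ (Finset.mem_range.2 (by lia : 1 < k + 1)), Nat.cast_one,
      one_mul, one_mul] at identity
    simp only [neg_mul, Finset.sum_neg_distrib, mul_assoc, ← Finset.mul_sum]
    rw [← identity, mul_add, inv_mul_cancel_left₀ hc, add_neg_cancel_right]
  rw [isolate, mul_assoc]
  refine (enorm_add_sq_le _ _).trans (mul_le_mul_right ?_ _)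
  rw [mul_add]
  exact add_le_add ((sum_sq_le _).trans (by gcongr; exact le_self_add))
    ((sum_sq_le' _).trans (by gcongr; exact le_add_self))

lemma measurable_diffEnergy (m : ℕ) {g : ℝ → ℂ} (hg : Measurable g) (S : Set ℝ) :
    Measurable (diffEnergy m g S) :=
  Measurable.lintegral_prod_right' (f := fun p : ℝ × ℝ => ‖tauIter p.1 m g p.2‖ₑ ^ 2)
    ((measurable_tauIter m hg measurable_fst measurable_snd).enorm.pow_const 2)

lemma setLIntegral_diffEnergy_mul_scaleWeight (m : ℕ) {g : ℝ → ℂ} (hg : Measurable g)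
    (S T : Set ℝ) (s : ℝ) :
    ∫⁻ h in T, diffEnergy m g S h * scaleWeight s h =
      ∫⁻ t in S, ∫⁻ h in T, ‖tauIter h m g t‖ₑ ^ 2 * scaleWeight s h := by
  have := measurable_enorm_tauIter_sq m hg
  rw [lintegral_lintegral_swap (by fun_prop)]
  exact lintegral_congr fun h => (lintegral_mul_const' _ _ (scaleWeight_ne_top s h)).symm

lemma measurable_indicator_enorm_tauIter_sq (k : ℕ) {g : ℝ → ℂ} (hg : Measurable g) {U : Set ℝ}
    (hU : MeasurableSet U) {α : Type*} [MeasurableSpace α] {a b : α → ℝ} (ha : Measurable a)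
    (hb : Measurable b) :
    Measurable fun p => U.indicator (fun t => ‖tauIter (a p) k g t‖ₑ ^ 2) (b p) :=
  ((measurable_tauIter k hg ha hb).enorm.pow_const 2).indicator (hb hU)

lemma lintegral_setLIntegral_indicator_tauIter (k : ℕ) {g : ℝ → ℂ} (hg : Measurable g) {U : Set ℝ}
    (hU : MeasurableSet U) {a : ℝ → ℝ} (ha : Measurable a) (b : ℝ) (S : Set ℝ) :
    ∫⁻ y, ∫⁻ q in S, U.indicator (fun t => ‖tauIter (a q) k g t‖ₑ ^ 2) (y + b * q) =
      ∫⁻ q in S, diffEnergy k g U (a q) := by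
  rw [lintegral_lintegral_swap]
  · refine lintegral_congr fun q => ?_
    rw [lintegral_add_right_eq_self (U.indicator _), lintegral_indicator hU, diffEnergy]
  · exact (measurable_indicator_enorm_tauIter_sq k hg hU (a := fun p : ℝ × ℝ => a p.2)
      (b := fun p => p.1 + b * p.2) (by fun_prop) (by fun_prop)).aemeasurable

lemma inv_two_le_volume_dilates_mem {k : ℕ} (hk : k ≠ 0) {C δ w x y : ℝ} {U : Set ℝ} (hC : 0 ≤ C)
    (hw : 0 < w) (hwδ : (C + k) * w ≤ δ) (hx : IsDenseAtScales U (1 / (2 * k * (C + k))) δ x)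
    (hxy : dist y x < C * w) :
    2⁻¹ ≤ volume {q ∈ Ioc (0 : ℝ) 1 |
      ∀ j ∈ (Finset.range (k + 1)).erase 1, y + ((j : ℝ) - 1) * w * q ∈ U} := by
  have hk1 : (1 : ℝ) ≤ k := by exact_mod_cast Nat.one_le_iff_ne_zero.2 hk
  refine inv_two_le_volume_forall_add_mul_mem (B := Metric.closedBall x ((C + k) * w)) hw
    (fun j hj => ?_) (fun j hj q hq => ?_) ?_
  · have hj1 : (1 : ℤ) ≤ |(j : ℤ) - 1| :=
      Int.one_le_abs (by have := (Finset.mem_erase.1 hj).1; lia)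
    rw [abs_mul, abs_of_pos hw]
    exact le_mul_of_one_le_left hw.le (by exact_mod_cast hj1)
  · have hjk : (j : ℝ) ≤ k := by
      exact_mod_cast Nat.lt_succ_iff.1 (Finset.mem_range.1 (Finset.mem_erase.1 hj).2)
    have abs_le_k : |(j : ℝ) - 1| ≤ k := abs_le.2 ⟨by linarith [Nat.cast_nonneg (α := ℝ) j],
      by linarith⟩
    rw [Metric.mem_closedBall, Real.dist_eq]
    rw [Real.dist_eq] at hxy
    calc |y + ((j : ℝ) - 1) * w * q - x| = |(y - x) + ((j : ℝ) - 1) * w * q| := by ring_nf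
      _ ≤ |y - x| + |((j : ℝ) - 1)| * w * q := by
          refine (abs_add_le _ _).trans_eq ?_
          rw [abs_mul, abs_mul, abs_of_pos hw, abs_of_pos hq.1]
      _ ≤ C * w + k * w * 1 := by gcongr <;> [exact hq.1.le; exact hq.2]
      _ = (C + k) * w := by ring
  · rw [Finset.card_erase_of_mem (Finset.mem_range.2 (by lia)), Finset.card_range,
      Nat.add_sub_cancel]
    refine (mul_le_mul_right (hx _ ⟨by positivity, hwδ⟩) _).trans_eq ?_
    rw [← ENNReal.ofReal_natCast, ← ENNReal.ofReal_mul (by positivity)]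
    congr 1
    field_simp

lemma exists_enorm_tauIter_sq_le_of_isDenseAtScales {k : ℕ} (hk : k ≠ 0) : ∃ A : ℝ≥0∞, A ≠ ⊤ ∧
    ∀ g : ℝ → ℂ, Measurable g → ∀ (C δ w x y : ℝ) (U : Set ℝ), 0 ≤ C → 0 < w → (C + k) * w ≤ δ →
      MeasurableSet U → IsDenseAtScales U (1 / (2 * k * (C + k))) δ x → dist y x < C * w →
      ‖tauIter w k g y‖ₑ ^ 2 ≤ A * (
        (∑ i ∈ Finset.range (k + 1), ∫⁻ q in Ioc (0 : ℝ) 1,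
          U.indicator (fun t => ‖tauIter ((q + i) * w) k g t‖ₑ ^ 2) (y + -w * q)) +
        ∑ j ∈ (Finset.range (k + 1)).erase 1, ∫⁻ q in Ioc (0 : ℝ) 1,
          U.indicator (fun t => ‖tauIter (j * w) k g t‖ₑ ^ 2) (y + (j - 1) * w * q)) := by
  obtain ⟨A, hA, two_grid⟩ := exists_enorm_tauIter_add_sq_le hk
  refine ⟨2 * A, by finiteness, fun g hg C δ w x y U hC hw hwδ hU hx hxy => ?_⟩
  let F (h : ℝ) : ℝ → ℝ≥0∞ := U.indicator fun t => ‖tauIter h k g t‖ₑ ^ 2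
  have hF {u v : ℝ → ℝ} (hu : Measurable u) (hv : Measurable v) :
      Measurable fun q => F (u q) (v q) := measurable_indicator_enorm_tauIter_sq k hg hU hu hv
  have average : ‖tauIter w k g y‖ₑ ^ 2 ≤ 2 * ∫⁻ q in Ioc (0 : ℝ) 1,
      A * ((∑ i ∈ Finset.range (k + 1), F ((q + i) * w) (y + -w * q)) +
        ∑ j ∈ (Finset.range (k + 1)).erase 1, F (j * w) (y + (j - 1) * w * q)) := by
    refine le_two_mul_setLIntegral_of_inv_two_le (sep_subset _ _) ?_
      (inv_two_le_volume_dilates_mem hk hC hw hwδ hx hxy) fun q ⟨_, hq⟩ => ?_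
    · simp only [ofPred_and, ofPred_forall]
      exact measurableSet_Ioc.inter (.biInter (Finset.countable_toSet _) fun j _ =>
        (by fun_prop : Measurable fun q : ℝ => y + ((j : ℝ) - 1) * w * q) hU)
    have h0 : y + -w * q ∈ U := by simpa using hq 0 (by simp)
    have grid_point (j : ℕ) : y + -w * q + j * (q * w) = y + (j - 1) * w * q := by ring
    have target : y + -w * q + q * w = y := by ring
    have bound := two_grid g w (y + -w * q) (q * w)
    simp only [grid_point, target, ← add_mul] at bound
    refine bound.trans_eq (congrArg (A * ·) (congrArg₂ (· + ·) ?_ ?_))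
    · exact Finset.sum_congr rfl fun i _ => (indicator_of_mem (f := fun t => _) h0).symm
    · exact Finset.sum_congr rfl fun j hj => (indicator_of_mem (f := fun t => _) (hq j hj)).symm
  refine average.trans_eq ?_
  rw [lintegral_const_mul' _ _ hA, lintegral_add_right _
      (Finset.measurable_fun_sum _ fun j _ => hF (by fun_prop) (by fun_prop)),
    lintegral_finsetSum _ fun i _ => hF (by fun_prop) (by fun_prop),
    lintegral_finsetSum _ fun j _ => hF (by fun_prop) (by fun_prop), mul_assoc]

lemma exists_diffEnergy_thickening_le {k : ℕ} (hk : k ≠ 0) : ∃ A : ℝ≥0∞, A ≠ ⊤ ∧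
    ∀ g : ℝ → ℂ, Measurable g → ∀ (C δ w : ℝ) (U K : Set ℝ), 0 ≤ C → 0 < w → (C + k) * w ≤ δ →
      MeasurableSet U → (∀ x ∈ K, IsDenseAtScales U (1 / (2 * k * (C + k))) δ x) →
      diffEnergy k g (Metric.thickening (C * w) K) w ≤ A * (
        (∑ i ∈ Finset.range (k + 1), ∫⁻ q in Ioc (0 : ℝ) 1, diffEnergy k g U ((q + i) * w)) +
        ∑ j ∈ (Finset.range (k + 1)).erase 1,
          ∫⁻ _ in Ioc (0 : ℝ) 1, diffEnergy k g U (j * w)) := by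
  obtain ⟨A, hA, pointwise⟩ := exists_enorm_tauIter_sq_le_of_isDenseAtScales hk
  refine ⟨A, hA, fun g hg C δ w U K hC hw hwδ hU hK => ?_⟩
  let average (a : ℝ → ℝ) (b y : ℝ) : ℝ≥0∞ :=
    ∫⁻ q in Ioc (0 : ℝ) 1, U.indicator (fun t => ‖tauIter (a q) k g t‖ₑ ^ 2) (y + b * q)
  have measurable_average {a : ℝ → ℝ} (ha : Measurable a) (b : ℝ) : Measurable (average a b) :=
    (measurable_indicator_enorm_tauIter_sq k hg hU (a := fun p : ℝ × ℝ => a p.2)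
      (b := fun p => p.1 + b * p.2) (by fun_prop) (by fun_prop)).lintegral_prod_right'
  calc diffEnergy k g (Metric.thickening (C * w) K) w
      ≤ ∫⁻ y in Metric.thickening (C * w) K, A * (
          (∑ i ∈ Finset.range (k + 1), average (fun q => (q + i) * w) (-w) y) +
          ∑ j ∈ (Finset.range (k + 1)).erase 1, average (fun _ => j * w) ((j - 1) * w) y) := by
        refine setLIntegral_mono' Metric.isOpen_thickening.measurableSet fun y hy => ?_
        obtain ⟨x, hx, hxy⟩ := Metric.mem_thickening_iff.1 hy
        exact pointwise g hg C δ w x y U hC hw hwδ hU (hK x hx) hxy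
    _ ≤ ∫⁻ y, A * (
          (∑ i ∈ Finset.range (k + 1), average (fun q => (q + i) * w) (-w) y) +
          ∑ j ∈ (Finset.range (k + 1)).erase 1, average (fun _ => j * w) ((j - 1) * w) y) :=
        setLIntegral_le_lintegral _ _
    _ = A * (
          (∑ i ∈ Finset.range (k + 1), ∫⁻ y, average (fun q => (q + i) * w) (-w) y) +
          ∑ j ∈ (Finset.range (k + 1)).erase 1,
            ∫⁻ y, average (fun _ => j * w) ((j - 1) * w) y) := by
        rw [lintegral_const_mul' _ _ hA, lintegral_add_right _
            (Finset.measurable_fun_sum _ fun j _ => measurable_average (by fun_prop) _),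
          lintegral_finsetSum _ fun i _ => measurable_average (by fun_prop) _,
          lintegral_finsetSum _ fun j _ => measurable_average (by fun_prop) _]
    _ = _ := by
        refine congrArg (A * ·) (congrArg₂ (· + ·) ?_ ?_)
        · exact Finset.sum_congr rfl fun i _ =>
            lintegral_setLIntegral_indicator_tauIter k hg hU (by fun_prop) _ _
        · exact Finset.sum_congr rfl fun j _ =>
            lintegral_setLIntegral_indicator_tauIter k hg hU measurable_const _ _

lemma diffEnergy_zero_step {k : ℕ} (hk : k ≠ 0) (g : ℝ → ℂ) (S : Set ℝ) :
    diffEnergy k g S 0 = 0 := by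
  simp [diffEnergy, tauIter_zero_step hk]

lemma setLIntegral_average_dilations_le {ψ : ℝ → ℝ≥0∞} (hψ : Measurable ψ) (hψ0 : ψ 0 = 0)
    {s R η : ℝ} (hs : 0 ≤ s) (hR : 0 ≤ R) (hRη : R * η ≤ 1) {a : ℝ → ℝ} (ha : Measurable a)
    (haR : ∀ q ∈ Ioc (0 : ℝ) 1, a q ∈ Icc 0 R) :
    ∫⁻ w in Ioc 0 η, (∫⁻ q in Ioc (0 : ℝ) 1, ψ (a q * w)) * scaleWeight s w ≤
      ENNReal.ofReal (R ^ s) * ∫⁻ h in Ioc 0 1, ψ h * scaleWeight s h := by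
  have dilate {c : ℝ} (hc : c ∈ Icc 0 R) : ∫⁻ w in Ioc 0 η, ψ (c * w) * scaleWeight s w ≤
      ENNReal.ofReal (R ^ s) * ∫⁻ h in Ioc 0 1, ψ h * scaleWeight s h := by
    rcases hc.1.eq_or_lt with rfl | hc0
    · simp [hψ0]
    refine (setLIntegral_comp_const_mul_scaleWeight_le s hc0 measurableSet_Ioc
      (T := Ioc 0 1) measurableSet_Ioc (fun w hw => hw.1) (fun w hw => ?_) ψ).trans ?_
    · exact ⟨mul_pos hc0 hw.1, (mul_le_mul hc.2 hw.2 hw.1.le hR).trans hRη⟩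
    · gcongr
      exact hc.2
  calc ∫⁻ w in Ioc 0 η, (∫⁻ q in Ioc (0 : ℝ) 1, ψ (a q * w)) * scaleWeight s w
      = ∫⁻ w in Ioc 0 η, ∫⁻ q in Ioc (0 : ℝ) 1, ψ (a q * w) * scaleWeight s w := by
        simp only [lintegral_mul_const' _ _ (scaleWeight_ne_top s _)]
    _ = ∫⁻ q in Ioc (0 : ℝ) 1, ∫⁻ w in Ioc 0 η, ψ (a q * w) * scaleWeight s w :=
        lintegral_lintegral_swap (by fun_prop)
    _ ≤ ∫⁻ _ in Ioc (0 : ℝ) 1,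
          ENNReal.ofReal (R ^ s) * ∫⁻ h in Ioc 0 1, ψ h * scaleWeight s h :=
        setLIntegral_mono' measurableSet_Ioc fun q hq => dilate (haR q hq)
    _ = ENNReal.ofReal (R ^ s) * ∫⁻ h in Ioc 0 1, ψ h * scaleWeight s h := by simp

lemma setLIntegral_diffEnergy_thickening_ne_top {k : ℕ} (hk : k ≠ 0) {g : ℝ → ℂ}
    (hg : Measurable g) {C δ η s : ℝ} (hC : 0 ≤ C) (hs : 0 ≤ s) (hη : (k + 1) * η ≤ 1)
    (hηδ : (C + k) * η ≤ δ) {U K : Set ℝ} (hU : MeasurableSet U)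
    (hK : ∀ x ∈ K, IsDenseAtScales U (1 / (2 * k * (C + k))) δ x)
    (h_energy : ∫⁻ h in Ioc 0 1, diffEnergy k g U h * scaleWeight s h ≠ ⊤) :
    ∫⁻ w in Ioc 0 η, diffEnergy k g (Metric.thickening (C * w) K) w * scaleWeight s w ≠ ⊤ := by
  obtain ⟨A, hA, thickening_le⟩ := exists_diffEnergy_thickening_le hk
  have hψ := measurable_diffEnergy k hg U
  let average (a : ℝ → ℝ) (w : ℝ) : ℝ≥0∞ := ∫⁻ q in Ioc (0 : ℝ) 1, diffEnergy k g U (a q * w)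
  have measurable_average {a : ℝ → ℝ} (ha : Measurable a) :
      Measurable fun w => average a w * scaleWeight s w :=
    (Measurable.lintegral_prod_right' (f := fun p : ℝ × ℝ => diffEnergy k g U (a p.2 * p.1))
      (by fun_prop)).mul (by fun_prop)
  have average_ne_top {a : ℝ → ℝ} (ha : Measurable a)
      (hak : ∀ q ∈ Ioc (0 : ℝ) 1, a q ∈ Icc (0 : ℝ) (k + 1)) :
      ∫⁻ w in Ioc 0 η, average a w * scaleWeight s w ≠ ⊤ :=
    ne_top_of_le_ne_top (by finiteness) (setLIntegral_average_dilations_le hψ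
      (diffEnergy_zero_step hk g U) hs (by positivity) hη ha hak)
  refine ne_top_of_le_ne_top (b := A * (
      (∑ i ∈ Finset.range (k + 1),
        ∫⁻ w in Ioc 0 η, average (fun q => q + i) w * scaleWeight s w) +
      ∑ j ∈ (Finset.range (k + 1)).erase 1,
        ∫⁻ w in Ioc 0 η, average (fun _ => j) w * scaleWeight s w)) ?_ ?_
  · have le_k {i : ℕ} (hi : i ∈ Finset.range (k + 1)) : (i : ℝ) ≤ k := by
      exact_mod_cast Nat.lt_succ_iff.1 (Finset.mem_range.1 hi)
    refine ENNReal.mul_ne_top hA (ENNReal.add_ne_top.2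
      ⟨ENNReal.sum_ne_top.2 fun i hi => ?_, ENNReal.sum_ne_top.2 fun j hj => ?_⟩)
    · exact average_ne_top (by fun_prop) fun q hq =>
        ⟨add_nonneg hq.1.le i.cast_nonneg, by linarith [hq.2, le_k hi]⟩
    · exact average_ne_top (by fun_prop) fun _ _ =>
        ⟨j.cast_nonneg, by linarith [le_k (Finset.mem_of_mem_erase hj)]⟩
  · rw [← lintegral_finsetSum _ fun i _ => measurable_average (by fun_prop),
      ← lintegral_finsetSum _ fun j _ => measurable_average (by fun_prop),
      ← lintegral_add_right _ (Finset.measurable_fun_sum _ fun j _ =>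
        measurable_average (by fun_prop)), ← lintegral_const_mul' _ _ hA]
    refine setLIntegral_mono' measurableSet_Ioc fun w hw => ?_
    simp only [← Finset.sum_mul, ← add_mul]
    rw [← mul_assoc]
    gcongr
    refine thickening_le g hg C δ w U K hC hw.1 (le_trans ?_ hηδ) hU hK
    gcongr
    exact hw.2

lemma exists_diffEnergy_Icc_le {g : ℝ → ℂ} (hg : Measurable g)
    (hloc : ∀ a b : ℝ, ∫⁻ t in Icc a b, ‖g t‖ₑ ^ 2 ≠ ⊤) (m : ℕ) (R : ℝ) :
    ∃ M : ℝ≥0∞, M ≠ ⊤ ∧ ∀ h : ℝ, |h| ≤ 1 → diffEnergy m g (Icc (-R) R) h ≤ M := by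
  obtain ⟨A, hA, sum_sq_le⟩ := exists_enorm_sum_mul_sq_le (Finset.range (m + 1)) (diffCoeff m)
  refine ⟨A * ∑ _j ∈ Finset.range (m + 1), ∫⁻ t in Icc (-(R + m)) (R + m), ‖g t‖ₑ ^ 2,
    ENNReal.mul_ne_top hA (ENNReal.sum_ne_top.2 fun _ _ => hloc _ _), fun h hh => ?_⟩
  calc diffEnergy m g (Icc (-R) R) h
      ≤ ∫⁻ t in Icc (-R) R, A * ∑ j ∈ Finset.range (m + 1), ‖g (t + j * h)‖ₑ ^ 2 := by
        refine lintegral_mono fun t => ?_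
        rw [tauIter_eq_sum]
        exact sum_sq_le _
    _ = A * ∑ j ∈ Finset.range (m + 1), ∫⁻ t in Icc (-R) R, ‖g (t + j * h)‖ₑ ^ 2 := by
        rw [lintegral_const_mul' _ _ hA, lintegral_finsetSum _ (by fun_prop)]
    _ ≤ _ := by
        refine mul_le_mul_right (Finset.sum_le_sum fun j hj => ?_) _
        refine setLIntegral_comp_add_const_le (fun t => ‖g t‖ₑ ^ 2) measurableSet_Icc
          measurableSet_Icc fun t ht => ?_
        have hjm : (j : ℝ) ≤ m := by exact_mod_cast Nat.lt_succ_iff.1 (Finset.mem_range.1 hj)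
        have shift_le : |j * h| ≤ m := by
          rw [abs_mul, Nat.abs_cast]
          exact (mul_le_of_le_one_right j.cast_nonneg hh).trans hjm
        exact ⟨by linarith [ht.1, neg_abs_le (j * h)], by linarith [ht.2, le_abs_self (j * h)]⟩

lemma setLIntegral_mul_scaleWeight_ne_top_of_le_comp_two_mul {F G : ℝ → ℝ≥0∞} {A M : ℝ≥0∞}
    {θ s η : ℝ} (hθ : 0 ≤ θ) (hθs : θ * 2 ^ s < 1) (hA : A ≠ ⊤) (hM : M ≠ ⊤)
    (hFM : ∀ w ∈ Ioc 0 (2 * η), F w ≤ M)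
    (hFG : ∀ w ∈ Ioc 0 η, F w ≤ ENNReal.ofReal θ * F (2 * w) + A * G w) (hG : Measurable G)
    (hG_fin : ∫⁻ w in Ioc 0 η, G w * scaleWeight s w ≠ ⊤) :
    ∫⁻ w in Ioc 0 η, F w * scaleWeight s w ≠ ⊤ := by
  set ρ := ENNReal.ofReal (θ * 2 ^ s)
  have hρ : 1 - ρ ≠ 0 := (tsub_pos_iff_lt.2 (ENNReal.ofReal_lt_one.2 hθs)).ne'
  set P := ∫⁻ w in Ioc η (2 * η), F w * scaleWeight s w
  set Q := ∫⁻ w in Ioc 0 η, G w * scaleWeight s w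
  rcases le_or_gt η 0 with hη | hη
  · simp [Ioc_eq_empty_of_le hη]
  have hP : P ≠ ⊤ := setLIntegral_mul_scaleWeight_ne_top hM s hη (2 * η)
    fun w hw => hFM w ⟨hη.trans hw.1, hw.2⟩
  refine ne_top_of_le_ne_top (b := (ρ * P + A * Q) / (1 - ρ)) (by finiteness)
    (setLIntegral_Ioc_zero_le_of_forall_pos fun ε hε => ?_)
  set X := ∫⁻ w in Ioc ε η, F w * scaleWeight s w
  have hX : X ≠ ⊤ := setLIntegral_mul_scaleWeight_ne_top hM s hε η
    fun w hw => hFM w ⟨hε.trans hw.1, by linarith [hw.2]⟩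
  have dilate : ∫⁻ w in Ioc ε η, F (2 * w) * scaleWeight s w ≤ ENNReal.ofReal (2 ^ s) * (X + P) :=
    (setLIntegral_comp_const_mul_scaleWeight_le s two_pos measurableSet_Ioc
      (T := Ioc ε η ∪ Ioc η (2 * η)) (measurableSet_Ioc.union measurableSet_Ioc)
      (fun w hw => hε.trans hw.1) (fun w hw => Ioc_subset_Ioc_union_Ioc
        (show 2 * w ∈ Ioc ε (2 * η) from ⟨by linarith [hw.1], by linarith [hw.2]⟩)) F).trans
      (mul_le_mul_right (lintegral_union_le _ _ _) _)
  have absorb : X ≤ ρ * X + (ρ * P + A * Q) := calc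
    X ≤ ∫⁻ w in Ioc ε η, (ENNReal.ofReal θ * (F (2 * w) * scaleWeight s w) +
          A * (G w * scaleWeight s w)) := by
        refine setLIntegral_mono' measurableSet_Ioc fun w hw => ?_
        refine (mul_le_mul_left (hFG w ⟨hε.trans hw.1, hw.2⟩) _).trans_eq (by ring)
    _ = ENNReal.ofReal θ * (∫⁻ w in Ioc ε η, F (2 * w) * scaleWeight s w) +
          A * ∫⁻ w in Ioc ε η, G w * scaleWeight s w := by
        rw [lintegral_add_right _ (by fun_prop), lintegral_const_mul' _ _ (by finiteness),
          lintegral_const_mul' _ _ hA]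
    _ ≤ ENNReal.ofReal θ * (ENNReal.ofReal (2 ^ s) * (X + P)) + A * Q := by
        gcongr
        exact lintegral_mono_set (Ioc_subset_Ioc_left hε.le)
    _ = ρ * X + (ρ * P + A * Q) := by rw [← mul_assoc, ← ENNReal.ofReal_mul hθ]; ring
  rw [ENNReal.le_div_iff_mul_le (Or.inl hρ) (Or.inl (by finiteness)), mul_comm,
    ENNReal.sub_mul fun _ _ => hX, one_mul]
  exact tsub_le_iff_left.2 absorb

lemma exists_enorm_tauIter_sq_le_two_mul {m : ℕ} {θ : ℝ} (hθ : 4⁻¹ ^ m < θ) :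
    ∃ A : ℝ≥0∞, A ≠ ⊤ ∧ ∀ (g : ℝ → ℂ) (w t : ℝ), ‖tauIter w m g t‖ₑ ^ 2 ≤
      ENNReal.ofReal θ * ‖tauIter (2 * w) m g t‖ₑ ^ 2 +
        A * ∑ l ∈ Finset.range m, ‖tauIter w (m + 1) g (t + l * w)‖ₑ ^ 2 := by
  have hκ : 0 < 4 ^ m * θ - 1 := by
    rw [inv_pow, inv_lt_iff_one_lt_mul₀ (by positivity)] at hθ
    linarith
  set κ := 4 ^ m * θ - 1 with κ_def
  have hθ0 : 0 ≤ θ := (by positivity : (0 : ℝ) ≤ 4⁻¹ ^ m).trans hθ.le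
  refine ⟨ENNReal.ofReal ((1 + κ⁻¹) * m), ENNReal.ofReal_ne_top, fun g w t => ?_⟩
  simp only [enorm_sq_eq_ofReal]
  rw [← ENNReal.ofReal_mul hθ0, ← ENNReal.ofReal_sum_of_nonneg fun _ _ => by positivity,
    ← ENNReal.ofReal_mul (by positivity), ← ENNReal.ofReal_add (by positivity) (by positivity)]
  refine ENNReal.ofReal_le_ofReal ?_
  set d := tauIter w m g t
  set e := tauIter (2 * w) m g t
  set S := ∑ l ∈ Finset.range m, ‖tauIter w (m + 1) g (t + l * w)‖
  have marchaud : ‖d‖ ≤ 2⁻¹ ^ m * ‖e‖ + S := by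
    have h : 2 ^ m * ‖d‖ ≤ ‖e‖ + 2 ^ m * S := calc
      2 ^ m * ‖d‖ = ‖e - (e - 2 ^ m * d)‖ := by simp
      _ ≤ ‖e‖ + ‖e - 2 ^ m * d‖ := norm_sub_le _ _
      _ ≤ ‖e‖ + 2 ^ m * S := by gcongr; exact norm_tauIter_two_mul_sub_le w m g t
    rw [inv_pow]
    refine le_of_mul_le_mul_left (h.trans_eq ?_) (by positivity : (0 : ℝ) < 2 ^ m)
    field_simp
  have young (a b : ℝ) : (a + b) ^ 2 ≤ (1 + κ) * a ^ 2 + (1 + κ⁻¹) * b ^ 2 := by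
    have : (1 + κ) * a ^ 2 + (1 + κ⁻¹) * b ^ 2 - (a + b) ^ 2 = κ⁻¹ * (κ * a - b) ^ 2 := by
      field_simp; ring
    linarith [show 0 ≤ κ⁻¹ * (κ * a - b) ^ 2 by positivity]
  have cauchy : S ^ 2 ≤ m * ∑ l ∈ Finset.range m, ‖tauIter w (m + 1) g (t + l * w)‖ ^ 2 := by
    simpa only [Finset.card_range] using sq_sum_le_card_mul_sum_sq (s := Finset.range m)
      (f := fun l => ‖tauIter w (m + 1) g (t + l * w)‖)
  have const_eq : (1 + κ) * (2⁻¹ ^ m) ^ 2 = θ := by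
    rw [κ_def, ← pow_mul, mul_comm m 2, pow_mul]
    norm_num
    rw [mul_right_comm, ← mul_pow]
    norm_num
  calc ‖d‖ ^ 2 ≤ (2⁻¹ ^ m * ‖e‖ + S) ^ 2 := by gcongr
    _ ≤ (1 + κ) * (2⁻¹ ^ m * ‖e‖) ^ 2 + (1 + κ⁻¹) * S ^ 2 := young _ _
    _ = θ * ‖e‖ ^ 2 + (1 + κ⁻¹) * S ^ 2 := by rw [mul_pow, ← mul_assoc, const_eq]
    _ ≤ _ := by rw [mul_assoc (1 + κ⁻¹)]; gcongr

lemma exists_diffEnergy_thickening_le_two_mul {m : ℕ} {θ : ℝ} (hθ : 4⁻¹ ^ m < θ) :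
    ∃ A : ℝ≥0∞, A ≠ ⊤ ∧ ∀ g : ℝ → ℂ, Measurable g → ∀ (C w : ℝ) (K : Set ℝ), 0 ≤ C → 0 < w →
      diffEnergy m g (Metric.thickening (C * w) K) w ≤
        ENNReal.ofReal θ * diffEnergy m g (Metric.thickening (C * (2 * w)) K) (2 * w) +
          A * diffEnergy (m + 1) g (Metric.thickening ((C + m) * w) K) w := by
  obtain ⟨A, hA, sq_le⟩ := exists_enorm_tauIter_sq_le_two_mul hθ
  refine ⟨A * m, by finiteness, fun g hg C w K hC hw => ?_⟩
  have measurable_shift (l : ℕ) : Measurable fun t => ‖tauIter w (m + 1) g (t + l * w)‖ₑ ^ 2 :=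
    (measurable_tauIter (m + 1) hg measurable_const (by fun_prop)).enorm.pow_const 2
  have shift_le : ∀ l ∈ Finset.range m,
      ∫⁻ t in Metric.thickening (C * w) K, ‖tauIter w (m + 1) g (t + l * w)‖ₑ ^ 2 ≤
        diffEnergy (m + 1) g (Metric.thickening ((C + m) * w) K) w := fun l hl => by
    refine setLIntegral_comp_add_const_le (fun t => ‖tauIter w (m + 1) g t‖ₑ ^ 2)
      Metric.isOpen_thickening.measurableSet Metric.isOpen_thickening.measurableSet fun t ht => ?_
    obtain ⟨x, hx, htx⟩ := Metric.mem_thickening_iff.1 ht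
    refine Metric.mem_thickening_iff.2 ⟨x, hx, ?_⟩
    calc dist (t + l * w) x ≤ dist (t + l * w) t + dist t x := dist_triangle _ _ _
      _ = l * w + dist t x := by
          rw [Real.dist_eq, add_sub_cancel_left, abs_of_nonneg (by positivity)]
      _ < m * w + C * w := by gcongr; exact Finset.mem_range.1 hl
      _ = (C + m) * w := by ring
  calc diffEnergy m g (Metric.thickening (C * w) K) w
      ≤ ∫⁻ t in Metric.thickening (C * w) K, (ENNReal.ofReal θ * ‖tauIter (2 * w) m g t‖ₑ ^ 2 +
          A * ∑ l ∈ Finset.range m, ‖tauIter w (m + 1) g (t + l * w)‖ₑ ^ 2) :=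
        lintegral_mono fun t => sq_le g w t
    _ = ENNReal.ofReal θ * diffEnergy m g (Metric.thickening (C * w) K) (2 * w) +
          A * ∑ l ∈ Finset.range m,
            ∫⁻ t in Metric.thickening (C * w) K, ‖tauIter w (m + 1) g (t + l * w)‖ₑ ^ 2 := by
        rw [lintegral_add_right _
            ((Finset.measurable_fun_sum _ fun l _ => measurable_shift l).const_mul A),
          lintegral_const_mul' _ _ ENNReal.ofReal_ne_top, lintegral_const_mul' _ _ hA,
          lintegral_finsetSum _ fun l _ => measurable_shift l, diffEnergy]
    _ ≤ ENNReal.ofReal θ * diffEnergy m g (Metric.thickening (C * (2 * w)) K) (2 * w) +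
          A * (m * diffEnergy (m + 1) g (Metric.thickening ((C + m) * w) K) w) := by
        gcongr
        · exact lintegral_mono_set (Metric.thickening_mono (by nlinarith [mul_nonneg hC hw.le]) K)
        · exact (Finset.sum_le_sum shift_le).trans_eq (by simp)
    _ = _ := by rw [mul_assoc]

lemma measurable_diffEnergy_thickening (m : ℕ) {g : ℝ → ℂ} (hg : Measurable g) (C : ℝ)
    (K : Set ℝ) : Measurable fun w => diffEnergy m g (Metric.thickening (C * w) K) w := by
  have measurableSet_graph : MeasurableSet {p : ℝ × ℝ | p.2 ∈ Metric.thickening (C * p.1) K} := by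
    simp only [Metric.mem_thickening_iff_infEDist_lt]
    exact measurableSet_lt (measurable_infEDist.comp measurable_snd)
      ((measurable_fst.const_mul C).ennreal_ofReal)
  simp only [diffEnergy, ← lintegral_indicator Metric.isOpen_thickening.measurableSet]
  exact (((measurable_tauIter m hg measurable_fst measurable_snd).enorm.pow_const 2).indicator
    measurableSet_graph).lintegral_prod_right'

lemma setLIntegral_diffEnergy_thickening_ne_top_of_succ {m : ℕ} {g : ℝ → ℂ} (hg : Measurable g)
    (hloc : ∀ a b : ℝ, ∫⁻ t in Icc a b, ‖g t‖ₑ ^ 2 ≠ ⊤) {C R s η : ℝ} {K : Set ℝ}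
    (hK : K ⊆ Icc (-R) R) (hC : 0 ≤ C) (hs : s < 2 * m) (hη : 2 * η ≤ 1)
    (h_succ : ∫⁻ w in Ioc 0 η, diffEnergy (m + 1) g (Metric.thickening ((C + m) * w) K) w *
      scaleWeight s w ≠ ⊤) :
    ∫⁻ w in Ioc 0 η, diffEnergy m g (Metric.thickening (C * w) K) w * scaleWeight s w ≠ ⊤ := by
  have room : (4⁻¹ : ℝ) ^ m < (2 ^ s)⁻¹ := by
    rw [inv_pow, inv_lt_inv₀ (by positivity) (by positivity)]
    calc (2 : ℝ) ^ s < 2 ^ (2 * m : ℝ) := Real.rpow_lt_rpow_of_exponent_lt one_lt_two hs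
      _ = 4 ^ m := by rw [Real.rpow_mul zero_le_two, Real.rpow_natCast]; norm_num
  obtain ⟨θ, hθm, hθs⟩ := exists_between room
  obtain ⟨A, hA, energy_le⟩ := exists_diffEnergy_thickening_le_two_mul hθm
  obtain ⟨M, hM, energy_le_M⟩ := exists_diffEnergy_Icc_le hg hloc m (R + C)
  have hθ0 : 0 ≤ θ := (by positivity : (0 : ℝ) ≤ 4⁻¹ ^ m).trans hθm.le
  refine setLIntegral_mul_scaleWeight_ne_top_of_le_comp_two_mul hθ0
    ((lt_inv_mul_iff₀' (by positivity)).1 (by simpa using hθs)) hA hM (fun w hw => ?_)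
    (fun w hw => energy_le g hg C w K hC hw.1) (measurable_diffEnergy_thickening _ hg _ K) h_succ
  have hw1 : w ≤ 1 := hw.2.trans hη
  refine le_trans (lintegral_mono_set fun t ht => ?_)
    (energy_le_M w ((abs_of_pos hw.1).trans_le hw1))
  obtain ⟨x, hx, htx⟩ := Metric.mem_thickening_iff.1 ht
  have := abs_lt.1 (Real.dist_eq t x ▸ htx)
  have := mul_le_of_le_one_right hC hw1
  exact ⟨by linarith [(hK hx).1], by linarith [(hK hx).2]⟩

lemma setLIntegral_diffEnergy_thickening_ne_top_of_le {m k : ℕ} (hmk : m ≤ k) {g : ℝ → ℂ}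
    (hg : Measurable g) (hloc : ∀ a b : ℝ, ∫⁻ t in Icc a b, ‖g t‖ₑ ^ 2 ≠ ⊤) {R s η : ℝ}
    {K : Set ℝ} (hK : K ⊆ Icc (-R) R) (hs : s < 2 * m) (hη : 2 * η ≤ 1)
    (h_top : ∫⁻ w in Ioc 0 η, diffEnergy k g (Metric.thickening (k * k * w) K) w *
      scaleWeight s w ≠ ⊤) :
    ∫⁻ w in Ioc 0 η, diffEnergy m g (Metric.thickening (m * k * w) K) w *
      scaleWeight s w ≠ ⊤ := by
  induction hmk using Nat.decreasingInduction with
  | self => exact h_top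
  | of_succ m hmk ih =>
    have hmk' : (m : ℝ) ≤ k := by exact_mod_cast hmk.le
    refine setLIntegral_diffEnergy_thickening_ne_top_of_succ hg hloc hK (by positivity) hs hη
      (ne_top_of_le_ne_top (ih (by push_cast; linarith)) ?_)
    refine setLIntegral_mono' measurableSet_Ioc fun w hw => mul_le_mul_left
      (lintegral_mono_set (Metric.thickening_mono (mul_le_mul_of_nonneg_right ?_ hw.1.le) _)) _
    push_cast
    linarith

lemma ae_exists_setLIntegral_tauIter_ne_top {k m : ℕ} (hm : m ≠ 0) (hmk : m ≤ k) {g : ℝ → ℂ}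
    (hg : Measurable g) (hloc : ∀ a b : ℝ, ∫⁻ t in Icc a b, ‖g t‖ₑ ^ 2 ≠ ⊤) {U : Set ℝ}
    (hU : MeasurableSet U) {R s : ℝ} (hUR : U ⊆ Icc (-R) R) (hs : 0 ≤ s) (hsm : s < 2 * m)
    (h_energy : ∫⁻ h in Ioc 0 1, diffEnergy k g U h * scaleWeight s h ≠ ⊤) :
    ∀ᵐ t : ℝ, t ∈ U → ∃ η > 0, ∫⁻ h in Ioc 0 η, ‖tauIter h m g t‖ₑ ^ 2 * scaleWeight s h ≠ ⊤ := by
  have hk : k ≠ 0 := by lia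
  set κ : ℝ := 1 / (2 * k * (k * k + k))
  let K (n : ℕ) : Set ℝ := {t | t ∈ U ∧ IsDenseAtScales U κ (1 / ((n : ℝ) + 1)) t}
  have finite_on_K (n : ℕ) : ∀ᵐ t : ℝ, t ∈ K n → ∃ η > 0,
      ∫⁻ h in Ioc 0 η, ‖tauIter h m g t‖ₑ ^ 2 * scaleWeight s h ≠ ⊤ := by
    obtain ⟨η, hη, hηk, hη2, hηn⟩ : ∃ η : ℝ, 0 < η ∧ η ≤ 1 / (k + 1) ∧ η ≤ 1 / 2 ∧
        η ≤ 1 / ((n : ℝ) + 1) / (k * k + k) :=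
      ⟨_, by positivity, min_le_left _ _, (min_le_right _ _).trans (min_le_left _ _),
        (min_le_right _ _).trans (min_le_right _ _)⟩
    rw [le_div_iff₀' (by positivity)] at hηk hη2 hηn
    have energy_k := setLIntegral_diffEnergy_thickening_ne_top hk hg (by positivity) hs hηk hηn hU
      (K := K n) (fun x hx => hx.2) h_energy
    have energy_m := setLIntegral_diffEnergy_thickening_ne_top_of_le hmk hg hloc
      (fun t ht => hUR ht.1) hsm hη2 energy_k
    have measurable_sq : Measurable fun p : ℝ × ℝ =>
        ‖tauIter p.2 m g p.1‖ₑ ^ 2 * scaleWeight s p.2 :=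
      (measurable_enorm_tauIter_sq m hg).mul (by fun_prop)
    have integral_ne_top : ∫⁻ t in K n, ∫⁻ h in Ioc 0 η,
        ‖tauIter h m g t‖ₑ ^ 2 * scaleWeight s h ≠ ⊤ := by
      rw [← setLIntegral_diffEnergy_mul_scaleWeight m hg]
      refine ne_top_of_le_ne_top energy_m (setLIntegral_mono' measurableSet_Ioc fun w hw => ?_)
      exact mul_le_mul_left (lintegral_mono_set
        (Metric.self_subset_thickening (mul_pos (by positivity) hw.1) _)) _
    filter_upwards [ae_imp_of_ae_restrict
      (ae_lt_top' measurable_sq.lintegral_prod_right'.aemeasurable integral_ne_top)] with t ht htK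
    exact ⟨η, hη, (ht htK).ne⟩
  filter_upwards [ae_all_iff.2 finite_on_K, ae_exists_isDenseAtScales hU (κ := κ) (by positivity)]
    with t finite dense htU
  obtain ⟨n, hn⟩ := dense htU
  exact finite n ⟨htU, hn⟩

/-! ### Lower order differences -/

lemma setLIntegral_diffEnergy_ne_top_of_lt {k m : ℕ} (hm : m ≠ 0) (hmk : m ≤ k) {g : ℝ → ℂ}
    (hg : Measurable g) (hloc : ∀ a b : ℝ, ∫⁻ t in Icc a b, ‖g t‖ₑ ^ 2 ≠ ⊤) {U : Set ℝ}
    (hU : MeasurableSet U) {R β s : ℝ} (hUR : U ⊆ Icc (-R) R) (hs : 0 ≤ s) (hβs : β < s)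
    (hsm : s < 2 * m) (h_energy : ∫⁻ h in Ioc 0 1, diffEnergy k g U h * scaleWeight s h ≠ ⊤) :
    ∫⁻ h in Ioc 0 1, diffEnergy m g U h * scaleWeight β h ≠ ⊤ := by
  obtain ⟨C, hC, pointwise_le⟩ := exists_setLIntegral_tauIter_le hm hmk hβs
  obtain ⟨M, hM, energy_le⟩ := exists_diffEnergy_Icc_le hg hloc m R
  have measurable_m := measurable_enorm_tauIter_sq m hg
  have unweighted_ne_top : ∫⁻ t in U, ∫⁻ h in Ioc (0 : ℝ) 1, ‖tauIter h m g t‖ₑ ^ 2 ≠ ⊤ := by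
    rw [lintegral_lintegral_swap measurable_m.aemeasurable]
    refine ne_top_of_le_ne_top ?_ (setLIntegral_mono' (g := fun _ => M) measurableSet_Ioc
      fun h hh => (lintegral_mono_set hUR).trans
        (energy_le h ((abs_of_pos hh.1).trans_le hh.2)))
    rw [setLIntegral_const, Real.volume_Ioc]
    finiteness
  have ae_unweighted_lt_top := ae_imp_of_ae_restrict
    (ae_lt_top measurable_m.lintegral_prod_right' unweighted_ne_top)
  rw [setLIntegral_diffEnergy_mul_scaleWeight m hg]
  have weighted_ne_top := h_energy
  rw [setLIntegral_diffEnergy_mul_scaleWeight k hg] at weighted_ne_top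
  refine ne_top_of_le_ne_top
    (ENNReal.mul_ne_top hC (ENNReal.add_ne_top.2 ⟨weighted_ne_top, unweighted_ne_top⟩)) ?_
  rw [← lintegral_add_right _ measurable_m.lintegral_prod_right', ← lintegral_const_mul' _ _ hC]
  refine lintegral_mono_ae ((ae_restrict_iff' hU).2 ?_)
  filter_upwards [ae_unweighted_lt_top,
    ae_exists_setLIntegral_tauIter_ne_top hm hmk hg hloc hU hUR hs hsm h_energy]
    with t ht_unweighted ht_apriori htU
  obtain ⟨η, hη, ht_weighted⟩ := ht_apriori htU
  exact pointwise_le g hg t η hη ht_weighted (ht_unweighted htU).ne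

lemma setLIntegral_diffEnergy_scaleWeight_sub_ne_top {i j : ℕ} {g : ℝ → ℂ} (hg : Measurable g)
    (hloc : ∀ a b : ℝ, ∫⁻ t in Icc a b, ‖g t‖ₑ ^ 2 ≠ ⊤) {U : Set ℝ} (hU : MeasurableSet U)
    {R r : ℝ} (hUR : U ⊆ Icc (-R) R) (hr : 0 < r) (hr2 : r < 2 * (i + j : ℕ))
    (h_energy : ∫⁻ h in Ioc 0 1, diffEnergy (i + j) g U h * scaleWeight r h ≠ ⊤) :
    ∫⁻ h in Ioc 0 1, diffEnergy i g U h * scaleWeight (r - 2 * j) h ≠ ⊤ := by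
  push_cast at hr2
  rcases eq_or_ne j 0 with rfl | hj
  · simpa using h_energy
  have hj0 : (0 : ℝ) < j := by exact_mod_cast Nat.pos_of_ne_zero hj
  rcases eq_or_ne i 0 with rfl | hi
  · obtain ⟨M, hM, energy_le⟩ := exists_diffEnergy_Icc_le hg hloc 0 R
    have weight_ne_top := setLIntegral_scaleWeight_ne_top
      (show r - 2 * j < 0 by push_cast at hr2; linarith) 1
    refine ne_top_of_le_ne_top (ENNReal.mul_ne_top hM weight_ne_top) ?_
    rw [← lintegral_const_mul' _ _ hM]
    exact setLIntegral_mono' measurableSet_Ioc fun h hh => mul_le_mul_left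
      ((lintegral_mono_set hUR).trans (energy_le h ((abs_of_pos hh.1).trans_le hh.2))) _
  have hi0 : (0 : ℝ) < i := by exact_mod_cast Nat.pos_of_ne_zero hi
  obtain ⟨s, hs, hs'⟩ : ∃ s, max (r - 2 * j) 0 < s ∧ s < min r (2 * i) :=
    exists_between (max_lt (lt_min (by linarith) (by linarith)) (lt_min hr (by linarith)))
  rw [max_lt_iff] at hs
  rw [lt_min_iff] at hs'
  refine setLIntegral_diffEnergy_ne_top_of_lt hi (Nat.le_add_right i j) hg hloc hU hUR hs.2.le
    hs.1 hs'.2 (ne_top_of_le_ne_top h_energy ?_)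
  exact setLIntegral_mono' measurableSet_Ioc fun h hh =>
    mul_le_mul_right (scaleWeight_le_scaleWeight hs'.1.le hh.1 hh.2) _

/-! ### Products with smooth functions -/

lemma ofReal_pow_sq_mul_scaleWeight (s : ℝ) (j : ℕ) {h : ℝ} (h0 : 0 < h) :
    ENNReal.ofReal (h ^ j) ^ 2 * scaleWeight s h = scaleWeight (s - 2 * j) h := by
  rw [scaleWeight, scaleWeight, ← ENNReal.ofReal_pow (by positivity),
    ← ENNReal.ofReal_mul (by positivity), ← pow_mul, ← Real.rpow_natCast, ← Real.rpow_add h0]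
  push_cast
  ring_nf

lemma exists_enorm_tauIter_mul_sq_le {k : ℕ} {φ : ℝ → ℂ} (hφ : ContDiff ℝ k φ) (R : ℝ) :
    ∃ A : ℝ≥0∞, A ≠ ⊤ ∧ ∀ (g : ℝ → ℂ), ∀ h ∈ Ioc (0 : ℝ) 1, ∀ t ∈ Icc (-R) R,
      ‖tauIter h k (fun x => φ x * g x) t‖ₑ ^ 2 ≤ A * ∑ ij ∈ Finset.HasAntidiagonal.antidiagonal k,
        ENNReal.ofReal (h ^ ij.2) ^ 2 * ‖tauIter h ij.1 g t‖ₑ ^ 2 := by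
  have smooth (j : ℕ) (hj : j ≤ k) : ∃ C : ℝ, ∀ t h : ℝ, |t| ≤ R + k → |h| ≤ 1 →
      ‖tauIter h j φ t‖ ≤ C * |h| ^ j :=
    exists_norm_tauIter_le_pow (hφ.of_le (by exact_mod_cast hj)) (R + k)
  choose! C hC using smooth
  obtain ⟨A, hA, sum_sq_le⟩ := exists_enorm_sum_mul_sq_le
    (Finset.HasAntidiagonal.antidiagonal k) fun ij => (k.choose ij.1 : ℂ)
  let D : ℝ≥0∞ := ∑ ij ∈ Finset.HasAntidiagonal.antidiagonal k, ENNReal.ofReal (C ij.2) ^ 2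
  have hD : D ≠ ⊤ := ENNReal.sum_ne_top.2 fun _ _ => by finiteness
  refine ⟨A * D, by finiteness, fun g h hh t ht => ?_⟩
  rw [tauIter_mul]
  refine (sum_sq_le _).trans ?_
  rw [mul_assoc, Finset.mul_sum (a := D)]
  refine mul_le_mul_right (Finset.sum_le_sum fun ij hij => ?_) _
  obtain ⟨i, j⟩ := ij
  have hijk : i + j = k := Finset.HasAntidiagonal.mem_antidiagonal.1 hij
  have hik : (i : ℝ) ≤ k := by exact_mod_cast hijk ▸ Nat.le_add_right i j
  have shift_nonneg : 0 ≤ i * h := mul_nonneg i.cast_nonneg hh.1.le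
  have shift_le : i * h ≤ k := (mul_le_of_le_one_right i.cast_nonneg hh.2).trans hik
  have factor_le : ‖tauIter h j φ (t + i * h)‖ₑ ≤
      ENNReal.ofReal (C j) * ENNReal.ofReal (h ^ j) := by
    rw [← ENNReal.ofReal_mul' (pow_nonneg hh.1.le j), ← ofReal_norm]
    refine ENNReal.ofReal_le_ofReal ((hC j (by lia) _ h ?_ ?_).trans_eq ?_)
    · exact abs_le.2 ⟨by linarith [ht.1], by linarith [ht.2]⟩
    · exact (abs_of_pos hh.1).trans_le hh.2
    · rw [abs_of_pos hh.1]
  have const_le : ENNReal.ofReal (C j) ^ 2 ≤ D :=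
    Finset.single_le_sum (f := fun ij : ℕ × ℕ => ENNReal.ofReal (C ij.2) ^ 2)
      (fun _ _ => zero_le) hij
  rw [enorm_mul, mul_pow, ← mul_assoc]
  refine mul_le_mul_left ((pow_le_pow_left' factor_le 2).trans ?_) _
  rw [mul_pow]
  exact mul_le_mul_left const_le _

lemma setLIntegral_diffEnergy_mul_ne_top {k : ℕ} {g : ℝ → ℂ} (hg : Measurable g)
    (hloc : ∀ a b : ℝ, ∫⁻ t in Icc a b, ‖g t‖ₑ ^ 2 ≠ ⊤) {U : Set ℝ} (hU : MeasurableSet U)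
    {R r : ℝ} (hUR : U ⊆ Icc (-R) R) (hr : 0 < r) (hr2 : r < 2 * k) {φ : ℝ → ℂ}
    (hφ : ContDiff ℝ k φ)
    (h_energy : ∫⁻ h in Ioc 0 1, diffEnergy k g U h * scaleWeight r h ≠ ⊤) :
    ∫⁻ h in Ioc 0 1, diffEnergy k (fun x => φ x * g x) U h * scaleWeight r h ≠ ⊤ := by
  obtain ⟨A, hA, leibniz⟩ := exists_enorm_tauIter_mul_sq_le hφ R
  have energy_le {h : ℝ} (hh : h ∈ Ioc (0 : ℝ) 1) : diffEnergy k (fun x => φ x * g x) U h ≤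
      A * ∑ ij ∈ Finset.HasAntidiagonal.antidiagonal k,
        ENNReal.ofReal (h ^ ij.2) ^ 2 * diffEnergy ij.1 g U h := by
    refine (setLIntegral_mono' hU fun t ht => leibniz g h hh t (hUR ht)).trans_eq ?_
    rw [lintegral_const_mul' _ _ hA, lintegral_finsetSum _ fun ij _ =>
      ((measurable_tauIter ij.1 hg measurable_const measurable_id).enorm.pow_const 2).const_mul _]
    simp only [lintegral_const_mul' _ _ (ENNReal.pow_ne_top ENNReal.ofReal_ne_top), diffEnergy]
  have weighted_le : ∫⁻ h in Ioc 0 1, diffEnergy k (fun x => φ x * g x) U h * scaleWeight r h ≤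
      ∫⁻ h in Ioc 0 1, A * ∑ ij ∈ Finset.HasAntidiagonal.antidiagonal k,
        diffEnergy ij.1 g U h * scaleWeight (r - 2 * ij.2) h := by
    refine setLIntegral_mono' measurableSet_Ioc fun h hh =>
      (mul_le_mul_left (energy_le hh) _).trans_eq ?_
    rw [mul_assoc, Finset.sum_mul]
    simp only [← ofReal_pow_sq_mul_scaleWeight r _ hh.1, mul_left_comm, mul_assoc]
  refine ne_top_of_le_ne_top ?_ weighted_le
  rw [lintegral_const_mul' _ _ hA, lintegral_finsetSum _ fun ij _ =>
    (measurable_diffEnergy ij.1 hg U).mul (measurable_scaleWeight _)]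
  refine ENNReal.mul_ne_top hA (ENNReal.sum_ne_top.2 fun ij hij => ?_)
  obtain rfl := Finset.HasAntidiagonal.mem_antidiagonal.1 hij
  exact setLIntegral_diffEnergy_scaleWeight_sub_ne_top hg hloc hU hUR hr hr2 h_energy

/-! ### Positive and negative steps -/

lemma setLIntegral_preimage_neg (F : ℝ → ℝ≥0∞) (S : Set ℝ) :
    ∫⁻ x in Neg.neg ⁻¹' S, F (-x) = ∫⁻ x in S, F x :=
  (Measure.measurePreserving_neg volume).setLIntegral_comp_preimage_emb
    (MeasurableEquiv.neg ℝ).measurableEmbedding F S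

lemma diffEnergy_comp_neg (m : ℕ) (g : ℝ → ℂ) (S : Set ℝ) (h : ℝ) :
    diffEnergy m (fun x => g (-x)) (Neg.neg ⁻¹' S) h = diffEnergy m g S (-h) := by
  simp only [diffEnergy, tauIter_comp_neg]
  exact setLIntegral_preimage_neg (fun t => ‖tauIter (-h) m g t‖ₑ ^ 2) S

lemma setLIntegral_Icc_neg_self {b : ℝ} (hb : 0 ≤ b) (F : ℝ → ℝ≥0∞) :
    ∫⁻ h in Icc (-b) b, F h = (∫⁻ h in Ioc 0 b, F h) + ∫⁻ h in Ioc 0 b, F (-h) := by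
  have reflect : ∫⁻ h in Ioc 0 b, F (-h) = ∫⁻ h in Ico (-b) 0, F h := by
    rw [← setLIntegral_preimage_neg F, neg_preimage, Set.neg_Ico, neg_zero, neg_neg]
  rw [reflect, setLIntegral_congr Ioc_ae_eq_Icc.symm, setLIntegral_congr Ico_ae_eq_Ioc, add_comm,
    ← Ioc_union_Ioc_eq_Ioc (neg_nonpos.2 hb) hb,
    lintegral_union measurableSet_Ioc (Ioc_disjoint_Ioc_of_le le_rfl)]

lemma setLIntegral_tauIter_div_lt_top_iff (k : ℕ) (r : ℝ) (g : ℝ → ℂ) (U : Set ℝ) :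
    ∫⁻ h in Icc (-1 : ℝ) 1, ∫⁻ t in U, ‖tauIter h k g t‖ₑ ^ 2 / ENNReal.ofReal |h| ^ (1 + r) < ⊤ ↔
      ∫⁻ h in Ioc 0 1, diffEnergy k g U h * scaleWeight r h ≠ ⊤ ∧
      ∫⁻ h in Ioc 0 1,
        diffEnergy k (fun x => g (-x)) (Neg.neg ⁻¹' U) h * scaleWeight r h ≠ ⊤ := by
  have weight_eq {h : ℝ} (hh : h ∈ Ioc (0 : ℝ) 1) :
      (ENNReal.ofReal |h| ^ (1 + r))⁻¹ = scaleWeight r h := by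
    rw [abs_of_pos hh.1, ENNReal.ofReal_rpow_of_pos hh.1, scaleWeight,
      ← ENNReal.ofReal_inv_of_pos (Real.rpow_pos_of_pos hh.1 _), ← Real.rpow_neg hh.1.le, neg_add']
  have inner_eq (a : ℝ) {h : ℝ} (hh : h ∈ Ioc (0 : ℝ) 1) :
      ∫⁻ t in U, ‖tauIter a k g t‖ₑ ^ 2 / ENNReal.ofReal |h| ^ (1 + r) =
        diffEnergy k g U a * scaleWeight r h := by
    simp only [div_eq_mul_inv, weight_eq hh]
    exact lintegral_mul_const' _ _ (scaleWeight_ne_top r h)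
  have negative_eq {h : ℝ} (hh : h ∈ Ioc (0 : ℝ) 1) :
      ∫⁻ t in U, ‖tauIter (-h) k g t‖ₑ ^ 2 / ENNReal.ofReal |-h| ^ (1 + r) =
        diffEnergy k (fun x => g (-x)) (Neg.neg ⁻¹' U) h * scaleWeight r h := by
    rw [abs_neg, inner_eq (-h) hh, diffEnergy_comp_neg]
  rw [setLIntegral_Icc_neg_self zero_le_one, ENNReal.add_lt_top, lt_top_iff_ne_top,
    lt_top_iff_ne_top, setLIntegral_congr_fun measurableSet_Ioc fun h hh => inner_eq h hh,
    setLIntegral_congr_fun measurableSet_Ioc fun h hh => negative_eq hh]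

theorem stmt6 (k : ℕ) (hk : 0 < k) (r : ℝ) (hr : 0 < r) (hr2 : r < 2 * k)
    (U : Set ℝ) (hU : MeasurableSet U) (hUb : Bornology.IsBounded U)
    (g : ℝ → ℂ) (hg : Measurable g)
    (hloc : ∀ a b : ℝ, (∫⁻ t in Set.Icc a b, (‖g t‖₊ : ℝ≥0∞) ^ 2) < ⊤)
    (φ : ℝ → ℂ) (hφ : ContDiff ℝ k φ)
    (hfin : (∫⁻ h in Set.Icc (-1 : ℝ) 1, ∫⁻ t in U,
        (‖tauIter h k g t‖₊ : ℝ≥0∞) ^ 2 / ENNReal.ofReal |h| ^ (1 + r)) < ⊤) :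
    (∫⁻ h in Set.Icc (-1 : ℝ) 1, ∫⁻ t in U,
        (‖tauIter h k (fun s => φ s * g s) t‖₊ : ℝ≥0∞) ^ 2 /
          ENNReal.ofReal |h| ^ (1 + r)) < ⊤ := by
  obtain ⟨R, hUR⟩ := hUb.subset_closedBall 0
  rw [Real.closedBall_eq_Icc, zero_sub, zero_add] at hUR
  have hUR_neg : Neg.neg ⁻¹' U ⊆ Icc (-R) R := fun x hx => by
    simpa only [neg_neg] using neg_mem_Icc_iff.1 (hUR hx)
  have hloc_neg (a b : ℝ) : ∫⁻ t in Icc a b, ‖g (-t)‖ₑ ^ 2 ≠ ⊤ := by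
    have := (hloc (-b) (-a)).ne
    rwa [← setLIntegral_preimage_neg, neg_preimage, Set.neg_Icc, neg_neg, neg_neg] at this
  obtain ⟨positive_steps, negative_steps⟩ := (setLIntegral_tauIter_div_lt_top_iff k r g U).1 hfin
  exact (setLIntegral_tauIter_div_lt_top_iff k r _ U).2
    ⟨setLIntegral_diffEnergy_mul_ne_top hg (fun a b => (hloc a b).ne) hU hUR hr hr2 hφ
        positive_steps,
      setLIntegral_diffEnergy_mul_ne_top (hg.comp measurable_neg) hloc_neg (measurable_neg hU)
        hUR_neg hr hr2 (hφ.comp contDiff_neg) negative_steps⟩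
end

section
/- Let Q = [0,1]², q > 2, and let w ∈ L¹(Q) with w > 0 a.e. If 1/w ∈ L^{q/(q−2)}(Q), then the exponential system E = {e^{2πi(mx+ny)} : (m,n) ∈ ℤ²} is an exact (C_q)-system in the weighted space L²_w(Q). -/
open MeasureTheory Real Finset
open scoped ENNReal

/-- The unit square `Q = [0,1]²` in `ℝ²`. -/
def unitSq : Set (ℝ × ℝ) := Set.Icc (0, 0) (1, 1)

/-- The exponential `e^{2πi(mx+ny)}`. -/
noncomputable def expMN (m n : ℤ) : ℝ × ℝ → ℂ :=
  fun p => Complex.exp (2 * Real.pi * Complex.I * (m * p.1 + n * p.2))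

/-- The squared norm `∬_Q |g|² w` in the weighted space `L²_w(Q)`. -/
noncomputable def wIntSq (w : ℝ × ℝ → ℝ) (g : ℝ × ℝ → ℂ) : ℝ≥0∞ :=
  ∫⁻ p in unitSq, (‖g p‖₊ : ℝ≥0∞) ^ 2 * ENNReal.ofReal (w p)

/-- Membership in the weighted space `L²_w(Q)`. -/
def MemL2w (w : ℝ × ℝ → ℝ) (g : ℝ × ℝ → ℂ) : Prop :=
  AEStronglyMeasurable g (volume.restrict unitSq) ∧ wIntSq w g < ⊤

/-!
F. Riesz's form of the Hausdorff–Young inequality for a bounded orthonormal system `φ` bounds the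
`ℓ^q` norm of the coefficients of `f` by `‖f‖_p`, `1/p + 1/q = 1`. To see it, split `f` for each
`t > 0` at the level set of a power of `‖f‖`, chosen so that the part outside it contributes at most
`t/2` to every coefficient. The coefficients larger than `t` are then controlled by the part inside,
through Bessel's inequality, and a layer-cake integration over `t` sums these bounds.

Since `1/w ∈ L^{q/(q-2)}`, Hölder's inequality turns this into
`‖a‖_q ≤ C ‖∑ a_{m,n} e^{2πi(mx+ny)}‖_{L²_w}`. With the density of trigonometric polynomials in
`L²_w` it gives the `(C_q)`-property. Applied to an exponential minus a combination of the others,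
a polynomial with one coefficient equal to `1`, it bounds that distance below by `1/C`.
-/

section HausdorffYoung

open scoped NNReal InnerProductSpace

theorem lintegral_rpow_le_of_meas_lt_le {α β : Type*} [MeasurableSpace α] [MeasurableSpace β]
    {μ : Measure α} {ν : Measure β} {f : α → ℝ} {g : β → ℝ} (hf₀ : 0 ≤ᵐ[μ] f)
    (hf : AEMeasurable f μ) (hg₀ : 0 ≤ᵐ[ν] g) (hg : AEMeasurable g ν) {C : ℝ≥0}
    (h : ∀ t > 0, μ {x | t < f x} ≤ C * ν {y | t < g y}) {r : ℝ} (hr : 0 < r) :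
    ∫⁻ x, ENNReal.ofReal (f x ^ r) ∂μ ≤ C * ∫⁻ y, ENNReal.ofReal (g y ^ r) ∂ν := by
  rw [lintegral_rpow_eq_lintegral_meas_lt_mul μ hf₀ hf hr,
    lintegral_rpow_eq_lintegral_meas_lt_mul ν hg₀ hg hr, mul_left_comm,
    ← lintegral_const_mul' _ _ ENNReal.coe_ne_top]
  refine mul_right_mono (setLIntegral_mono' measurableSet_Ioi fun t ht => ?_)
  rw [← mul_assoc]
  exact mul_left_mono (h t ht)

variable {α ι 𝕜 E : Type*} [MeasurableSpace α] {μ : Measure α} [RCLike 𝕜]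
  [NormedAddCommGroup E]

theorem enorm_sq_eq_lintegral_enorm_sq (f : Lp E 2 μ) : ‖f‖ₑ ^ 2 = ∫⁻ x, ‖f x‖ₑ ^ 2 ∂μ := by
  rw [Lp.enorm_def, eLpNorm_eq_lintegral_rpow_enorm_toReal (by simp) (by simp),
    ← ENNReal.rpow_natCast, ← ENNReal.rpow_mul]
  simp

theorem enorm_toLp_indicator_sq {f : α → E} {A : Set α} (hA : MeasurableSet A)
    (hf : MemLp (A.indicator f) 2 μ) : ‖hf.toLp‖ₑ ^ 2 = ∫⁻ x in A, ‖f x‖ₑ ^ 2 ∂μ := by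
  rw [enorm_sq_eq_lintegral_enorm_sq, ← lintegral_indicator hA]
  refine lintegral_congr_ae ?_
  filter_upwards [hf.coeFn_toLp] with x hx
  by_cases hxA : x ∈ A <;> simp [hx, hxA]

variable [InnerProductSpace 𝕜 E] {φ : ι → Lp E 2 μ} {M : ℝ≥0}

theorem sum_enorm_inner_sq_le (hφ : Orthonormal 𝕜 φ) (f : Lp E 2 μ) (s : Finset ι) :
    ∑ k ∈ s, ‖⟪φ k, f⟫_𝕜‖ₑ ^ 2 ≤ ‖f‖ₑ ^ 2 := by
  simp only [← ofReal_norm, ← ENNReal.ofReal_pow (norm_nonneg _)]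
  rw [← ENNReal.ofReal_sum_of_nonneg fun _ _ => by positivity]
  exact ENNReal.ofReal_le_ofReal (hφ.sum_inner_products_le f)

theorem enorm_inner_le_mul_lintegral {ψ : Lp E 2 μ} (hM : ∀ᵐ x ∂μ, ‖ψ x‖ₑ ≤ M) (f : Lp E 2 μ) :
    ‖⟪ψ, f⟫_𝕜‖ₑ ≤ M * ∫⁻ x, ‖f x‖ₑ ∂μ := by
  rw [L2.inner_def, ← lintegral_const_mul' _ _ ENNReal.coe_ne_top]
  refine (enorm_integral_le_lintegral_enorm _).trans (lintegral_mono_ae ?_)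
  filter_upwards [hM] with x hx
  calc ‖⟪ψ x, f x⟫_𝕜‖ₑ ≤ ‖ψ x‖ₑ * ‖f x‖ₑ := by
        simpa only [enorm, ← ENNReal.coe_mul, ENNReal.coe_le_coe] using nnnorm_inner_le_nnnorm _ _
    _ ≤ M * ‖f x‖ₑ := by gcongr

theorem enorm_inner_toLp_indicator_le {ψ : Lp E 2 μ} (hM : ∀ᵐ x ∂μ, ‖ψ x‖ₑ ≤ M) {f : α → E}
    {A : Set α} (hA : MeasurableSet A) (hf : MemLp (A.indicator f) 2 μ) :
    ‖⟪ψ, hf.toLp⟫_𝕜‖ₑ ≤ M * ∫⁻ x in A, ‖f x‖ₑ ∂μ := by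
  refine (enorm_inner_le_mul_lintegral hM _).trans_eq ?_
  rw [← lintegral_indicator hA, lintegral_congr_ae]
  filter_upwards [hf.coeFn_toLp] with x hx
  rw [hx, enorm_indicator_eq_indicator_enorm]

theorem sum_enorm_inner_sq_le_setLIntegral (hφ : Orthonormal 𝕜 φ)
    (hM : ∀ k, ∀ᵐ x ∂μ, ‖φ k x‖ₑ ≤ M) (f : Lp E 2 μ) {A : Set α} (hA : MeasurableSet A)
    (s : Finset ι) (hs : ∀ k ∈ s, 2 * (M * ∫⁻ x in Aᶜ, ‖f x‖ₑ ∂μ) ≤ ‖⟪φ k, f⟫_𝕜‖ₑ) :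
    ∑ k ∈ s, ‖⟪φ k, f⟫_𝕜‖ₑ ^ 2 ≤ 4 * ∫⁻ x in A, ‖f x‖ₑ ^ 2 ∂μ := by
  have hA₂ := (Lp.memLp f).indicator hA
  have hAc₂ := (Lp.memLp f).indicator hA.compl
  have hsplit : f = hA₂.toLp + hAc₂.toLp := by
    rw [← MemLp.toLp_add]
    simp [Set.indicator_self_add_compl]
  have hdouble (k : ι) (hk : k ∈ s) : ‖⟪φ k, f⟫_𝕜‖ₑ ≤ 2 * ‖⟪φ k, hA₂.toLp⟫_𝕜‖ₑ := by
    refine ENNReal.le_of_add_le_add_right (enorm_ne_top (x := ⟪φ k, f⟫_𝕜)) ?_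
    calc ‖⟪φ k, f⟫_𝕜‖ₑ + ‖⟪φ k, f⟫_𝕜‖ₑ
        ≤ 2 * (‖⟪φ k, hA₂.toLp⟫_𝕜‖ₑ + ‖⟪φ k, hAc₂.toLp⟫_𝕜‖ₑ) := by
          rw [← two_mul]
          nth_rw 1 [hsplit]
          rw [inner_add_right]
          gcongr
          exact enorm_add_le _ _
      _ ≤ 2 * ‖⟪φ k, hA₂.toLp⟫_𝕜‖ₑ + ‖⟪φ k, f⟫_𝕜‖ₑ := by
          rw [mul_add]
          gcongr
          refine le_trans ?_ (hs k hk)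
          gcongr
          exact enorm_inner_toLp_indicator_le (hM k) hA.compl _
  calc ∑ k ∈ s, ‖⟪φ k, f⟫_𝕜‖ₑ ^ 2
      ≤ ∑ k ∈ s, (2 * ‖⟪φ k, hA₂.toLp⟫_𝕜‖ₑ) ^ 2 := by gcongr with k hk; exact hdouble k hk
    _ = 4 * ∑ k ∈ s, ‖⟪φ k, hA₂.toLp⟫_𝕜‖ₑ ^ 2 := by simp only [mul_pow, ← mul_sum]; norm_num
    _ ≤ 4 * ∫⁻ x in A, ‖f x‖ₑ ^ 2 ∂μ := by
        rw [← enorm_toLp_indicator_sq hA hA₂]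
        gcongr
        exact sum_enorm_inner_sq_le hφ _ s

theorem ofReal_mul_setLIntegral_enorm_le {f : α → E} (hf : AEStronglyMeasurable f μ)
    (p K t : ℝ) :
    ENNReal.ofReal K * ∫⁻ x in {x | t < K * ‖f x‖ ^ (1 - p)}ᶜ, ‖f x‖ₑ ∂μ ≤
      ENNReal.ofReal t * ∫⁻ x, ‖f x‖ₑ ^ p ∂μ := by
  have hpointwise (x : α) (hx : x ∈ {x | t < K * ‖f x‖ ^ (1 - p)}ᶜ) :
      ENNReal.ofReal K * ‖f x‖ₑ ≤ ENNReal.ofReal t * ‖f x‖ₑ ^ p := by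
    obtain hfx | hfx := (norm_nonneg (f x)).eq_or_lt
    · simp [norm_eq_zero.1 hfx.symm]
    · have hx : K * ‖f x‖ ^ (1 - p) ≤ t := not_lt.1 hx
      rw [← ofReal_norm, ENNReal.ofReal_rpow_of_pos hfx, ← ENNReal.ofReal_mul' hfx.le,
        ← ENNReal.ofReal_mul' (by positivity)]
      refine ENNReal.ofReal_le_ofReal ?_
      calc K * ‖f x‖ = K * ‖f x‖ ^ (1 - p) * ‖f x‖ ^ p := by
            rw [mul_assoc, ← rpow_add hfx, sub_add_cancel, rpow_one]
        _ ≤ t * ‖f x‖ ^ p := by gcongr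
  rw [← lintegral_const_mul' _ _ ENNReal.ofReal_ne_top,
    ← lintegral_const_mul' _ _ ENNReal.ofReal_ne_top]
  refine (setLIntegral_mono_ae (by fun_prop) (.of_forall hpointwise)).trans ?_
  exact setLIntegral_le_lintegral _ _

theorem sum_enorm_rpow_le_of_sum_lt_le {c : ι → E} {s : Finset ι} {F : α → ℝ≥0∞}
    (hF : AEMeasurable F μ) {g : α → ℝ} (hg₀ : ∀ x, 0 ≤ g x) (hg : Measurable g) {C : ℝ≥0} {q : ℝ}
    (hq : 2 < q)
    (h : ∀ t > 0, ∑ k ∈ s with t < ‖c k‖, ‖c k‖ₑ ^ 2 ≤ C * ∫⁻ x in {x | t < g x}, F x ∂μ) :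
    ∑ k ∈ s, ‖c k‖ₑ ^ q ≤ C * ∫⁻ x, ENNReal.ofReal (g x ^ (q - 2)) * F x ∂μ := by
  -- Both sides are integrals of `(q - 2)`-th powers, for `∑ ‖c k‖² δ_k` and for `F μ`.
  let : MeasurableSpace ι := ⊤
  have hset (t : ℝ) : (∑ k ∈ s, ‖c k‖ₑ ^ 2 • Measure.dirac k) {k | t < ‖c k‖} =
      ∑ k ∈ s with t < ‖c k‖, ‖c k‖ₑ ^ 2 := by
    simp [sum_filter, Set.indicator_apply]
  have hsum : ∫⁻ k, ENNReal.ofReal (‖c k‖ ^ (q - 2)) ∂(∑ k ∈ s, ‖c k‖ₑ ^ 2 • Measure.dirac k) =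
      ∑ k ∈ s, ‖c k‖ₑ ^ q := by
    simp only [lintegral_finsetSum_measure, lintegral_smul_measure, lintegral_dirac]
    refine sum_congr rfl fun k _ => ?_
    rw [← ENNReal.ofReal_rpow_of_nonneg (norm_nonneg _) (by linarith), ofReal_norm, smul_eq_mul,
      ← ENNReal.rpow_two, ← ENNReal.rpow_add_of_nonneg _ _ (by norm_num) (by linarith),
      add_sub_cancel]
  have hdensity : ∫⁻ x, ENNReal.ofReal (g x ^ (q - 2)) * F x ∂μ =
      ∫⁻ x, ENNReal.ofReal (g x ^ (q - 2)) ∂μ.withDensity F := by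
    rw [lintegral_withDensity_eq_lintegral_mul₀ hF (by fun_prop)]
    simp only [Pi.mul_apply, mul_comm]
  rw [← hsum, hdensity]
  refine lintegral_rpow_le_of_meas_lt_le (.of_forall fun _ => norm_nonneg _)
    measurable_from_top.aemeasurable (.of_forall hg₀) hg.aemeasurable (fun t ht => ?_) (by linarith)
  rw [hset, withDensity_apply _ (measurableSet_lt measurable_const hg)]
  exact h t ht

theorem ofReal_rpow_mul_enorm_sq {p q : ℝ} (hpq : p.HolderConjugate q) (hq : 2 < q) {K : ℝ}
    (hK : 0 ≤ K) (v : E) :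
    ENNReal.ofReal ((K * ‖v‖ ^ (1 - p)) ^ (q - 2)) * ‖v‖ₑ ^ 2 =
      ENNReal.ofReal K ^ (q - 2) * ‖v‖ₑ ^ p := by
  obtain hv | hv := (norm_nonneg v).eq_or_lt
  · simp [norm_eq_zero.1 hv.symm, hpq.pos]
  have hexp : (1 - p) * (q - 2) + (2 : ℕ) = p := by
    have := hpq.mul_eq_add
    push_cast
    linarith
  rw [← ofReal_norm, ENNReal.ofReal_rpow_of_pos hv, ENNReal.ofReal_rpow_of_nonneg hK (by linarith),
    ← ENNReal.ofReal_pow hv.le, ← ENNReal.ofReal_mul (by positivity),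
    ← ENNReal.ofReal_mul (by positivity), mul_rpow hK (by positivity), ← rpow_mul hv.le, mul_assoc,
    ← rpow_natCast ‖v‖, ← rpow_add hv, hexp]

theorem sum_enorm_inner_sq_le_setLIntegral_lt (hφ : Orthonormal 𝕜 φ)
    (hM : ∀ k, ∀ᵐ x ∂μ, ‖φ k x‖ₑ ≤ M) (f : Lp E 2 μ) {p K : ℝ}
    (hK : ENNReal.ofReal K = 2 * M * ∫⁻ x, ‖f x‖ₑ ^ p ∂μ) (hN₀ : ∫⁻ x, ‖f x‖ₑ ^ p ∂μ ≠ 0)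
    (hN : ∫⁻ x, ‖f x‖ₑ ^ p ∂μ ≠ ∞) (s : Finset ι) (t : ℝ) :
    ∑ k ∈ s with t < ‖⟪φ k, f⟫_𝕜‖, ‖⟪φ k, f⟫_𝕜‖ₑ ^ 2 ≤
      4 * ∫⁻ x in {x | t < K * ‖f x‖ ^ (1 - p)}, ‖f x‖ₑ ^ 2 ∂μ := by
  have hmeas : Measurable fun x => K * ‖f x‖ ^ (1 - p) :=
    ((Lp.stronglyMeasurable f).norm.measurable.pow_const _).const_mul K
  refine sum_enorm_inner_sq_le_setLIntegral hφ hM f (measurableSet_lt measurable_const hmeas) _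
    fun k hk => ?_
  calc 2 * (M * ∫⁻ x in {x | t < K * ‖f x‖ ^ (1 - p)}ᶜ, ‖f x‖ₑ ∂μ)
      ≤ ENNReal.ofReal t := by
        refine (ENNReal.mul_le_mul_iff_left hN₀ hN).1 ?_
        refine le_trans (le_of_eq ?_)
          (ofReal_mul_setLIntegral_enorm_le (Lp.aestronglyMeasurable f) p K t)
        rw [hK]
        ring
    _ ≤ ‖⟪φ k, f⟫_𝕜‖ₑ := by
        rw [← ofReal_norm]
        exact ENNReal.ofReal_le_ofReal (mem_filter.1 hk).2.le

theorem sum_enorm_inner_rpow_le (hφ : Orthonormal 𝕜 φ) (hM : ∀ k, ∀ᵐ x ∂μ, ‖φ k x‖ₑ ≤ M)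
    {p q : ℝ} (hpq : p.HolderConjugate q) (hq : 2 < q) (f : Lp E 2 μ)
    (hf : ∫⁻ x, ‖f x‖ₑ ^ p ∂μ ≠ ∞) (s : Finset ι) :
    ∑ k ∈ s, ‖⟪φ k, f⟫_𝕜‖ₑ ^ q ≤
      2 ^ q * M ^ (q - 2) * (∫⁻ x, ‖f x‖ₑ ^ p ∂μ) ^ (q - 1) := by
  have hq₂ : 0 ≤ q - 2 := by linarith
  have hfm : Measurable fun x => ‖f x‖ := (Lp.stronglyMeasurable f).norm.measurable
  obtain hN₀ | hN₀ := eq_or_ne (∫⁻ x, ‖f x‖ₑ ^ p ∂μ) 0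
  · have hf₀ : f = 0 := by
      rw [lintegral_eq_zero_iff' (by fun_prop)] at hN₀
      rw [Lp.eq_zero_iff_ae_eq_zero]
      filter_upwards [hN₀] with x hx
      simpa [hpq.pos] using hx
    simp [hf₀, hpq.symm.pos]
  set N := ∫⁻ x, ‖f x‖ₑ ^ p ∂μ
  obtain ⟨K, hK₀, hK⟩ : ∃ K : ℝ, 0 ≤ K ∧ ENNReal.ofReal K = 2 * M * N :=
    ⟨(2 * M * N).toReal, by positivity, ENNReal.ofReal_toReal (by finiteness)⟩
  calc ∑ k ∈ s, ‖⟪φ k, f⟫_𝕜‖ₑ ^ q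
      ≤ (4 : ℝ≥0) * ∫⁻ x, ENNReal.ofReal ((K * ‖f x‖ ^ (1 - p)) ^ (q - 2)) * ‖f x‖ₑ ^ 2 ∂μ :=
        sum_enorm_rpow_le_of_sum_lt_le (by fun_prop) (fun x => by positivity) (by fun_prop) hq
          fun t _ => sum_enorm_inner_sq_le_setLIntegral_lt hφ hM f hK hN₀ hf s t
    _ = 2 ^ (2 : ℝ) * ((2 * M * N) ^ (q - 2) * N) := by
        simp only [ofReal_rpow_mul_enorm_sq hpq hq hK₀]
        rw [lintegral_const_mul' _ _ (ENNReal.rpow_ne_top_of_nonneg hq₂ ENNReal.ofReal_ne_top), hK]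
        norm_num [N]
    _ = 2 ^ (2 + (q - 2)) * M ^ (q - 2) * N ^ (q - 2 + 1) := by
        rw [ENNReal.rpow_add_of_nonneg _ _ hq₂ zero_le_one,
          ENNReal.rpow_add_of_nonneg _ _ zero_le_two hq₂, ENNReal.mul_rpow_of_nonneg _ _ hq₂,
          ENNReal.mul_rpow_of_nonneg _ _ hq₂, ENNReal.rpow_one]
        ring
    _ = 2 ^ q * M ^ (q - 2) * N ^ (q - 1) := by ring_nf

end HausdorffYoung

theorem lintegral_rpow_rpow_le_weighted {α : Type*} [MeasurableSpace α] {μ : Measure α} {p q : ℝ}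
    (hpq : p.HolderConjugate q) (hq : 2 < q) {g : α → ℝ≥0∞} (hg : AEMeasurable g μ) {w : α → ℝ}
    (hw : AEMeasurable w μ) (hw₀ : ∀ᵐ x ∂μ, 0 < w x) :
    (∫⁻ x, g x ^ p ∂μ) ^ (1 / p) ≤
      (∫⁻ x, g x ^ 2 * ENNReal.ofReal (w x) ∂μ) ^ (1 / 2 : ℝ) *
        (∫⁻ x, ENNReal.ofReal ((w x)⁻¹ ^ (q / (q - 2))) ∂μ) ^ (1 / (2 * (q / (q - 2)))) := by
  have : 0 < q - 2 := by linarith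
  have hexp : 1 / p = 1 / 2 + 1 / (2 * (q / (q - 2))) := by
    rw [one_div, ← hpq.symm.one_sub_inv]
    field_simp
    ring
  have hp : p < 2 := by
    rw [← one_div_lt_one_div two_pos hpq.pos, hexp]
    exact lt_add_of_pos_right _ (by positivity)
  refine le_trans (le_of_eq ?_) ((ENNReal.lintegral_Lp_mul_le_Lq_mul_Lr hpq.pos hp hexp μ
    (f := fun x => g x * ENNReal.ofReal (√(w x))) (g := fun x => ENNReal.ofReal (√(w x)⁻¹))
    (by fun_prop) (by fun_prop)).trans_eq ?_)
  · congr 1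
    refine lintegral_congr_ae ?_
    filter_upwards [hw₀] with x hx
    rw [Pi.mul_apply, mul_assoc, ← ENNReal.ofReal_mul (by positivity), ← sqrt_mul hx.le,
      mul_inv_cancel₀ hx.ne', sqrt_one, ENNReal.ofReal_one, mul_one]
  · congr 2 <;> refine lintegral_congr_ae ?_ <;> filter_upwards [hw₀] with x hx
    · rw [ENNReal.rpow_two, mul_pow, ← ENNReal.ofReal_pow (by positivity), sq_sqrt hx.le]
    · rw [ENNReal.ofReal_rpow_of_nonneg (by positivity) (by positivity), rpow_mul (by positivity),
        rpow_two, sq_sqrt (by positivity)]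

theorem enorm_le_rpow_sum_enorm_rpow {ι E : Type*} [NormedAddCommGroup E] {q : ℝ} (hq : 0 < q)
    (a : ι → E) {s : Finset ι} {k : ι} (hk : k ∈ s) :
    ‖a k‖ₑ ≤ (∑ k ∈ s, ‖a k‖ₑ ^ q) ^ (1 / q) := by
  rw [one_div, ENNReal.le_rpow_inv_iff hq]
  exact single_le_sum (f := fun k => ‖a k‖ₑ ^ q) (fun _ _ => zero_le) hk

theorem rpow_sum_norm_rpow_le {ι E : Type*} [NormedAddCommGroup E] {q : ℝ} (hq : 0 ≤ q)
    (a : ι → E) (s : Finset ι) {N : ℝ≥0∞} (hN : N ≠ ∞)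
    (h : (∑ k ∈ s, ‖a k‖ₑ ^ q) ^ (1 / q) ≤ N) :
    (∑ k ∈ s, ‖a k‖ ^ q) ^ (1 / q) ≤ N.toReal := by
  have := ENNReal.toReal_mono hN h
  rw [← ENNReal.toReal_rpow, ENNReal.toReal_sum (by finiteness)] at this
  simpa [← ENNReal.toReal_rpow] using this

section Density

variable {X ι 𝕜 : Type*} [RCLike 𝕜] [TopologicalSpace X] [CompactSpace X] [NormalSpace X]
  [MeasurableSpace X] [BorelSpace X] {e : ι → C(X, 𝕜)} {p : ℝ≥0∞} [Fact (1 ≤ p)] {ε : ℝ≥0∞}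

theorem exists_eLpNorm_sub_sum_lt (he : (Submodule.span 𝕜 (Set.range e)).topologicalClosure = ⊤)
    {ν : Measure X} [IsFiniteMeasure ν] [ν.WeaklyRegular] (hp : p ≠ ∞) {g : X → 𝕜}
    (hg : MemLp g p ν) (hε : 0 < ε) :
    ∃ (s : Finset ι) (a : ι → 𝕜), eLpNorm (fun x => g x - ∑ k ∈ s, a k * e k x) p ν < ε := by
  have hdense : hg.toLp ∈ ((Submodule.span 𝕜 (Set.range e)).map
      (ContinuousMap.toLp p ν 𝕜).toLinearMap).topologicalClosure := by
    rw [(ContinuousMap.toLp_denseRange 𝕜 ν 𝕜 hp).topologicalClosure_map_submodule he]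
    trivial
  obtain ⟨_, ⟨h, hh, rfl⟩, hdist⟩ := EMetric.mem_closure_iff.1 hdense ε hε
  obtain ⟨c, rfl⟩ := Finsupp.mem_span_range_iff_exists_finsupp.1 hh
  refine ⟨c.support, c, lt_of_eq_of_lt (eLpNorm_congr_ae ?_)
    ((Lp.edist_def _ _).symm.trans_lt hdist)⟩
  filter_upwards [hg.coeFn_toLp, ContinuousMap.coeFn_toLp (𝕜 := 𝕜) (p := p) ν
    (c.sum fun i a => a • e i)] with x hgx hcx
  rw [Pi.sub_apply, hgx]
  refine congrArg (g x - ·) (Eq.trans ?_ hcx.symm)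
  simp [Finsupp.sum]

theorem exists_eLpNorm_sub_sum_comp_lt
    (he : (Submodule.span 𝕜 (Set.range e)).topologicalClosure = ⊤) {α : Type*} [MeasurableSpace α]
    {μ : Measure α} [IsFiniteMeasure μ] {u : α → X} (hu : Measurable u) {v : X → α}
    (hv : Measurable v) (hvu : v ∘ u =ᵐ[μ] id) [(μ.map u).WeaklyRegular] (hp : p ≠ ∞) {g : α → 𝕜}
    (hg : MemLp g p μ) (hε : 0 < ε) :
    ∃ (s : Finset ι) (a : ι → 𝕜), eLpNorm (fun x => g x - ∑ k ∈ s, a k * e k (u x)) p μ < ε := by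
  set G : X → 𝕜 := hg.1.mk g ∘ v
  have hG : StronglyMeasurable G := hg.1.stronglyMeasurable_mk.comp_measurable hv
  have hGu : G ∘ u =ᵐ[μ] g := by
    filter_upwards [hvu, hg.1.ae_eq_mk] with x hx hgx
    rw [hgx]
    exact congrArg (hg.1.mk g) hx
  have hGmem : MemLp G p (μ.map u) := by
    rw [memLp_map_measure_iff hG.aestronglyMeasurable hu.aemeasurable]
    exact hg.ae_eq hGu.symm
  obtain ⟨s, a, hsa⟩ := exists_eLpNorm_sub_sum_lt he hp hGmem hε
  rw [eLpNorm_map_measure (by fun_prop) hu.aemeasurable] at hsa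
  refine ⟨s, a, lt_of_eq_of_lt (eLpNorm_congr_ae ?_) hsa⟩
  filter_upwards [hGu] with x hx
  rw [← hx]
  rfl

end Density

theorem continuous_expMN (m n : ℤ) : Continuous (expMN m n) := by
  unfold expMN
  fun_prop

theorem norm_expMN (m n : ℤ) (p : ℝ × ℝ) : ‖expMN m n p‖ = 1 := by
  have harg : (2 * π * Complex.I * (m * p.1 + n * p.2) : ℂ) =
      ((2 * π * (m * p.1 + n * p.2) : ℝ) : ℂ) * Complex.I := by push_cast; ring
  rw [expMN, harg, Complex.norm_exp_ofReal_mul_I]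

theorem inner_expMN (k l : ℤ × ℤ) (p : ℝ × ℝ) :
    inner ℂ (expMN k.1 k.2 p) (expMN l.1 l.2 p) = expMN (l.1 - k.1) (l.2 - k.2) p := by
  rw [RCLike.inner_apply, expMN, expMN, expMN, ← Complex.exp_conj, ← Complex.exp_add]
  simp only [map_mul, map_add, Complex.conj_I, Complex.conj_ofReal, map_ofNat, map_intCast]
  push_cast
  ring_nf

theorem volume_restrict_unitSq : volume.restrict unitSq =
    (volume.restrict (Set.Icc (0 : ℝ) 1)).prod (volume.restrict (Set.Icc (0 : ℝ) 1)) := by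
  rw [Measure.prod_restrict, ← Measure.volume_eq_prod, Set.Icc_prod_Icc, unitSq]

instance instIsProbabilityMeasureRestrictUnitSq :
    IsProbabilityMeasure (volume.restrict unitSq) := by
  have : IsProbabilityMeasure (volume.restrict (Set.Icc (0 : ℝ) 1)) := ⟨by simp⟩
  rw [volume_restrict_unitSq]
  infer_instance

theorem setIntegral_exp_two_pi_I_mul (m : ℤ) :
    ∫ x in Set.Icc (0 : ℝ) 1, Complex.exp (2 * π * Complex.I * m * x) = if m = 0 then 1 else 0 := by
  rw [integral_Icc_eq_integral_Ioc, ← intervalIntegral.integral_of_le zero_le_one]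
  split_ifs with hm
  · simp [hm]
  · have hperiod : Complex.exp (2 * π * Complex.I * m) = 1 :=
      Complex.exp_eq_one_iff.2 ⟨m, by ring⟩
    rw [integral_exp_mul_complex (by simp [pi_ne_zero, hm])]
    simp [hperiod]

theorem setIntegral_expMN (m n : ℤ) :
    ∫ p in unitSq, expMN m n p = if m = 0 ∧ n = 0 then 1 else 0 := by
  have hprod (p : ℝ × ℝ) : expMN m n p = Complex.exp (2 * π * Complex.I * m * p.1) *
      Complex.exp (2 * π * Complex.I * n * p.2) := by
    rw [expMN, ← Complex.exp_add]
    ring_nf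
  simp only [hprod]
  rw [volume_restrict_unitSq,
    integral_prod_mul (fun x : ℝ => Complex.exp (2 * π * Complex.I * m * x))
      (fun y : ℝ => Complex.exp (2 * π * Complex.I * n * y)), setIntegral_exp_two_pi_I_mul,
    setIntegral_exp_two_pi_I_mul, ite_zero_mul_ite_zero, one_mul]

theorem memLp_expMN (m n : ℤ) (p : ℝ≥0∞) : MemLp (expMN m n) p (volume.restrict unitSq) :=
  .of_bound (continuous_expMN m n).aestronglyMeasurable 1
    (.of_forall fun x => (norm_expMN m n x).le)

theorem orthonormal_expMN :
    Orthonormal ℂ fun k : ℤ × ℤ => (memLp_expMN k.1 k.2 2).toLp (expMN k.1 k.2) := by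
  rw [orthonormal_iff_ite]
  intro k l
  have hinner : (fun p => inner ℂ ((memLp_expMN k.1 k.2 2).toLp _ p)
      ((memLp_expMN l.1 l.2 2).toLp _ p)) =ᵐ[volume.restrict unitSq]
      expMN (l.1 - k.1) (l.2 - k.2) := by
    filter_upwards [(memLp_expMN k.1 k.2 2).coeFn_toLp, (memLp_expMN l.1 l.2 2).coeFn_toLp]
      with p hk hl
    rw [hk, hl, inner_expMN]
  rw [L2.inner_def, integral_congr_ae hinner, setIntegral_expMN]
  simp only [Prod.ext_iff, sub_eq_zero, eq_comm]

/-- The trigonometric polynomial `∑ a_{m,n} e^{2πi(mx+ny)}` with frequencies in `s`. -/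
noncomputable def trigPoly (s : Finset (ℤ × ℤ)) (a : ℤ × ℤ → ℂ) : ℝ × ℝ → ℂ :=
  fun p => ∑ mn ∈ s, a mn * expMN mn.1 mn.2 p

theorem continuous_trigPoly (s : Finset (ℤ × ℤ)) (a : ℤ × ℤ → ℂ) : Continuous (trigPoly s a) :=
  continuous_finsetSum s fun k _ => continuous_const.mul (continuous_expMN k.1 k.2)

theorem expMN_sub_trigPoly {k₀ : ℤ × ℤ} {s : Finset (ℤ × ℤ)} (hk₀ : k₀ ∉ s) (a : ℤ × ℤ → ℂ) :
    expMN k₀.1 k₀.2 - trigPoly s a = trigPoly (insert k₀ s) (Function.update (-a) k₀ 1) := by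
  funext p
  have hcoeff (k : ℤ × ℤ) (hk : k ∈ s) : Function.update (-a) k₀ 1 k = -a k :=
    Function.update_of_ne (ne_of_mem_of_not_mem hk hk₀) _ _
  rw [trigPoly, sum_insert hk₀, Function.update_self, one_mul,
    sum_congr rfl fun k hk => by rw [hcoeff k hk, neg_mul], sum_neg_distrib, ← sub_eq_add_neg]
  rfl

theorem coeFn_sum_smul_toLp_expMN (s : Finset (ℤ × ℤ)) (a : ℤ × ℤ → ℂ) :
    ↑(∑ k ∈ s, a k • (memLp_expMN k.1 k.2 2).toLp (expMN k.1 k.2)) =ᵐ[volume.restrict unitSq]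
      trigPoly s a := by
  have hterm : ∀ᵐ p ∂volume.restrict unitSq, ∀ k : ℤ × ℤ,
      (a k • (memLp_expMN k.1 k.2 2).toLp (expMN k.1 k.2)) p = a k * expMN k.1 k.2 p := by
    refine ae_all_iff.2 fun k => ?_
    filter_upwards [Lp.coeFn_smul (a k) ((memLp_expMN k.1 k.2 2).toLp _),
      (memLp_expMN k.1 k.2 2).coeFn_toLp] with p hsmul hk
    rw [hsmul, Pi.smul_apply, hk, smul_eq_mul]
  filter_upwards [hterm, Lp.coeFn_fun_finsetSum s
    fun k => a k • (memLp_expMN k.1 k.2 2).toLp (expMN k.1 k.2)] with p hp hsum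
  rw [hsum, trigPoly]
  exact sum_congr rfl fun k _ => hp k

theorem sum_enorm_rpow_le_lintegral_trigPoly {p q : ℝ} (hpq : p.HolderConjugate q) (hq : 2 < q)
    (s : Finset (ℤ × ℤ)) (a : ℤ × ℤ → ℂ) :
    (∑ k ∈ s, ‖a k‖ₑ ^ q) ^ (1 / q) ≤
      2 * (∫⁻ x in unitSq, ‖trigPoly s a x‖ₑ ^ p) ^ (1 / p) := by
  obtain htop | htop := eq_or_ne (∫⁻ x in unitSq, ‖trigPoly s a x‖ₑ ^ p) ∞
  · simp [htop, hpq.pos]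
  have hbound (k : ℤ × ℤ) : ∀ᵐ x ∂volume.restrict unitSq,
      ‖(memLp_expMN k.1 k.2 2).toLp (expMN k.1 k.2) x‖ₑ ≤ (1 : NNReal) := by
    filter_upwards [(memLp_expMN k.1 k.2 2).coeFn_toLp] with x hx
    rw [hx, ← ofReal_norm, norm_expMN, ENNReal.ofReal_one, ENNReal.coe_one]
  have hint : ∫⁻ x in unitSq, ‖(∑ k ∈ s, a k • (memLp_expMN k.1 k.2 2).toLp (expMN k.1 k.2) :
      Lp ℂ 2 (volume.restrict unitSq)) x‖ₑ ^ p = ∫⁻ x in unitSq, ‖trigPoly s a x‖ₑ ^ p :=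
    lintegral_congr_ae ((coeFn_sum_smul_toLp_expMN s a).fun_comp fun z => ‖z‖ₑ ^ p)
  have hsum := sum_enorm_inner_rpow_le orthonormal_expMN hbound hpq hq _ (hint ▸ htop) s
  rw [hint, sum_congr rfl fun k hk => by rw [orthonormal_expMN.inner_right_sum a hk]] at hsum
  calc (∑ k ∈ s, ‖a k‖ₑ ^ q) ^ (1 / q)
      ≤ (2 ^ q * (∫⁻ x in unitSq, ‖trigPoly s a x‖ₑ ^ p) ^ (q - 1)) ^ (1 / q) := by
        gcongr
        simpa using hsum
    _ = 2 * (∫⁻ x in unitSq, ‖trigPoly s a x‖ₑ ^ p) ^ (1 / p) := by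
        have hexp : (q - 1) * (1 / q) = 1 / p := by
          rw [one_div p, ← hpq.symm.one_sub_inv, sub_mul, mul_one_div_cancel hpq.symm.ne_zero]
          simp
        rw [ENNReal.mul_rpow_of_nonneg _ _ hpq.symm.one_div_nonneg, ← ENNReal.rpow_mul,
          ← ENNReal.rpow_mul, mul_one_div_cancel hpq.symm.ne_zero, ENNReal.rpow_one, hexp]

/-- The covering map `ℝ² → 𝕋²`. -/
noncomputable def toTorus (p : ℝ × ℝ) : UnitAddTorus (Fin 2) := ![(p.1 : UnitAddCircle), p.2]

/-- The section of `toTorus` with values in `(0,1]²`. -/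
noncomputable def ofTorus (z : UnitAddTorus (Fin 2)) : ℝ × ℝ :=
  (AddCircle.measurableEquivIoc 1 0 (z 0), AddCircle.measurableEquivIoc 1 0 (z 1))

theorem measurable_toTorus : Measurable toTorus := by
  refine measurable_pi_iff.2 (Fin.forall_fin_two.2 ⟨?_, ?_⟩)
  · exact AddCircle.measurable_mk'.comp measurable_fst
  · exact AddCircle.measurable_mk'.comp measurable_snd

theorem measurable_ofTorus : Measurable ofTorus :=
  (measurable_subtype_coe.comp
    ((AddCircle.measurableEquivIoc 1 0).measurable.comp (measurable_pi_apply 0))).prodMk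
    (measurable_subtype_coe.comp
      ((AddCircle.measurableEquivIoc 1 0).measurable.comp (measurable_pi_apply 1)))

theorem ofTorus_toTorus {p : ℝ × ℝ} (h₁ : p.1 ∈ Set.Ioc (0 : ℝ) 1) (h₂ : p.2 ∈ Set.Ioc (0 : ℝ) 1) :
    ofTorus (toTorus p) = p := by
  have hsection (x : ℝ) (hx : x ∈ Set.Ioc (0 : ℝ) 1) :
      (AddCircle.measurableEquivIoc 1 0 (x : UnitAddCircle) : ℝ) = x :=
    AddCircle.equivIoc_coe_of_mem (p := (1 : ℝ)) (a := 0) (by rwa [zero_add])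
  exact Prod.ext (hsection p.1 h₁) (hsection p.2 h₂)

theorem ofTorus_comp_toTorus_ae_eq : ofTorus ∘ toTorus =ᵐ[volume.restrict unitSq] id := by
  have hIoc : ∀ᵐ x ∂volume.restrict (Set.Icc (0 : ℝ) 1), x ∈ Set.Ioc (0 : ℝ) 1 := by
    rw [← restrict_Ioc_eq_restrict_Icc]
    exact ae_restrict_mem measurableSet_Ioc
  rw [volume_restrict_unitSq]
  filter_upwards [Measure.quasiMeasurePreserving_fst.ae hIoc,
    Measure.quasiMeasurePreserving_snd.ae hIoc] with p h₁ h₂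
  exact ofTorus_toTorus h₁ h₂

theorem mFourier_toTorus (m n : ℤ) (p : ℝ × ℝ) :
    UnitAddTorus.mFourier ![m, n] (toTorus p) = expMN m n p := by
  simp only [UnitAddTorus.mFourier, ContinuousMap.coe_mk, Fin.prod_univ_two, toTorus,
    Matrix.cons_val_zero, Matrix.cons_val_one, fourier_coe_apply, ← Complex.exp_add, expMN]
  push_cast
  ring_nf

theorem span_range_mFourier_vecCons_topologicalClosure :
    (Submodule.span ℂ (Set.range fun k : ℤ × ℤ =>
      UnitAddTorus.mFourier ![k.1, k.2])).topologicalClosure = ⊤ := by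
  rw [← UnitAddTorus.span_mFourier_closure_eq_top (d := Fin 2),
    ← (finTwoArrowEquiv ℤ).symm.surjective.range_comp]
  rfl

theorem exists_eLpNorm_sub_trigPoly_lt {μ : Measure (ℝ × ℝ)} [IsFiniteMeasure μ]
    (hμ : μ ≪ volume.restrict unitSq) {p : ℝ≥0∞} [Fact (1 ≤ p)] (hp : p ≠ ∞) {g : ℝ × ℝ → ℂ}
    (hg : MemLp g p μ) {ε : ℝ≥0∞} (hε : 0 < ε) :
    ∃ s a, eLpNorm (g - trigPoly s a) p μ < ε := by
  obtain ⟨s, a, hsa⟩ := exists_eLpNorm_sub_sum_comp_lt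
    span_range_mFourier_vecCons_topologicalClosure measurable_toTorus measurable_ofTorus
    (hμ.ae_le ofTorus_comp_toTorus_ae_eq) hp hg hε
  simp only [mFourier_toTorus] at hsa
  exact ⟨s, a, hsa⟩

theorem exists_eLpNorm_sub_trigPoly_lt_and_le {μ : Measure (ℝ × ℝ)} [IsFiniteMeasure μ]
    (hμ : μ ≪ volume.restrict unitSq) {p : ℝ≥0∞} [hp₁ : Fact (1 ≤ p)] (hp : p ≠ ∞)
    {g : ℝ × ℝ → ℂ} (hg : MemLp g p μ) {ε : ℝ≥0∞} (hε : 0 < ε) :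
    ∃ s a, eLpNorm (g - trigPoly s a) p μ < ε ∧ eLpNorm (trigPoly s a) p μ ≤ 2 * eLpNorm g p μ := by
  obtain hg₀ | hg₀ := eq_zero_or_pos (eLpNorm g p μ)
  · have hzero : trigPoly ∅ 0 = 0 := rfl
    exact ⟨∅, 0, by simpa [hzero, hg₀], by simp [hzero]⟩
  obtain ⟨s, a, hsa⟩ := exists_eLpNorm_sub_trigPoly_lt hμ hp hg (lt_min hε hg₀)
  have hT : AEStronglyMeasurable (trigPoly s a) μ := (continuous_trigPoly s a).aestronglyMeasurable
  refine ⟨s, a, hsa.trans_le (min_le_left _ _), ?_⟩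
  calc eLpNorm (trigPoly s a) p μ = eLpNorm (g - (g - trigPoly s a)) p μ := by rw [sub_sub_cancel]
    _ ≤ eLpNorm g p μ + eLpNorm (g - trigPoly s a) p μ :=
        eLpNorm_sub_le hg.1 (hg.1.sub hT) hp₁.out
    _ ≤ 2 * eLpNorm g p μ := by
        rw [two_mul]
        gcongr
        exact hsa.le.trans (min_le_right _ _)

/-- The measure `w dx dy` on the unit square, so that `L²_w(Q)` is its `L²` space. -/
noncomputable def weightedMeasure (w : ℝ × ℝ → ℝ) : Measure (ℝ × ℝ) :=
  (volume.restrict unitSq).withDensity fun p => ENNReal.ofReal (w p)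

section Weight

variable {w : ℝ × ℝ → ℝ} {q : ℝ}

theorem weightedMeasure_absolutelyContinuous (w : ℝ × ℝ → ℝ) :
    weightedMeasure w ≪ volume.restrict unitSq :=
  withDensity_absolutelyContinuous _ _

theorem isFiniteMeasure_weightedMeasure (hw : IntegrableOn w unitSq) :
    IsFiniteMeasure (weightedMeasure w) :=
  isFiniteMeasure_withDensity_ofReal hw.2

theorem wIntSq_eq_eLpNorm_sq (hw : AEMeasurable w (volume.restrict unitSq)) (g : ℝ × ℝ → ℂ) :
    wIntSq w g = eLpNorm g 2 (weightedMeasure w) ^ 2 := by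
  rw [eLpNorm_eq_lintegral_rpow_enorm_toReal (by simp) (by simp), weightedMeasure,
    lintegral_withDensity_eq_lintegral_mul_non_measurable₀ _ (by fun_prop) (by simp),
    ← ENNReal.rpow_natCast, ← ENNReal.rpow_mul, wIntSq]
  simp [mul_comm, enorm]

theorem memLp_weightedMeasure (hw : AEMeasurable w (volume.restrict unitSq)) {g : ℝ × ℝ → ℂ}
    (hg : MemL2w w g) : MemLp g 2 (weightedMeasure w) := by
  refine ⟨hg.1.mono_ac (weightedMeasure_absolutelyContinuous w), ?_⟩
  have := hg.2
  rw [wIntSq_eq_eLpNorm_sq hw] at this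
  simpa using this

theorem memL2w_expMN (hw : IntegrableOn w unitSq) (m n : ℤ) : MemL2w w (expMN m n) := by
  have := isFiniteMeasure_weightedMeasure hw
  have hmem : MemLp (expMN m n) 2 (weightedMeasure w) :=
    .of_bound (continuous_expMN m n).aestronglyMeasurable 1
      (.of_forall fun p => (norm_expMN m n p).le)
  refine ⟨(continuous_expMN m n).aestronglyMeasurable, ?_⟩
  rw [wIntSq_eq_eLpNorm_sq hw.aemeasurable]
  exact ENNReal.pow_lt_top hmem.2

theorem exists_wIntSq_sub_trigPoly_lt_and_le (hw : IntegrableOn w unitSq) {g : ℝ × ℝ → ℂ}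
    (hg : MemL2w w g) {ε : ℝ≥0∞} (hε : 0 < ε) :
    ∃ s a, wIntSq w (g - trigPoly s a) < ε ∧ wIntSq w (trigPoly s a) ≤ 4 * wIntSq w g := by
  have := isFiniteMeasure_weightedMeasure hw
  obtain ⟨s, a, hlt, hle⟩ := exists_eLpNorm_sub_trigPoly_lt_and_le
    (weightedMeasure_absolutelyContinuous w) ENNReal.ofNat_ne_top
    (memLp_weightedMeasure hw.aemeasurable hg)
    (ENNReal.rpow_pos_of_nonneg hε (by positivity : (0 : ℝ) ≤ 2⁻¹))
  simp only [wIntSq_eq_eLpNorm_sq hw.aemeasurable]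
  refine ⟨s, a, ?_, (pow_le_pow_left' hle 2).trans_eq (by rw [mul_pow]; norm_num)⟩
  rwa [ENNReal.lt_rpow_inv_iff two_pos, ENNReal.rpow_two] at hlt

theorem exists_sum_enorm_rpow_le_wIntSq_trigPoly (hq : 2 < q)
    (hw : AEMeasurable w (volume.restrict unitSq))
    (hw₀ : ∀ᵐ p ∂volume.restrict unitSq, 0 < w p)
    (hinv : ∫⁻ p in unitSq, ENNReal.ofReal ((w p)⁻¹ ^ (q / (q - 2))) < ∞) :
    ∃ C : NNReal, 0 < C ∧ ∀ s a,
      (∑ k ∈ s, ‖a k‖ₑ ^ q) ^ (1 / q) ≤ C * wIntSq w (trigPoly s a) ^ (1 / 2 : ℝ) := by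
  have hpq : q.conjExponent.HolderConjugate q :=
    (Real.HolderConjugate.conjExponent (by linarith)).symm
  set I := ∫⁻ p in unitSq, ENNReal.ofReal ((w p)⁻¹ ^ (q / (q - 2)))
  have : 0 < q - 2 := by linarith
  have hI : I ^ (1 / (2 * (q / (q - 2)))) ≠ ∞ :=
    ENNReal.rpow_ne_top_of_nonneg (by positivity) hinv.ne
  refine ⟨2 * (I ^ (1 / (2 * (q / (q - 2))))).toNNReal + 1, by positivity, fun s a => ?_⟩
  have hmeas : AEMeasurable (fun p => ‖trigPoly s a p‖ₑ) (volume.restrict unitSq) :=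
    (continuous_trigPoly s a).enorm.aemeasurable
  calc (∑ k ∈ s, ‖a k‖ₑ ^ q) ^ (1 / q)
      ≤ 2 * (wIntSq w (trigPoly s a) ^ (1 / 2 : ℝ) * I ^ (1 / (2 * (q / (q - 2))))) :=
        (sum_enorm_rpow_le_lintegral_trigPoly hpq hq s a).trans
          (mul_right_mono (lintegral_rpow_rpow_le_weighted hpq hq hmeas hw hw₀))
    _ = 2 * I ^ (1 / (2 * (q / (q - 2)))) * wIntSq w (trigPoly s a) ^ (1 / 2 : ℝ) := by ring
    _ ≤ _ := by
        push_cast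
        rw [ENNReal.coe_toNNReal hI]
        gcongr
        exact le_self_add

theorem inv_sq_le_wIntSq_expMN_sub_trigPoly (hq : 0 < q) {C : NNReal}
    (hC : ∀ s a,
      (∑ k ∈ s, ‖a k‖ₑ ^ q) ^ (1 / q) ≤ C * wIntSq w (trigPoly s a) ^ (1 / 2 : ℝ))
    {k₀ : ℤ × ℤ} {s : Finset (ℤ × ℤ)} (hk₀ : k₀ ∉ s) (a : ℤ × ℤ → ℂ) :
    (C : ℝ≥0∞)⁻¹ ^ 2 ≤ wIntSq w (expMN k₀.1 k₀.2 - trigPoly s a) := by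
  have hone : 1 ≤ C * wIntSq w (expMN k₀.1 k₀.2 - trigPoly s a) ^ (1 / 2 : ℝ) := by
    rw [expMN_sub_trigPoly hk₀]
    calc (1 : ℝ≥0∞) = ‖Function.update (-a) k₀ 1 k₀‖ₑ := by simp
      _ ≤ _ := (enorm_le_rpow_sum_enorm_rpow hq _ (mem_insert_self k₀ s)).trans (hC _ _)
  rw [← ENNReal.rpow_two, ← ENNReal.le_rpow_inv_iff two_pos, ← one_div, ← one_div]
  exact ENNReal.div_le_of_le_mul' hone

end Weight

theorem stmt10 (q : ℝ) (hq : 2 < q) (w : ℝ × ℝ → ℝ)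
    (hw : IntegrableOn w unitSq) (hwpos : ∀ᵐ p ∂(volume.restrict unitSq), 0 < w p)
    (hinv : (∫⁻ p in unitSq, ENNReal.ofReal ((w p)⁻¹ ^ (q / (q - 2)))) < ⊤) :
    -- the exponential system is a `(C_q)`-system in `L²_w(Q)` ...
    (∃ C > (0 : ℝ), ∀ g : ℝ × ℝ → ℂ, MemL2w w g → ∀ ε : ℝ≥0∞, 0 < ε →
      ∃ (s : Finset (ℤ × ℤ)) (a : ℤ × ℤ → ℂ),
        wIntSq w (fun p => g p - ∑ mn ∈ s, a mn * expMN mn.1 mn.2 p) < ε ∧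
        (∑ mn ∈ s, ‖a mn‖ ^ q) ^ (1 / q) ≤ C * ((wIntSq w g).toReal) ^ (1 / 2 : ℝ)) ∧
    -- ... and it is exact: removing any element destroys completeness
    (∀ mn₀ : ℤ × ℤ, ∃ g : ℝ × ℝ → ℂ, MemL2w w g ∧ ∃ δ : ℝ≥0∞, 0 < δ ∧
      ∀ (s : Finset (ℤ × ℤ)) (a : ℤ × ℤ → ℂ), mn₀ ∉ s →
        δ ≤ wIntSq w (fun p => g p - ∑ mn ∈ s, a mn * expMN mn.1 mn.2 p)) := by
  obtain ⟨C, hC₀, hC⟩ :=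
    exists_sum_enorm_rpow_le_wIntSq_trigPoly hq hw.aemeasurable hwpos hinv
  constructor
  · refine ⟨C * 2, by positivity, fun g hg ε hε => ?_⟩
    obtain ⟨s, a, hlt, hle⟩ := exists_wIntSq_sub_trigPoly_lt_and_le hw hg hε
    have hcoeff : (∑ k ∈ s, ‖a k‖ₑ ^ q) ^ (1 / q) ≤ C * (4 * wIntSq w g) ^ (1 / 2 : ℝ) :=
      (hC s a).trans (by gcongr)
    have hfin : wIntSq w g ≠ ∞ := hg.2.ne
    have hfour : (4 : ℝ) ^ (1 / 2 : ℝ) = 2 := by rw [← sqrt_eq_rpow]; norm_num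
    refine ⟨s, a, hlt, (rpow_sum_norm_rpow_le (by linarith) a s (by finiteness) hcoeff).trans_eq ?_⟩
    rw [ENNReal.toReal_mul, ← ENNReal.toReal_rpow, ENNReal.toReal_mul,
      mul_rpow (by positivity) (by positivity), ENNReal.toReal_ofNat, hfour, ENNReal.coe_toReal,
      mul_assoc]
  · intro mn₀
    refine ⟨expMN mn₀.1 mn₀.2, memL2w_expMN hw _ _, (C : ℝ≥0∞)⁻¹ ^ 2,
      ENNReal.pow_pos (by simp) 2, fun s a hmn₀ => ?_⟩
    exact inv_sq_le_wIntSq_expMN_sub_trigPoly (by linarith) hC hmn₀ a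
end
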